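/- arXiv:1110.0919 — 5 statements merged into one kernel-verified Lean document; each statement's English description precedes it below -/
import Mathlib

section
/- (Arsenin–Kunugui) Let X be a Polish space and P ⊆ X × ℕ^ℕ a Borel set all of whose vertical sections P_x = {y : (x,y) ∈ P} are σ-compact. Then the projection {x : ∃ y, (x,y) ∈ P} is a Borel subset of X. -/
open Set Filter Topology MeasureTheory Function TopologicalSpace

/-- A sequence all of whose initial segments satisfy a one-step extendible local property. -/
theorem exists_forall_of_update {α : Type*} {Q : ℕ → (ℕ → α) → Prop}
    (hlocal : ∀ m s t, (∀ j < m, s j = t j) → Q m s → Q m t)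
    (hzero : ∃ t, Q 0 t) (hstep : ∀ m t, Q m t → ∃ a, Q (m + 1) (update t m a)) :
    ∃ t, ∀ m, Q m t := by
  obtain ⟨t₀, ht₀⟩ := hzero
  have : Nonempty α := ⟨t₀ 0⟩
  choose! a ha using hstep
  let u : ℕ → ℕ → α := fun n ↦ Nat.rec t₀ (fun m t ↦ update t m (a m t)) n
  have hu : ∀ m, Q m (u m) := fun m ↦ by
    induction m with
    | zero => exact ht₀
    | succ m ih => exact ha m _ ih
  have hstable : ∀ m j, j < m → u m j = u (j + 1) j := fun m j hj ↦ by
    induction m, hj using Nat.le_induction with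
    | base => rfl
    | succ m hm ih =>
      rw [← ih]
      exact update_of_ne (by omega) _ _
  exact ⟨fun j ↦ u (j + 1) j, fun m ↦ hlocal m _ _ (hstable m) (hu m)⟩

/-- Continuity at a point of Baire space is witnessed by a cylinder. -/
theorem exists_cylinder_subset_of_mem_nhds {z : ℕ → ℕ} {s : Set (ℕ → ℕ)} (hs : s ∈ 𝓝 z) :
    ∃ n, PiNat.cylinder z n ⊆ s := by
  obtain ⟨_, ⟨y, n, rfl⟩, hz, hsub⟩ :=
    (PiNat.isTopologicalBasis_cylinders (fun _ ↦ ℕ)).mem_nhds_iff.1 hs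
  exact ⟨n, by rwa [PiNat.mem_cylinder_iff_eq.1 hz]⟩

/-- A family of sets has measurable supersets with empty intersection. -/
def SeparableFamily {X ι : Type*} [MeasurableSpace X] (s : ι → Set X) : Prop :=
  ∃ B : ι → Set X, (∀ i, MeasurableSet (B i)) ∧ (∀ i, s i ⊆ B i) ∧ ⋂ i, B i = ∅

theorem SeparableFamily.mono {X ι : Type*} [MeasurableSpace X] {s t : ι → Set X}
    (h : SeparableFamily t) (hst : ∀ i, s i ⊆ t i) : SeparableFamily s :=
  let ⟨B, hB, htB, hE⟩ := h
  ⟨B, hB, fun i ↦ (hst i).trans (htB i), hE⟩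

theorem SeparableFamily.of_iUnion_update {X ι κ : Type*} [MeasurableSpace X] [Countable κ]
    [DecidableEq ι] {s : ι → Set X} (i : ι) {r : κ → Set X} (hs : s i ⊆ ⋃ k, r k)
    (h : ∀ k, SeparableFamily (update s i (r k))) : SeparableFamily s := by
  choose B hB hsub hE using h
  refine ⟨update (fun j ↦ ⋂ k, B k j) i (⋃ k, B k i), fun j ↦ ?_, fun j ↦ ?_, ?_⟩
  · by_cases hj : j = i
    · subst hj
      simpa using MeasurableSet.iUnion fun k ↦ hB k j
    · simpa [hj] using MeasurableSet.iInter fun k ↦ hB k j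
  · by_cases hj : j = i
    · subst hj
      simpa using hs.trans (iUnion_mono fun k ↦ by simpa using hsub k j)
    · simpa [hj] using fun k ↦ by simpa [hj] using hsub k j
  · refine eq_empty_of_forall_notMem fun x hx ↦ ?_
    rw [mem_iInter] at hx
    obtain ⟨k, hk⟩ := mem_iUnion.1 (by simpa using hx i)
    refine eq_empty_iff_forall_notMem.1 (hE k) x (mem_iInter.2 fun j ↦ ?_)
    by_cases hj : j = i
    · exact hj ▸ hk
    · exact mem_iInter.1 (by simpa [hj] using hx j) k

theorem separableFamily_of_disjoint_open {X ι : Type*} [TopologicalSpace X] [MeasurableSpace X]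
    [OpensMeasurableSpace X] {s : ι → Set X} {i j : ι} {U V : Set X} (hU : IsOpen U)
    (hV : IsOpen V) (hUV : Disjoint U V) (hi : s i ⊆ U) (hj : s j ⊆ V) : SeparableFamily s := by
  classical
  by_cases hij : i = j
  · subst hij
    have hs : s i = ∅ := subset_empty_iff.1 (hUV.inter_eq ▸ subset_inter hi hj)
    refine ⟨update (fun _ ↦ univ) i ∅, fun k ↦ ?_, fun k ↦ ?_, ?_⟩
    · by_cases hk : k = i
      · subst hk; simp
      · simp [hk]
    · by_cases hk : k = i
      · subst hk; simp [hs]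
      · simp [hk]
    · exact eq_empty_of_forall_notMem fun x hx ↦ by simpa using mem_iInter.1 hx i
  refine ⟨fun k ↦ if k = i then U else if k = j then V else univ, fun k ↦ ?_, fun k ↦ ?_, ?_⟩
  · dsimp only
    split_ifs
    exacts [hU.measurableSet, hV.measurableSet, .univ]
  · dsimp only
    split_ifs with h h'
    exacts [h ▸ hi, h' ▸ hj, subset_univ _]
  · refine eq_empty_of_forall_notMem fun x hx ↦ ?_
    rw [mem_iInter] at hx
    exact disjoint_left.1 hUV (by simpa using hx i) (by simpa [Ne.symm hij] using hx j)

theorem separableFamily_range {X : Type*} [TopologicalSpace X] [T2Space X] [MeasurableSpace X]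
    [OpensMeasurableSpace X] {f : ℕ → (ℕ → ℕ) → X} (hf : ∀ n, Continuous (f n))
    (hE : ⋂ n, range (f n) = ∅) : SeparableFamily fun n ↦ range (f n) := by
  let K (m : ℕ) (t : ℕ → ℕ) (n : ℕ) : Set X :=
    f n '' {z | ∀ j, Nat.pair n j < m → z j = t (Nat.pair n j)}
  by_contra hsep
  obtain ⟨t, ht⟩ : ∃ t, ∀ m, ¬ SeparableFamily (K m t) := by
    refine exists_forall_of_update (fun m s t hst hs ht ↦ hs (ht.mono fun n ↦ ?_))
      ⟨fun _ ↦ 0, by simpa [K] using hsep⟩ fun m t hm ↦ ?_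
    · exact image_mono fun z hz j hj ↦ (hz j hj).trans (hst _ hj)
    · by_contra! hall
      refine hm (.of_iUnion_update (Nat.unpair m).1 (r := fun a ↦ K (m + 1) (update t m a)
        (Nat.unpair m).1) ?_ fun a ↦ (hall a).mono fun n ↦ ?_)
      · rintro _ ⟨z, hz, rfl⟩
        refine mem_iUnion.2 ⟨z (Nat.unpair m).2, z, fun j hj ↦ ?_, rfl⟩
        by_cases hjm : Nat.pair (Nat.unpair m).1 j = m
        · have : j = (Nat.unpair m).2 := by rw [← hjm]; simp
          rw [hjm, update_self, this]
        · rw [update_of_ne hjm]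
          exact hz j (by omega)
      · by_cases hn : n = (Nat.unpair m).1
        · subst hn; simp
        · rw [update_of_ne hn]
          refine image_mono fun z hz j hj ↦ ?_
          have hjm : Nat.pair n j ≠ m := fun h ↦ hn (by rw [← h]; simp)
          rw [update_of_ne hjm]
          exact hz j (by omega)
  let z (n j : ℕ) : ℕ := t (Nat.pair n j)
  by_cases hz : ∀ n, f n (z n) = f 0 (z 0)
  · exact eq_empty_iff_forall_notMem.1 hE _ (mem_iInter.2 fun n ↦ ⟨z n, hz n⟩)
  · push Not at hz
    obtain ⟨i, hi⟩ := hz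
    obtain ⟨U, V, hU, hV, hzU, hzV, hUV⟩ := t2_separation hi
    obtain ⟨a, ha⟩ := exists_cylinder_subset_of_mem_nhds
      ((hf i).continuousAt.preimage_mem_nhds (hU.mem_nhds hzU))
    obtain ⟨b, hb⟩ := exists_cylinder_subset_of_mem_nhds
      ((hf 0).continuousAt.preimage_mem_nhds (hV.mem_nhds hzV))
    refine ht (max (Nat.pair i a) (Nat.pair 0 b))
      (separableFamily_of_disjoint_open hU hV hUV (i := i) (j := 0) ?_ ?_)
    · rintro _ ⟨y, hy, rfl⟩
      exact ha fun j hj ↦ hy j (lt_max_of_lt_left (Nat.pair_lt_pair_right _ hj))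
    · rintro _ ⟨y, hy, rfl⟩
      exact hb fun j hj ↦ hy j (lt_max_of_lt_right (Nat.pair_lt_pair_right _ hj))

/-- Novikov's generalized separation theorem. -/
theorem separableFamily_of_analyticSet {X ι : Type*} [TopologicalSpace X] [T2Space X]
    [MeasurableSpace X] [OpensMeasurableSpace X] [Countable ι] [Nonempty ι] {s : ι → Set X}
    (hs : ∀ i, AnalyticSet (s i)) (hE : ⋂ i, s i = ∅) : SeparableFamily s := by
  by_cases hne : ∃ i, s i = ∅
  · obtain ⟨i, hi⟩ := hne
    exact separableFamily_of_disjoint_open isOpen_empty isOpen_empty disjoint_bot_left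
      (i := i) (j := i) hi.le hi.le
  push Not at hne
  have hs' (i) : ∃ f : (ℕ → ℕ) → X, Continuous f ∧ range f = s i := by
    have := hs i
    rw [AnalyticSet] at this
    exact this.resolve_left (hne i).ne_empty
  choose f hf hfs using hs'
  obtain ⟨e, he⟩ := exists_surjective_nat ι
  obtain ⟨B, hB, hsub, hBE⟩ := separableFamily_range (fun n ↦ hf (e n)) (by
    simp only [hfs]
    rwa [he.iInter_comp s])
  refine ⟨fun i ↦ ⋂ (n) (_ : e n = i), B n, fun i ↦ .iInter fun n ↦ .iInter fun _ ↦ hB n,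
    fun i ↦ ?_, ?_⟩
  · simp only [subset_iInter_iff]
    rintro n rfl
    exact (hfs (e n)).ge.trans (hsub n)
  · refine eq_empty_of_forall_notMem fun x hx ↦
      eq_empty_iff_forall_notMem.1 hBE x (mem_iInter.2 fun n ↦ ?_)
    simpa using (mem_iInter₂.1 (mem_iInter.1 hx (e n))) n rfl

namespace MeasureTheory.AnalyticSet

theorem union {X : Type*} [TopologicalSpace X] {s t : Set X} (hs : AnalyticSet s)
    (ht : AnalyticSet t) : AnalyticSet (s ∪ t) := by
  rw [union_eq_iUnion]
  exact .iUnion fun b ↦ by cases b <;> assumption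

theorem inter {X : Type*} [TopologicalSpace X] [T2Space X] {s t : Set X} (hs : AnalyticSet s)
    (ht : AnalyticSet t) : AnalyticSet (s ∩ t) := by
  rw [inter_eq_iInter]
  exact .iInter fun b ↦ by cases b <;> assumption

end MeasureTheory.AnalyticSet

section BorelClosedSections

variable {X Y : Type*}

/-- A set with closed vertical sections whose complement is a union of Borel rectangles over
basic open sets of the second factor. -/
def HasBorelClosedSections [MeasurableSpace X] [TopologicalSpace Y] [SecondCountableTopology Y]
    (S : Set (X × Y)) : Prop :=
  ∃ R : countableBasis Y → Set X, (∀ U, MeasurableSet (R U)) ∧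
    S = {q | ∀ U, q.1 ∈ R U → q.2 ∉ U.1}

theorem HasBorelClosedSections.measurableSet [MeasurableSpace X] [TopologicalSpace Y]
    [SecondCountableTopology Y] [MeasurableSpace Y] [OpensMeasurableSpace Y] {S : Set (X × Y)}
    (h : HasBorelClosedSections S) : MeasurableSet S := by
  obtain ⟨R, hR, rfl⟩ := h
  rw [ofPred_forall]
  refine .iInter fun U ↦ ?_
  convert! ((measurable_fst (hR U)).inter
    (measurable_snd (isOpen_of_mem_countableBasis U.2).measurableSet)).compl using 1
  ext q
  simp

theorem HasBorelClosedSections.measurableSet_image_fst [MeasurableSpace X] [TopologicalSpace Y]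
    [SecondCountableTopology Y] [CompactSpace Y] {S : Set (X × Y)}
    (h : HasBorelClosedSections S) : MeasurableSet (Prod.fst '' S) := by
  obtain ⟨R, hR, rfl⟩ := h
  have key : (Prod.fst '' {q : X × Y | ∀ U, q.1 ∈ R U → q.2 ∉ U.1})ᶜ =
      ⋃ (F : Finset (countableBasis Y)) (_ : univ ⊆ ⋃ U ∈ F, (U.1 : Set Y)), ⋂ U ∈ F, R U := by
    ext x
    simp only [mem_compl_iff, mem_iUnion, mem_iInter, exists_prop]
    constructor
    · intro hx
      obtain ⟨F, hF, hfin, hcov⟩ := isCompact_univ.elim_finite_subcover_image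
        (b := {U : countableBasis Y | x ∈ R U}) (c := fun U ↦ U.1)
        (fun U _ ↦ isOpen_of_mem_countableBasis U.2) (by
          intro y _
          by_contra hy
          simp only [mem_iUnion, not_exists] at hy
          exact hx ⟨(x, y), fun U hU ↦ hy U hU, rfl⟩)
      exact ⟨hfin.toFinset, by simpa using hcov, fun U hU ↦ hF (hfin.mem_toFinset.1 hU)⟩
    · rintro ⟨F, hcov, hF⟩ ⟨⟨x', y⟩, hq, rfl⟩
      obtain ⟨U, hU, hy⟩ := mem_iUnion₂.1 (hcov (mem_univ y))
      exact hq U (hF U hU) hy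
  rw [← compl_compl (Prod.fst '' _), key]
  exact (MeasurableSet.iUnion fun F ↦ .iUnion fun _ ↦
    Finset.measurableSet_biInter F fun U _ ↦ hR U).compl

/-- A cover by countably many sets with Borel closed sections, all avoiding `B`. -/
def HasBorelClosedCover [MeasurableSpace X] [TopologicalSpace Y] [SecondCountableTopology Y]
    (B E : Set (X × Y)) : Prop :=
  ∃ S : ℕ → Set (X × Y), (∀ k, HasBorelClosedSections (S k)) ∧ (∀ k, Disjoint (S k) B) ∧
    E ⊆ ⋃ k, S k

namespace HasBorelClosedCover

variable [MeasurableSpace X] [TopologicalSpace Y] [SecondCountableTopology Y] {B : Set (X × Y)}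

theorem mono {E E' : Set (X × Y)} (h : HasBorelClosedCover B E') (hE : E ⊆ E') :
    HasBorelClosedCover B E :=
  let ⟨S, hS, hSB, hcov⟩ := h
  ⟨S, hS, hSB, hE.trans hcov⟩

theorem of_subset {S E : Set (X × Y)} (hS : HasBorelClosedSections S) (hSB : Disjoint S B)
    (hE : E ⊆ S) : HasBorelClosedCover B E :=
  ⟨fun _ ↦ S, fun _ ↦ hS, fun _ ↦ hSB, hE.trans (subset_iUnion (fun _ : ℕ ↦ S) 0)⟩

theorem iUnion {ι : Type*} [Countable ι] [Nonempty ι] {E : ι → Set (X × Y)}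
    (h : ∀ i, HasBorelClosedCover B (E i)) : HasBorelClosedCover B (⋃ i, E i) := by
  choose S hS hSB hcov using h
  obtain ⟨e, he⟩ := exists_surjective_nat (ι × ℕ)
  refine ⟨fun k ↦ S (e k).1 (e k).2, fun k ↦ hS _ _, fun k ↦ hSB _ _, ?_⟩
  refine iUnion_subset fun i q hq ↦ ?_
  obtain ⟨n, hn⟩ := mem_iUnion.1 (hcov i hq)
  obtain ⟨k, hk⟩ := he (i, n)
  exact mem_iUnion.2 ⟨k, by simpa [hk] using hn⟩

theorem union {E E' : Set (X × Y)} (h : HasBorelClosedCover B E) (h' : HasBorelClosedCover B E') :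
    HasBorelClosedCover B (E ∪ E') := by
  rw [union_eq_iUnion]
  exact .iUnion fun b ↦ by cases b <;> assumption

end HasBorelClosedCover

/-- The points whose vertical section of `A` meets the open set `U`, together with the points
outside the horizontal strip over `U`. -/
def stripClosure (A : Set (X × Y)) (U : Set Y) : Set (X × Y) :=
  Prod.snd ⁻¹' Uᶜ ∪ Prod.fst ⁻¹' (Prod.fst '' (A ∩ Prod.snd ⁻¹' U))

theorem mem_closure_section_iff [TopologicalSpace Y] [SecondCountableTopology Y]
    {A : Set (X × Y)} {q : X × Y} :
    q.2 ∈ closure (Prod.mk q.1 ⁻¹' A) ↔ ∀ U : countableBasis Y, q ∈ stripClosure A U.1 := by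
  rw [(isBasis_countableBasis Y).mem_closure_iff]
  constructor
  · intro h U
    by_cases hq : q.2 ∈ U.1
    · obtain ⟨y, hyU, hyA⟩ := h U U.2 hq
      exact .inr ⟨(q.1, y), ⟨hyA, hyU⟩, rfl⟩
    · exact .inl hq
  · intro h U hU hq
    obtain ⟨⟨x, y⟩, ⟨hyA, hyU⟩, hx⟩ := (h ⟨U, hU⟩).resolve_left fun hn ↦ hn hq
    obtain rfl : x = q.1 := hx
    exact ⟨y, hyU, hyA⟩

/-- The base points `x` for which the section of `B` meets the closure of the section of `A`. -/
def touchingBase [TopologicalSpace Y] (A B : Set (X × Y)) : Set X :=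
  {x | ∃ y, (x, y) ∈ B ∧ y ∈ closure (Prod.mk x ⁻¹' A)}

theorem touchingBase_mono [TopologicalSpace Y] {A A' B : Set (X × Y)} (h : A ⊆ A') :
    touchingBase A B ⊆ touchingBase A' B :=
  fun _ ⟨y, hy, hyA⟩ ↦ ⟨y, hy, closure_mono (preimage_mono h) hyA⟩

variable [TopologicalSpace X] [PolishSpace X] [TopologicalSpace Y] [PolishSpace Y]

theorem MeasureTheory.AnalyticSet.stripClosure {A : Set (X × Y)} (hA : AnalyticSet A) {U : Set Y}
    (hU : IsOpen U) : AnalyticSet (stripClosure A U) := by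
  borelize Y
  refine .union (hU.isClosed_compl.analyticSet.preimage continuous_snd) (.preimage ?_ continuous_fst)
  exact (hA.inter (hU.measurableSet.analyticSet.preimage continuous_snd)).image_of_continuous
    continuous_fst

theorem MeasureTheory.AnalyticSet.touchingBase [Nonempty Y] {A B : Set (X × Y)}
    (hA : AnalyticSet A) (hB : AnalyticSet B) : AnalyticSet (touchingBase A B) := by
  have : Nonempty (countableBasis Y) := by
    obtain ⟨U, hU, -⟩ := (isBasis_countableBasis Y).exists_subset_of_mem_open
      (mem_univ (Classical.arbitrary Y)) isOpen_univ
    exact ⟨U, hU⟩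
  have : _root_.touchingBase A B =
      Prod.fst '' (B ∩ ⋂ U : countableBasis Y, _root_.stripClosure A U.1) := by
    ext x
    constructor
    · rintro ⟨y, hyB, hyA⟩
      exact ⟨(x, y), ⟨hyB, mem_iInter.2 (mem_closure_section_iff.1 hyA)⟩, rfl⟩
    · rintro ⟨⟨x', y⟩, ⟨hyB, hyA⟩, rfl⟩
      exact ⟨y, hyB, mem_closure_section_iff.2 (mem_iInter.1 hyA)⟩
  rw [this]
  exact (hB.inter (.iInter fun U ↦ hA.stripClosure
    (isOpen_of_mem_countableBasis U.2))).image_of_continuous continuous_fst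

theorem exists_hasBorelClosedSections_separating [MeasurableSpace X] [BorelSpace X]
    {A B : Set (X × Y)} (hA : AnalyticSet A) (hB : AnalyticSet B)
    (hAB : touchingBase A B = ∅) :
    ∃ S, HasBorelClosedSections S ∧ A ⊆ S ∧ Disjoint S B := by
  borelize Y
  let s : Option (countableBasis Y) → Set (X × Y) := fun o ↦ o.elim B fun U ↦ stripClosure A U.1
  obtain ⟨W, hW, hsW, hWE⟩ : SeparableFamily s := by
    refine separableFamily_of_analyticSet (fun o ↦ ?_) ?_
    · cases o with
      | none => exact hB
      | some U => exact hA.stripClosure (isOpen_of_mem_countableBasis U.2)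
    · refine eq_empty_of_forall_notMem fun q hq ↦ ?_
      rw [mem_iInter] at hq
      exact eq_empty_iff_forall_notMem.1 hAB q.1
        ⟨q.2, hq none, mem_closure_section_iff.2 fun U ↦ hq (some U)⟩
  have hsep (U : countableBasis Y) : MeasurablySeparable (Prod.fst '' (B \ W (some U)))
      (Prod.fst '' (A ∩ Prod.snd ⁻¹' U.1)) := by
    have hU := isOpen_of_mem_countableBasis U.2
    refine AnalyticSet.measurablySeparable ?_ ?_ ?_
    · exact (hB.inter (hW _).compl.analyticSet).image_of_continuous continuous_fst
    · exact (hA.inter (hU.measurableSet.analyticSet.preimage continuous_snd)).image_of_continuous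
        continuous_fst
    · refine disjoint_left.2 ?_
      rintro _ ⟨q, hq, rfl⟩ hqA
      exact hq.2 (hsW (some U) (.inr hqA))
  choose R hBR hAR hR using hsep
  refine ⟨_, ⟨R, hR, rfl⟩, fun q hq U hqR hqU ↦ ?_, disjoint_left.2 fun q hq hqB ↦ ?_⟩
  · exact disjoint_left.1 (hAR U) ⟨q, ⟨hq, hqU⟩, rfl⟩ hqR
  · refine eq_empty_iff_forall_notMem.1 hWE q (mem_iInter.2 fun o ↦ ?_)
    cases o with
    | none => exact hsW none hqB
    | some U =>
      by_contra hqW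
      refine hq U (hBR U ⟨q, ⟨hqB, hqW⟩, rfl⟩) ?_
      by_contra hqU
      exact hqW (hsW (some U) (.inl hqU))

end BorelClosedSections

section Derivative

variable {X Y : Type*}

/-- The basic clopen subset of Baire space of extensions of a finite sequence. -/
def basicClopen (n : ℕ) (v : Fin n → ℕ) : Set (ℕ → ℕ) :=
  {z | ∀ i : Fin n, z i = v i}

theorem isClosed_basicClopen (n : ℕ) (v : Fin n → ℕ) : IsClosed (basicClopen n v) := by
  rw [basicClopen, ofPred_forall]
  exact isClosed_iInter fun i ↦ isClosed_eq (by fun_prop) continuous_const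

theorem basicClopen_eq_cylinder {n : ℕ} {v : Fin n → ℕ} {z : ℕ → ℕ} (hz : z ∈ basicClopen n v) :
    basicClopen n v = PiNat.cylinder z n := by
  ext y
  rw [PiNat.mem_cylinder_iff]
  exact ⟨fun hy i hi ↦ (hy ⟨i, hi⟩).trans (hz ⟨i, hi⟩).symm,
    fun hy i ↦ (hy i i.2).trans (hz i)⟩

/-- The points of `A` near which, inside their fiber over the base, `p` accumulates at `B`. -/
def touchingDerivative [TopologicalSpace Y] (p : (ℕ → ℕ) → X × Y) (B : Set (X × Y))
    (A : Set (ℕ → ℕ)) : Set (ℕ → ℕ) :=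
  {z ∈ A | ∀ n, (p z).1 ∈ touchingBase (p '' (A ∩ PiNat.cylinder z n)) B}

theorem touchingDerivative_eq [TopologicalSpace Y] (p : (ℕ → ℕ) → X × Y) (B : Set (X × Y))
    (A : Set (ℕ → ℕ)) :
    touchingDerivative p B A = A ∩ ⋂ n, ⋃ v : Fin n → ℕ, basicClopen n v ∩
      (fun z ↦ (p z).1) ⁻¹' touchingBase (p '' (A ∩ basicClopen n v)) B := by
  ext z
  simp only [touchingDerivative, mem_ofPred_eq, mem_inter_iff, mem_iInter, mem_iUnion, mem_preimage]
  refine and_congr_right fun _ ↦ forall_congr' fun n ↦ ⟨fun h ↦ ?_, fun ⟨v, hz, h⟩ ↦ ?_⟩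
  · have hz : z ∈ basicClopen n fun i ↦ z i := fun _ ↦ rfl
    exact ⟨_, hz, by rwa [basicClopen_eq_cylinder hz]⟩
  · rwa [basicClopen_eq_cylinder hz] at h

/-- Analytic sets whose removal leaves only sets that are covered by sets with Borel closed
sections avoiding `B`. -/
def coverResidual [MeasurableSpace X] [TopologicalSpace Y] [SecondCountableTopology Y]
    (p : (ℕ → ℕ) → X × Y) (B : Set (X × Y)) : Set (Set (ℕ → ℕ)) :=
  {A | AnalyticSet A ∧
    ∀ E, AnalyticSet E → Disjoint E A → HasBorelClosedCover B (p '' E)}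

theorem iInter_mem_coverResidual [MeasurableSpace X] [TopologicalSpace Y]
    [SecondCountableTopology Y] {p : (ℕ → ℕ) → X × Y} {B : Set (X × Y)}
    {A : ℕ → Set (ℕ → ℕ)} (hA : ∀ n, A n ∈ coverResidual p B) :
    ⋂ n, A n ∈ coverResidual p B := by
  refine ⟨.iInter fun n ↦ (hA n).1, fun E hE hdisj ↦ ?_⟩
  obtain ⟨W, hW, hsW, hWE⟩ : SeparableFamily fun n ↦ E ∩ A n := by
    refine separableFamily_of_analyticSet (fun n ↦ hE.inter (hA n).1) ?_
    rw [← inter_iInter]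
    exact hdisj.inter_eq
  refine (HasBorelClosedCover.iUnion fun n ↦ (hA n).2 (E \ W n)
    (hE.inter (hW n).compl.analyticSet) ?_).mono ?_
  · exact disjoint_left.2 fun z hz hzA ↦ hz.2 (hsW n ⟨hz.1, hzA⟩)
  · rw [← image_iUnion]
    refine image_mono fun z hz ↦ ?_
    by_contra! hn
    simp only [mem_iUnion, Set.mem_sdiff, not_exists, not_and, not_not] at hn
    exact eq_empty_iff_forall_notMem.1 hWE z (mem_iInter.2 fun n ↦ hn n hz)

theorem univ_mem_coverResidual [MeasurableSpace X] [TopologicalSpace Y]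
    [SecondCountableTopology Y] {p : (ℕ → ℕ) → X × Y} {B : Set (X × Y)} :
    univ ∈ coverResidual p B := by
  refine ⟨isClosed_univ.analyticSet, fun E _ hE ↦ ?_⟩
  obtain rfl : E = ∅ := by simpa using hE
  exact ⟨fun _ ↦ ∅, fun _ ↦ ⟨fun _ ↦ univ, fun _ ↦ .univ, by
    refine (eq_empty_of_forall_notMem fun q hq ↦ ?_).symm
    obtain ⟨U, hU, hqU, -⟩ := (isBasis_countableBasis Y).exists_subset_of_mem_open
      (mem_univ q.2) isOpen_univ
    exact hq ⟨U, hU⟩ trivial hqU⟩, fun _ ↦ disjoint_bot_left, by simp⟩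

variable [TopologicalSpace X] [PolishSpace X] [TopologicalSpace Y] [PolishSpace Y] [Nonempty Y]
  {p : (ℕ → ℕ) → X × Y} {B : Set (X × Y)} {A : Set (ℕ → ℕ)}

theorem MeasureTheory.AnalyticSet.touchingBase_image (hp : Continuous p) (hB : AnalyticSet B)
    (hA : AnalyticSet A) (n : ℕ) (v : Fin n → ℕ) :
    AnalyticSet (_root_.touchingBase (p '' (A ∩ basicClopen n v)) B) :=
  .touchingBase ((hA.inter (isClosed_basicClopen n v).analyticSet).image_of_continuous hp) hB

theorem MeasureTheory.AnalyticSet.touchingDerivative (hp : Continuous p) (hB : AnalyticSet B)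
    (hA : AnalyticSet A) : AnalyticSet (touchingDerivative p B A) := by
  rw [touchingDerivative_eq]
  exact hA.inter <| .iInter fun n ↦ .iUnion fun v ↦ (isClosed_basicClopen n v).analyticSet.inter <|
    (touchingBase_image hp hB hA n v).preimage (by fun_prop)

variable [MeasurableSpace X] [BorelSpace X]

theorem touchingDerivative_mem_coverResidual (hp : Continuous p) (hB : AnalyticSet B)
    (hA : A ∈ coverResidual p B) : touchingDerivative p B A ∈ coverResidual p B := by
  borelize Y
  obtain ⟨hAa, hAc⟩ := hA
  refine ⟨hB.touchingDerivative hp hAa, fun E hE hdisj ↦ ?_⟩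
  let s : Option (Σ n, Fin n → ℕ) → Set (ℕ → ℕ) := fun o ↦ o.elim (E ∩ A) fun v ↦
    (basicClopen v.1 v.2)ᶜ ∪ (fun z ↦ (p z).1) ⁻¹' touchingBase (p '' (A ∩ basicClopen v.1 v.2)) B
  have htouch (v : Σ n, Fin n → ℕ) := hB.touchingBase_image hp hAa v.1 v.2
  obtain ⟨W, hW, hsW, hWE⟩ : SeparableFamily s := by
    refine separableFamily_of_analyticSet (fun o ↦ ?_) ?_
    · cases o with
      | none => exact hE.inter hAa
      | some v =>
        exact .union (isClosed_basicClopen v.1 v.2).measurableSet.compl.analyticSet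
          ((htouch v).preimage (by fun_prop))
    · refine eq_empty_of_forall_notMem fun z hz ↦ ?_
      rw [mem_iInter] at hz
      obtain ⟨hzE, hzA⟩ := hz none
      refine disjoint_left.1 hdisj hzE ?_
      rw [touchingDerivative_eq]
      exact ⟨hzA, mem_iInter.2 fun n ↦ mem_iUnion.2 ⟨fun i ↦ z i, fun _ ↦ rfl,
        (hz (some ⟨n, fun i ↦ z i⟩)).resolve_left fun h ↦ h fun _ ↦ rfl⟩⟩
  have hEW (o) : AnalyticSet (E \ W o) := hE.inter (hW o).compl.analyticSet
  refine (HasBorelClosedCover.iUnion fun o ↦ ?_).mono (E' := ⋃ o, p '' (E \ W o)) ?_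
  · cases o with
    | none => exact hAc _ (hEW _) (disjoint_left.2 fun z hz hzA ↦ hz.2 (hsW none ⟨hz.1, hzA⟩))
    | some v =>
      obtain ⟨R, hER, hRt, hR⟩ := AnalyticSet.measurablySeparable
        (s := (fun z ↦ (p z).1) '' (E \ W (some v))) ((hEW _).image_of_continuous (by fun_prop))
        (htouch v) (by
          refine disjoint_left.2 ?_
          rintro _ ⟨z, hz, rfl⟩ hzt
          exact hz.2 (hsW (some v) (.inr hzt)))
      let A' : Set (ℕ → ℕ) := A ∩ basicClopen v.1 v.2 ∩ (fun z ↦ (p z).1) ⁻¹' R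
      have hA' : AnalyticSet A' := (hAa.inter (isClosed_basicClopen v.1 v.2).analyticSet).inter
        (hR.analyticSet.preimage (by fun_prop))
      obtain ⟨S, hS, hAS, hSB⟩ := exists_hasBorelClosedSections_separating
        (hA'.image_of_continuous hp) hB (by
          refine eq_empty_of_forall_notMem fun x hx ↦ ?_
          refine disjoint_left.1 hRt (touchingBase_mono (image_mono inter_subset_left) hx) ?_
          obtain ⟨y, -, hy⟩ := hx
          obtain ⟨_, z, hz, hzx⟩ := closure_nonempty_iff.1 ⟨y, hy⟩
          simpa [hzx] using hz.2)
      have hSa : AnalyticSet (p ⁻¹' Sᶜ) := hS.measurableSet.compl.analyticSet.preimage hp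
      refine ((HasBorelClosedCover.of_subset hS hSB subset_rfl).union
        (hAc _ ((hEW (some v)).inter hSa) (disjoint_left.2 fun z hz hzA ↦ ?_))).mono ?_
      · refine hz.2 (hAS ⟨z, ⟨⟨hzA, ?_⟩, hER ⟨z, hz.1, rfl⟩⟩, rfl⟩)
        by_contra hzv
        exact hz.1.2 (hsW (some v) (.inl hzv))
      · rintro _ ⟨z, hz, rfl⟩
        by_cases hzS : p z ∈ S
        · exact .inl hzS
        · exact .inr ⟨z, ⟨hz, hzS⟩, rfl⟩
  · rw [← image_iUnion]
    refine image_mono fun z hz ↦ ?_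
    by_contra! hn
    simp only [mem_iUnion, Set.mem_sdiff, not_exists, not_and, not_not] at hn
    exact eq_empty_iff_forall_notMem.1 hWE z (mem_iInter.2 fun o ↦ hn o hz)

end Derivative

section Fusion

variable {X Y : Type*} [MetricSpace Y]

/-- A node `d` of a scheme has first entry a point of `A`, and its later entries code points of
`range g` in the same fiber, the `n`-th one being in the closure of the image of the `n`-th
cylinder around the first entry. -/
def IsSchemeNode (p g : (ℕ → ℕ) → X × Y) (A : Set (ℕ → ℕ)) (d : ℕ → ℕ → ℕ) : Prop :=
  d 0 ∈ A ∧ ∀ n, (g (d (n + 1))).1 = (p (d 0)).1 ∧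
    (g (d (n + 1))).2 ∈ closure (Prod.mk (p (d 0)).1 ⁻¹' (p '' (A ∩ PiNat.cylinder (d 0) n)))

/-- The link of a node of a scheme to the root, and to the earlier node whose requirement
it fulfils. -/
def IsSchemeLink (p g : (ℕ → ℕ) → X × Y) (c : ℕ → ℕ → ℕ → ℕ) : ℕ → Prop
  | 0 => True
  | m + 1 => (p (c (m + 1) 0)).1 = (p (c 0 0)).1 ∧
    c (m + 1) 0 ∈ PiNat.cylinder (c m.unpair.1 0) m.unpair.2.unpair.1 ∧
    dist (p (c (m + 1) 0)).2 (g (c m.unpair.1 (m.unpair.2.unpair.1 + 1))).2 ≤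
      1 / (m.unpair.2.unpair.2 + 1)

theorem IsSchemeNode.mono {p g : (ℕ → ℕ) → X × Y} {A A' : Set (ℕ → ℕ)} {d : ℕ → ℕ → ℕ}
    (h : IsSchemeNode p g A d) (hA : A ⊆ A') : IsSchemeNode p g A' d :=
  ⟨hA h.1, fun n ↦ ⟨(h.2 n).1, closure_mono
    (preimage_mono (image_mono (inter_subset_inter_left _ hA))) (h.2 n).2⟩⟩

theorem IsSchemeLink.congr {p g : (ℕ → ℕ) → X × Y} {c c' : ℕ → ℕ → ℕ → ℕ} {i : ℕ}
    (h : IsSchemeLink p g c i) (hc : ∀ j ≤ i, c j = c' j) : IsSchemeLink p g c' i := by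
  cases i with
  | zero => trivial
  | succ m =>
    have := m.unpair_left_le
    simpa only [IsSchemeLink, hc 0 (by omega), hc (m + 1) le_rfl, hc m.unpair.1 (by omega)] using h

theorem exists_isSchemeNode {p g : (ℕ → ℕ) → X × Y} {A : Set (ℕ → ℕ)} {z : ℕ → ℕ}
    (hz : z ∈ touchingDerivative p (range g) A) : ∃ d, d 0 = z ∧ IsSchemeNode p g A d := by
  obtain ⟨hzA, h⟩ := hz
  choose y hy hyc using h
  choose w hw using hy
  refine ⟨fun n ↦ Nat.casesOn n z w, rfl, hzA, fun n ↦ ?_⟩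
  simp only [hw]
  exact ⟨rfl, hyc n⟩

theorem exists_scheme_update {p g : (ℕ → ℕ) → X × Y} {A : Set (ℕ → ℕ)} {c : ℕ → ℕ → ℕ → ℕ} {m : ℕ}
    (hne : (touchingDerivative p (range g) A).Nonempty)
    (hnode : ∀ i < m, IsSchemeNode p g (touchingDerivative p (range g) A) (c i))
    (hlink : ∀ i < m, IsSchemeLink p g c i) :
    ∃ d, ∀ i < m + 1, IsSchemeNode p g A (update c m d i) ∧ IsSchemeLink p g (update c m d) i := by
  obtain ⟨d, hd, hdlink⟩ : ∃ d, IsSchemeNode p g A d ∧ IsSchemeLink p g (update c m d) m := by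
    cases m with
    | zero =>
      obtain ⟨z, hz⟩ := hne
      obtain ⟨d, -, hd⟩ := exists_isSchemeNode hz
      exact ⟨d, hd, trivial⟩
    | succ m =>
      have hle := m.unpair_left_le
      have hroot : (p (c m.unpair.1 0)).1 = (p (c 0 0)).1 := by
        have := hlink m.unpair.1 (by omega)
        cases h : m.unpair.1 with
        | zero => rfl
        | succ j => rw [h] at this; exact this.1
      obtain ⟨-, h⟩ := hnode m.unpair.1 (by omega)
      obtain ⟨y, ⟨z, ⟨hzA, hzc⟩, hzy⟩, hdist⟩ := Metric.mem_closure_iff.1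
        (h m.unpair.2.unpair.1).2 (1 / (m.unpair.2.unpair.2 + 1)) (by positivity)
      obtain ⟨d, rfl, hd⟩ := exists_isSchemeNode hzA
      refine ⟨d, hd, ?_⟩
      rw [IsSchemeLink, update_self, update_of_ne (by omega), update_of_ne (by omega), hzy]
      exact ⟨hroot, hzc, by rw [dist_comm]; exact hdist.le⟩
  refine ⟨d, fun i hi ↦ ?_⟩
  rcases Nat.lt_succ_iff_lt_or_eq.1 hi with hi | rfl
  · rw [update_of_ne hi.ne]
    exact ⟨(hnode i hi).mono fun _ h ↦ h.1,
      (hlink i hi).congr fun j hj ↦ (update_of_ne (by omega) _ _).symm⟩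
  · rw [update_self]
    exact ⟨hd, hdlink⟩

theorem isClosed_setOf_isSchemeLink [TopologicalSpace X] [T2Space X] {p g : (ℕ → ℕ) → X × Y}
    (hp : Continuous p) (hg : Continuous g) (i : ℕ) : IsClosed {c | IsSchemeLink p g c i} := by
  cases i with
  | zero => exact isClosed_univ
  | succ m =>
    refine .inter (isClosed_eq (by fun_prop) (by fun_prop)) (.inter
      (s₁ := {c : ℕ → ℕ → ℕ → ℕ |
        c (m + 1) 0 ∈ PiNat.cylinder (c m.unpair.1 0) m.unpair.2.unpair.1}) ?_ ?_)
    · simp only [PiNat.mem_cylinder_iff, ofPred_forall]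
      exact isClosed_iInter fun j ↦ isClosed_iInter fun _ ↦
        isClosed_eq (by fun_prop) (by fun_prop)
    · exact isClosed_le (f := fun c : ℕ → ℕ → ℕ → ℕ ↦ dist (p (c (m + 1) 0)).2
        (g (c m.unpair.1 (m.unpair.2.unpair.1 + 1))).2)
        (g := fun _ ↦ 1 / ((m.unpair.2.unpair.2 : ℝ) + 1)) (by fun_prop) continuous_const

theorem exists_scheme [TopologicalSpace X] [T2Space X] {p g : (ℕ → ℕ) → X × Y}
    (hp : Continuous p) (hg : Continuous g) {F : Set (Set (ℕ → ℕ))} (huniv : univ ∈ F)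
    (hinter : ∀ A : ℕ → Set (ℕ → ℕ), (∀ n, A n ∈ F) → ⋂ n, A n ∈ F)
    (hderiv : ∀ A ∈ F, touchingDerivative p (range g) A ∈ F) (hne : ∀ A ∈ F, A.Nonempty) :
    ∃ c : ℕ → ℕ → ℕ → ℕ, ∀ i,
      (∀ n, (g (c i (n + 1))).1 = (p (c i 0)).1) ∧ IsSchemeLink p g c i := by
  let entry (c : ℕ → ℕ → ℕ → ℕ) (e : ℕ) : ℕ := c e.unpair.1 e.unpair.2.unpair.1 e.unpair.2.unpair.2
  let Approx (A : Set (ℕ → ℕ)) (m : ℕ) (t : ℕ → ℕ) (c : ℕ → ℕ → ℕ → ℕ) : Prop :=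
    (∀ i < m, IsSchemeNode p g A (c i) ∧ IsSchemeLink p g c i) ∧ ∀ e < m, entry c e = t e
  obtain ⟨t, ht⟩ : ∃ t, ∀ m, ∀ A ∈ F, ∃ c, Approx A m t c := by
    refine exists_forall_of_update (fun m s t hst hs A hA ↦ ?_)
      ⟨fun _ ↦ 0, fun A _ ↦ ⟨fun _ _ _ ↦ 0, by simp, by simp⟩⟩ fun m t hm ↦ ?_
    · obtain ⟨c, hc, hcs⟩ := hs A hA
      exact ⟨c, hc, fun e he ↦ (hcs e he).trans (hst e he)⟩
    · by_contra! hall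
      choose A hAF hA using hall
      have hD := hderiv _ (hinter A hAF)
      obtain ⟨c, hc, hct⟩ := hm _ hD
      obtain ⟨d, hd⟩ := exists_scheme_update (hne _ hD) (fun i hi ↦ (hc i hi).1)
        fun i hi ↦ (hc i hi).2
      refine hA (entry (update c m d) m) (update c m d)
        ⟨fun i hi ↦ ⟨(hd i hi).1.mono (iInter_subset _ _), (hd i hi).2⟩, fun e he ↦ ?_⟩
      rcases Nat.lt_succ_iff_lt_or_eq.1 he with he | rfl
      · have := e.unpair_left_le
        rw [update_of_ne he.ne, ← hct e he]
        simp only [entry]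
        rw [update_of_ne (by omega)]
      · rw [update_self]
  choose c hc hct using fun m ↦ ht m univ huniv
  refine ⟨fun i j l ↦ t (Nat.pair i (Nat.pair j l)), fun i ↦ ?_⟩
  have hlim : Tendsto c atTop (𝓝 fun i j l ↦ t (Nat.pair i (Nat.pair j l))) := by
    refine tendsto_pi_nhds.2 fun i ↦ tendsto_pi_nhds.2 fun j ↦ tendsto_pi_nhds.2 fun l ↦
      tendsto_const_nhds.congr' ?_
    filter_upwards [eventually_gt_atTop (Nat.pair i (Nat.pair j l))] with m hm
    simpa [entry] using (hct m _ hm).symm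
  constructor
  · intro n
    refine (isClosed_eq (f := fun c : ℕ → ℕ → ℕ → ℕ ↦ (g (c i (n + 1))).1)
      (g := fun c ↦ (p (c i 0)).1) (by fun_prop) (by fun_prop)).mem_of_tendsto hlim ?_
    filter_upwards [eventually_gt_atTop i] with m hm using ((hc m i hm).1.2 n).1
  · refine (isClosed_setOf_isSchemeLink hp hg i).mem_of_tendsto hlim ?_
    filter_upwards [eventually_gt_atTop i] with m hm using (hc m i hm).2

theorem not_exists_scheme [TopologicalSpace X] [T2Space X] {p g : (ℕ → ℕ) → X × Y}
    (hp : Continuous p) (hpg : Disjoint (range p) (range g))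
    (hsec : ∀ x, ∃ K : ℕ → Set Y, (∀ n, IsClosed (K n)) ∧ ⋃ n, K n = {y | (x, y) ∈ range p}) :
    ¬ ∃ c : ℕ → ℕ → ℕ → ℕ, ∀ i,
      (∀ n, (g (c i (n + 1))).1 = (p (c i 0)).1) ∧ IsSchemeLink p g c i := by
  rintro ⟨c, hc⟩
  let x := (p (c 0 0)).1
  have hroot (i : ℕ) : (p (c i 0)).1 = x := by
    cases i with
    | zero => rfl
    | succ m => exact (hc (m + 1)).2.1
  obtain ⟨K, hK, hKx⟩ := hsec x
  let Q : Set (ℕ → ℕ) := closure (range fun i ↦ c i 0)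
  have hQx : ∀ z ∈ Q, (p z).1 = x := by
    refine closure_minimal (t := {z | (p z).1 = x}) ?_ (isClosed_eq (by fun_prop) continuous_const)
    rintro _ ⟨i, rfl⟩
    exact hroot i
  have : PolishSpace Q := isClosed_closure.polishSpace
  have : Nonempty Q := ⟨⟨_, subset_closure ⟨0, rfl⟩⟩⟩
  obtain ⟨k, z, hz⟩ := nonempty_interior_of_iUnion_of_closed
    (f := fun k ↦ {z : Q | (p z).2 ∈ K k}) (fun k ↦ (hK k).preimage (by fun_prop)) (by
      refine eq_univ_of_forall fun z ↦ ?_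
      have : (p z).2 ∈ ⋃ n, K n := hKx ▸ ⟨z, by rw [← hQx z z.2]⟩
      simpa using this)
  obtain ⟨O, hO, hOeq⟩ := isOpen_induced_iff.1
    (isOpen_interior (s := {z : Q | (p z).2 ∈ K k}))
  have hzO : (z : ℕ → ℕ) ∈ O := by rw [← hOeq] at hz; exact hz
  obtain ⟨_, hiO, ⟨i, rfl⟩⟩ := mem_closure_iff.1 z.2 O hO hzO
  have hOK (j : ℕ) (hj : c j 0 ∈ O) : (p (c j 0)).2 ∈ K k := by
    have hmem : (⟨c j 0, subset_closure ⟨j, rfl⟩⟩ : Q) ∈ Subtype.val ⁻¹' O := hj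
    rw [hOeq] at hmem
    exact interior_subset (s := {z : Q | (p z).2 ∈ K k}) hmem
  obtain ⟨n, hn⟩ := exists_cylinder_subset_of_mem_nhds (hO.mem_nhds hiO)
  have hmem : (g (c i (n + 1))).2 ∈ K k := by
    rw [← (hK k).closure_eq, Metric.mem_closure_iff]
    intro ε hε
    obtain ⟨l, hl⟩ := exists_nat_one_div_lt hε
    have hlink := (hc (Nat.pair i (Nat.pair n l) + 1)).2
    simp only [IsSchemeLink, Nat.unpair_pair] at hlink
    exact ⟨_, hOK _ (hn hlink.2.1), by rw [dist_comm]; exact hlink.2.2.trans_lt hl⟩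
  have hmem' : (g (c i (n + 1))).2 ∈ {y | (x, y) ∈ range p} := hKx ▸ mem_iUnion.2 ⟨k, hmem⟩
  refine disjoint_left.1 hpg hmem' ⟨c i (n + 1), ?_⟩
  rw [← hroot i, ← (hc i).1 n]

end Fusion

/-- The projection of a Borel set with `F_σ` sections along a compact metrizable space is Borel. -/
theorem measurableSet_image_fst_of_isClosed_sections {X Y : Type*} [TopologicalSpace X]
    [PolishSpace X] [MeasurableSpace X] [BorelSpace X] [TopologicalSpace Y] [CompactSpace Y]
    [MetrizableSpace Y] [MeasurableSpace Y] [BorelSpace Y] {P : Set (X × Y)}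
    (hP : MeasurableSet P)
    (hsec : ∀ x, ∃ K : ℕ → Set Y, (∀ n, IsClosed (K n)) ∧ ⋃ n, K n = {y | (x, y) ∈ P}) :
    MeasurableSet (Prod.fst '' P) := by
  let _ := metrizableSpaceMetric Y
  have : PolishSpace Y := inferInstance
  rcases isEmpty_or_nonempty Y with hY | hY
  · simp [eq_empty_of_isEmpty P]
  have hPa := hP.analyticSet
  have hPca := hP.compl.analyticSet
  rw [AnalyticSet] at hPa hPca
  rcases hPa with rfl | ⟨p, hp, rfl⟩
  · simp
  rcases hPca with hPc | ⟨g, hg, hgp⟩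
  · rw [compl_empty_iff.1 hPc, image_univ, Prod.range_fst]
    exact .univ
  have hpg : Disjoint (range p) (range g) := hgp ▸ disjoint_compl_right
  have hcov : HasBorelClosedCover (range g) (range p) := by
    by_contra hcov
    refine not_exists_scheme hp hpg hsec (exists_scheme hp hg (F := coverResidual p (range g))
      univ_mem_coverResidual (fun _ ↦ iInter_mem_coverResidual)
      (fun _ ↦ touchingDerivative_mem_coverResidual hp
        (analyticSet_range_of_polishSpace hg)) fun A hA ↦ ?_)
    by_contra! hempty
    have := hA.2 univ isClosed_univ.analyticSet (by simp [hempty])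
    rw [image_univ] at this
    exact hcov this
  obtain ⟨S, hS, hSg, hpS⟩ := hcov
  have hpS' : range p = ⋃ k, S k := hpS.antisymm <| iUnion_subset fun k ↦ by
    simpa [hgp] using disjoint_compl_right_iff_subset.1 (hgp ▸ hSg k)
  rw [hpS', image_iUnion]
  exact .iUnion fun k ↦ (hS k).measurableSet_image_fst

/-- The graph of a sequence, as a point of the Cantor space over `ℕ × ℕ`. -/
def sequenceGraph (y : ℕ → ℕ) : ℕ × ℕ → Bool :=
  fun a ↦ decide (y a.1 = a.2)

theorem continuous_sequenceGraph : Continuous sequenceGraph :=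
  continuous_pi fun a ↦ (continuous_of_discreteTopology (f := fun n : ℕ ↦ decide (n = a.2))).comp
    (continuous_apply a.1)

theorem injective_sequenceGraph : Injective sequenceGraph := fun y y' h ↦ funext fun i ↦ by
  simpa [sequenceGraph, eq_comm] using congrFun h (i, y i)

theorem stmt_9 {X : Type*} [TopologicalSpace X] [PolishSpace X]
    [MeasurableSpace X] [BorelSpace X]
    (P : Set (X × (ℕ → ℕ))) (hP : MeasurableSet P)
    (hsec : ∀ x : X, IsSigmaCompact {y : ℕ → ℕ | (x, y) ∈ P}) :
    MeasurableSet {x : X | ∃ y, (x, y) ∈ P} := by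
  let Φ : X × (ℕ → ℕ) → X × (ℕ × ℕ → Bool) := Prod.map id sequenceGraph
  have hΦ : MeasurableEmbedding Φ := (continuous_id.prodMap
    continuous_sequenceGraph).measurableEmbedding (injective_id.prodMap injective_sequenceGraph)
  convert! measurableSet_image_fst_of_isClosed_sections (hΦ.measurableSet_image.2 hP) fun x ↦ ?_
  · ext x
    simp [Φ]
  · obtain ⟨K, hK, hKx⟩ := hsec x
    refine ⟨fun n ↦ sequenceGraph '' K n,
      fun n ↦ ((hK n).image continuous_sequenceGraph).isClosed, ?_⟩
    rw [← image_iUnion, hKx]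
    ext y
    simp [Φ]
end

section
/- (Arsenin–Kunugui uniformization) Let X be a Polish space and P ⊆ X × ℕ^ℕ a Borel set all of whose vertical sections are σ-compact. Then there is a Borel set Q ⊆ P such that for every x with nonempty section P_x, the section Q_x contains exactly one point. -/
open Set Filter Topology TopologicalSpace

section SectionwiseClosed

variable {X Z : Type*} [MeasurableSpace X] [TopologicalSpace Z] [SecondCountableTopology Z]

/-- `O ⊆ X × Z` is a countable union of rectangles `E × U` with `E` measurable and `U` in a fixed
countable basis of `Z`. -/
def BorelSectionOpen (O : Set (X × Z)) : Prop :=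
  ∃ E : countableBasis Z → Set X, (∀ U, MeasurableSet (E U)) ∧ O = ⋃ U, E U ×ˢ (U : Set Z)

/-- The complement of `C ⊆ X × Z` is a countable union of measurable rectangles with open second
factor. -/
def BorelSectionClosed (C : Set (X × Z)) : Prop := BorelSectionOpen Cᶜ

theorem BorelSectionOpen.iUnion {ι : Type*} [Countable ι] {O : ι → Set (X × Z)}
    (h : ∀ i, BorelSectionOpen (O i)) : BorelSectionOpen (⋃ i, O i) := by
  choose E hE hO using h
  refine ⟨fun U => ⋃ i, E i U, fun U => MeasurableSet.iUnion fun i => hE i U, ?_⟩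
  ext p
  simp only [hO, mem_iUnion, mem_prod]
  constructor
  · rintro ⟨i, U, h1, h2⟩; exact ⟨U, ⟨i, h1⟩, h2⟩
  · rintro ⟨U, ⟨i, h1⟩, h2⟩; exact ⟨i, U, h1, h2⟩

theorem BorelSectionOpen.inter_prod {O : Set (X × Z)} (h : BorelSectionOpen O) {D : Set X}
    (hD : MeasurableSet D) : BorelSectionOpen (O ∩ D ×ˢ univ) := by
  obtain ⟨E, hE, rfl⟩ := h
  refine ⟨fun U => E U ∩ D, fun U => (hE U).inter hD, ?_⟩
  ext p
  simp only [mem_iUnion, mem_prod, mem_inter_iff, mem_univ, and_true]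
  constructor
  · rintro ⟨⟨U, h1, h2⟩, h3⟩; exact ⟨U, ⟨h1, h3⟩, h2⟩
  · rintro ⟨U, ⟨h1, h3⟩, h2⟩; exact ⟨⟨U, h1, h2⟩, h3⟩

theorem BorelSectionOpen.prod {D : Set X} {U : Set Z} (hD : MeasurableSet D) (hU : IsOpen U) :
    BorelSectionOpen (D ×ˢ U) := by
  refine ⟨fun V => D ∩ {_x | (V : Set Z) ⊆ U}, fun V => hD.inter (MeasurableSet.const _), ?_⟩
  ext p
  simp only [mem_iUnion, mem_prod, mem_inter_iff, mem_ofPred_eq]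
  constructor
  · rintro ⟨h1, h2⟩
    obtain ⟨V, hV, hpV, hVU⟩ := (isBasis_countableBasis Z).exists_subset_of_mem_open h2 hU
    exact ⟨⟨V, hV⟩, ⟨h1, hVU⟩, hpV⟩
  · rintro ⟨V, ⟨h1, h2⟩, h3⟩; exact ⟨h1, h2 h3⟩

theorem BorelSectionOpen.union {O O' : Set (X × Z)} (h : BorelSectionOpen O)
    (h' : BorelSectionOpen O') : BorelSectionOpen (O ∪ O') := by
  rw [union_eq_iUnion]
  exact BorelSectionOpen.iUnion fun b => by cases b <;> assumption

theorem BorelSectionClosed.prod {D : Set X} {F : Set Z} (hD : MeasurableSet D) (hF : IsClosed F) :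
    BorelSectionClosed (D ×ˢ F) := by
  have : (D ×ˢ F)ᶜ = Dᶜ ×ˢ univ ∪ univ ×ˢ Fᶜ := by
    ext p; simp only [mem_compl_iff, mem_prod, mem_union, mem_univ]; tauto
  rw [BorelSectionClosed, this]
  exact (BorelSectionOpen.prod hD.compl isOpen_univ).union
    (BorelSectionOpen.prod MeasurableSet.univ hF.isOpen_compl)

theorem BorelSectionClosed.iInter {ι : Type*} [Countable ι] {C : ι → Set (X × Z)}
    (h : ∀ i, BorelSectionClosed (C i)) : BorelSectionClosed (⋂ i, C i) := by
  rw [BorelSectionClosed, compl_iInter]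
  exact BorelSectionOpen.iUnion h

theorem BorelSectionClosed.measurableSet [MeasurableSpace Z] [OpensMeasurableSpace Z]
    {C : Set (X × Z)} (h : BorelSectionClosed C) : MeasurableSet C := by
  obtain ⟨E, hE, hC⟩ := h
  rw [← MeasurableSet.compl_iff, hC]
  exact MeasurableSet.iUnion fun U =>
    (hE U).prod (isOpen_of_mem_countableBasis U.2).measurableSet

theorem BorelSectionClosed.isClosed_section {C : Set (X × Z)} (h : BorelSectionClosed C) (x : X) :
    IsClosed {z | (x, z) ∈ C} := by
  obtain ⟨E, hE, hC⟩ := h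
  have : {z | (x, z) ∈ C}ᶜ = ⋃ (U : countableBasis Z) (_ : x ∈ E U), (U : Set Z) := by
    ext z
    have : (x, z) ∉ C ↔ (x, z) ∈ Cᶜ := Iff.rfl
    simp only [mem_compl_iff, mem_ofPred_eq, this, hC, mem_iUnion, mem_prod, exists_prop]
  rw [← isOpen_compl_iff, this]
  exact isOpen_iUnion fun U => isOpen_iUnion fun _ => isOpen_of_mem_countableBasis U.2

theorem BorelSectionClosed.measurableSet_exists_mem {C : Set (X × Z)} (h : BorelSectionClosed C)
    {K : Set Z} (hK : IsCompact K) : MeasurableSet {x | ∃ z ∈ K, (x, z) ∈ C} := by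
  obtain ⟨E, hE, hC⟩ := h
  have : {x | ∃ z ∈ K, (x, z) ∈ C}ᶜ =
      ⋃ (F : Finset (countableBasis Z)) (_ : K ⊆ ⋃ U ∈ F, (U : Set Z)), ⋂ U ∈ F, E U := by
    ext x
    have key : ∀ z, (x, z) ∉ C ↔ ∃ U : countableBasis Z, x ∈ E U ∧ z ∈ (U : Set Z) := by
      intro z
      have : (x, z) ∉ C ↔ (x, z) ∈ Cᶜ := Iff.rfl
      simp only [this, hC, mem_iUnion, mem_prod]
    simp only [mem_compl_iff, mem_ofPred_eq, not_exists, not_and, key, mem_iUnion, exists_prop,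
      mem_iInter]
    constructor
    · intro H
      obtain ⟨F, hF⟩ := hK.elim_finite_subcover
        (fun U : {U : countableBasis Z // x ∈ E U} => ((U : countableBasis Z) : Set Z))
        (fun U => isOpen_of_mem_countableBasis U.1.2) (fun z hz => by
          obtain ⟨U, h1, h2⟩ := H z hz
          exact mem_iUnion.2 ⟨⟨U, h1⟩, h2⟩)
      classical
      refine ⟨F.image Subtype.val, fun z hz => ?_, fun U hU => ?_⟩
      · obtain ⟨U, hU, hzU⟩ := mem_iUnion₂.1 (hF hz)
        exact mem_iUnion₂.2 ⟨U, Finset.mem_image_of_mem _ hU, hzU⟩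
      · obtain ⟨V, -, rfl⟩ := Finset.mem_image.1 hU
        exact V.2
    · rintro ⟨F, hKF, hx⟩ z hz
      obtain ⟨U, hU, hzU⟩ := mem_iUnion₂.1 (hKF hz)
      exact ⟨U, hx U hU, hzU⟩
  rw [← MeasurableSet.compl_iff, this]
  exact MeasurableSet.iUnion fun F => MeasurableSet.iUnion fun _ =>
    Finset.measurableSet_biInter F fun U _ => hE U

end SectionwiseClosed

section Separation

variable {X Z : Type*} [MeasurableSpace X] [TopologicalSpace Z] [SecondCountableTopology Z]

/-- `S` is covered by countably many sectionwise closed sets disjoint from `B`. -/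
def SigmaSeparable (B S : Set (X × Z)) : Prop :=
  ∃ C : ℕ → Set (X × Z), (∀ n, BorelSectionClosed (C n)) ∧ (∀ n, Disjoint (C n) B) ∧ S ⊆ ⋃ n, C n

/-- Up to a set that is `SigmaSeparable` from `B`, the set `S` is contained in a sectionwise closed
set disjoint from `T`. -/
def PairSeparable (B S T : Set (X × Z)) : Prop :=
  ∃ C, BorelSectionClosed C ∧ Disjoint C T ∧ SigmaSeparable B (S \ C)

/-- `X` is the union of measurable sets `D 0, …, D (n - 1)` such that `S i` and `T i` are
`PairSeparable` above `D i`. -/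
def ConfigSeparable (B : Set (X × Z)) (n : ℕ) (S T : ℕ → Set (X × Z)) : Prop :=
  ∃ D : ℕ → Set X, (∀ i < n, MeasurableSet (D i)) ∧
    (∀ i < n, PairSeparable B (S i ∩ D i ×ˢ univ) (T i)) ∧ ∀ x, ∃ i < n, x ∈ D i

theorem SigmaSeparable.mono {B S S' : Set (X × Z)} (h : SigmaSeparable B S) (hS : S' ⊆ S) :
    SigmaSeparable B S' := by
  obtain ⟨C, h1, h2, h3⟩ := h
  exact ⟨C, h1, h2, hS.trans h3⟩

theorem SigmaSeparable.iUnion {B : Set (X × Z)} {ι : Type*} [Countable ι] [Nonempty ι]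
    {S : ι → Set (X × Z)} (h : ∀ i, SigmaSeparable B (S i)) : SigmaSeparable B (⋃ i, S i) := by
  choose C h1 h2 h3 using h
  obtain ⟨e, he⟩ := exists_surjective_nat (ι × ℕ)
  refine ⟨fun n => C (e n).1 (e n).2, fun n => h1 _ _, fun n => h2 _ _, iUnion_subset fun i => ?_⟩
  refine (h3 i).trans (iUnion_subset fun m => ?_)
  obtain ⟨n, hn⟩ := he (i, m)
  exact subset_iUnion_of_subset n (by rw [hn])

theorem PairSeparable.mono {B S S' T : Set (X × Z)} (h : PairSeparable B S T) (hS : S' ⊆ S) :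
    PairSeparable B S' T := by
  obtain ⟨C, h1, h2, h3⟩ := h
  exact ⟨C, h1, h2, h3.mono (sdiff_subset_sdiff_left hS)⟩

theorem SigmaSeparable.empty (B : Set (X × Z)) : SigmaSeparable B ∅ := by
  refine ⟨fun _ => ∅, fun _ => ?_, fun _ => empty_disjoint _, empty_subset _⟩
  have := BorelSectionClosed.prod (Z := Z) (MeasurableSet.empty (α := X)) isClosed_empty
  rwa [empty_prod] at this

theorem SigmaSeparable.of_pairSeparable {B S : Set (X × Z)} (h : PairSeparable B S B) :
    SigmaSeparable B S := by
  obtain ⟨C, h1, h2, h3⟩ := h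
  refine (SigmaSeparable.iUnion (ι := Bool) (S := fun b => cond b (S \ C) C) ?_).mono
    (fun p hp => ?_)
  · rintro (_ | _)
    · exact ⟨fun _ => C, fun _ => h1, fun _ => h2, subset_iUnion_of_subset 0 Subset.rfl⟩
    · exact h3
  · by_cases hpC : p ∈ C
    · exact mem_iUnion.2 ⟨false, hpC⟩
    · exact mem_iUnion.2 ⟨true, hp, hpC⟩

theorem PairSeparable.of_subset_of_disjoint {B S T : Set (X × Z)} {D : Set X} {F : Set Z}
    (hD : MeasurableSet D) (hF : IsClosed F) (hS : SigmaSeparable B (S \ D ×ˢ F))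
    (hT : Disjoint (D ×ˢ F) T) : PairSeparable B S T :=
  ⟨D ×ˢ F, BorelSectionClosed.prod hD hF, hT, hS⟩

theorem PairSeparable.iUnion_right {B S T : Set (X × Z)} {ι : Type*} [Countable ι] [Nonempty ι]
    {T' : ι → Set (X × Z)} (h : ∀ i, PairSeparable B S (T' i)) (hT : T ⊆ ⋃ i, T' i) :
    PairSeparable B S T := by
  choose C h1 h2 h3 using h
  refine ⟨⋂ i, C i, BorelSectionClosed.iInter h1, ?_, ?_⟩
  · refine disjoint_left.2 fun p hp hpT => ?_
    obtain ⟨i, hi⟩ := mem_iUnion.1 (hT hpT)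
    exact disjoint_left.1 (h2 i) (mem_iInter.1 hp i) hi
  · rw [sdiff_iInter]
    exact SigmaSeparable.iUnion h3

theorem PairSeparable.iUnion_prod {B S T : Set (X × Z)} {ι : Type*} [Countable ι] [Nonempty ι]
    {D : ι → Set X} (hD : ∀ i, MeasurableSet (D i))
    (h : ∀ i, PairSeparable B (S ∩ D i ×ˢ univ) T) :
    PairSeparable B (S ∩ (⋃ i, D i) ×ˢ univ) T := by
  choose C h1 h2 h3 using h
  have hU := MeasurableSet.iUnion hD
  refine ⟨{p | p.1 ∈ ⋃ i, D i ∧ ∀ i, p.1 ∈ D i → p ∈ C i}, ?_, ?_, ?_⟩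
  · have : {p : X × Z | p.1 ∈ ⋃ i, D i ∧ ∀ i, p.1 ∈ D i → p ∈ C i}ᶜ =
        (⋃ i, D i)ᶜ ×ˢ univ ∪ ⋃ i, (C i)ᶜ ∩ D i ×ˢ univ := by
      ext p
      simp only [mem_compl_iff, mem_ofPred_eq, mem_union, mem_iUnion, mem_prod, mem_univ,
        mem_inter_iff, and_true, not_and_or, not_forall]
      grind
    rw [BorelSectionClosed, this]
    exact (BorelSectionOpen.prod hU.compl isOpen_univ).union
      (BorelSectionOpen.iUnion fun i => (h1 i).inter_prod (hD i))
  · refine disjoint_left.2 fun p hp hpT => ?_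
    obtain ⟨i, hi⟩ := mem_iUnion.1 hp.1
    exact disjoint_left.1 (h2 i) (hp.2 i hi) hpT
  · refine (SigmaSeparable.iUnion h3).mono fun p hp => ?_
    obtain ⟨⟨hpS, hpD, -⟩, hpC⟩ := hp
    simp only [mem_ofPred_eq, not_and, not_forall] at hpC
    obtain ⟨i, hi, hpi⟩ := hpC hpD
    exact mem_iUnion.2 ⟨i, ⟨hpS, hi, trivial⟩, hpi⟩

/-- Splitting one of the sets `T i` preserves inseparability. -/
theorem exists_not_configSeparable_update {B : Set (X × Z)} {n : ℕ} {S T : ℕ → Set (X × Z)}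
    (h : ¬ ConfigSeparable B n S T) {i : ℕ} {T' : ℕ → Set (X × Z)} (hT : T i ⊆ ⋃ k, T' k) :
    ∃ k, ¬ ConfigSeparable B n S (Function.update T i (T' k)) := by
  by_contra! H
  choose D hD hP hU using H
  refine h ⟨fun j => if j = i then ⋂ k, D k j else ⋃ k, D k j, fun j hj => ?_, fun j hj => ?_,
    fun x => ?_⟩
  · dsimp only
    split_ifs
    exacts [MeasurableSet.iInter fun k => hD k j hj, MeasurableSet.iUnion fun k => hD k j hj]
  · dsimp only
    split_ifs with hji
    · subst hji
      refine PairSeparable.iUnion_right (fun k => ?_) hT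
      have := hP k j hj
      rw [Function.update_self] at this
      exact this.mono (inter_subset_inter_right _ (prod_mono_left (iInter_subset _ k)))
    · refine PairSeparable.iUnion_prod (fun k => hD k j hj) fun k => ?_
      have := hP k j hj
      rwa [Function.update_of_ne hji] at this
  · by_cases hx : ∃ k, ∃ j < n, j ≠ i ∧ x ∈ D k j
    · obtain ⟨k, j, hj, hji, hxj⟩ := hx
      exact ⟨j, hj, by simpa [hji] using ⟨k, hxj⟩⟩
    · push Not at hx
      have : ∀ k, i < n ∧ x ∈ D k i := fun k => by
        obtain ⟨j, hj, hxj⟩ := hU k x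
        by_cases hji : j = i
        · subst hji; exact ⟨hj, hxj⟩
        · exact absurd hxj (hx k j hj hji)
      exact ⟨i, (this 0).1, by simpa using fun k => (this k).2⟩

theorem exists_not_configSeparable_split {B : Set (X × Z)} {n : ℕ} {S T : ℕ → Set (X × Z)}
    (h : ¬ ConfigSeparable B n S T) {T' : ℕ → ℕ → Set (X × Z)} (hT : ∀ i, T i ⊆ ⋃ k, T' i k) :
    ∃ k : ℕ → ℕ, ¬ ConfigSeparable B n S fun i => T' i (k i) := by
  have key : ∀ m, ∃ k : ℕ → ℕ,
      ¬ ConfigSeparable B n S fun i => if i < m then T' i (k i) else T i := by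
    intro m
    induction m with
    | zero => simpa using h
    | succ m ih =>
      obtain ⟨k, hk⟩ := ih
      obtain ⟨l, hl⟩ := exists_not_configSeparable_update hk (i := m) (T' := T' m)
        (by simpa using hT m)
      refine ⟨Function.update k m l, ?_⟩
      convert hl using 2
      ext1 i
      rcases lt_trichotomy i m with hi | rfl | hi
      · simp [hi, hi.ne, Nat.lt_succ_of_lt hi]
      · simp
      · simp [hi.ne', hi.not_gt, Nat.not_lt.2 (Nat.succ_le_of_lt hi)]
  obtain ⟨k, hk⟩ := key n
  refine ⟨k, fun ⟨D, h1, h2, h3⟩ => hk ⟨D, h1, fun i hi => ?_, h3⟩⟩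
  simpa [hi] using h2 i hi

/-- Adding a new pair `(S' k, B)`, where the sets `S' k` cover the part of `S i` that lies above a
neighbourhood of the projection of `T i`, preserves inseparability for some `k`. -/
theorem exists_not_configSeparable_add {B : Set (X × Z)} {n : ℕ} {S T : ℕ → Set (X × Z)}
    (h : ¬ ConfigSeparable B n S T) {i : ℕ} (hi : i < n) {U : Set Z} (hU : IsOpen U)
    (hT : T i ⊆ univ ×ˢ U) {S' : ℕ → Set (X × Z)} (hS : S i ∩ univ ×ˢ U ⊆ ⋃ k, S' k) :
    ∃ k, ¬ ConfigSeparable B (n + 1) (Function.update S n (S' k)) (Function.update T n B) := by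
  by_contra! H
  choose D hD hP hx using H
  have hP' : ∀ k, ∀ j < n, PairSeparable B (S j ∩ D k j ×ˢ univ) (T j) := fun k j hj => by
    have := hP k j (Nat.lt_succ_of_lt hj)
    rwa [Function.update_of_ne hj.ne, Function.update_of_ne hj.ne] at this
  have hPn : ∀ k, SigmaSeparable B (S' k ∩ D k n ×ˢ univ) := fun k => by
    have := hP k n (Nat.lt_succ_self n)
    rw [Function.update_self, Function.update_self] at this
    exact .of_pairSeparable this
  have hn : ∀ k, MeasurableSet (D k n) := fun k => hD k n (Nat.lt_succ_self n)
  have hnew : PairSeparable B (S i ∩ (⋂ k, D k n) ×ˢ univ) (T i) := by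
    refine .of_subset_of_disjoint MeasurableSet.univ hU.isClosed_compl
      ((SigmaSeparable.iUnion hPn).mono ?_) ?_
    · rintro p ⟨⟨hp, hpD, -⟩, hpU⟩
      have hpU' : p.2 ∈ U := by
        by_contra hc
        exact hpU ⟨trivial, hc⟩
      obtain ⟨k, hk⟩ := mem_iUnion.1 (hS ⟨hp, trivial, hpU'⟩)
      exact mem_iUnion.2 ⟨k, hk, mem_iInter.1 hpD k, trivial⟩
    · exact disjoint_left.2 fun p hp hpT => hp.2 (hT hpT).2
  refine h ⟨fun j => ⋃ k : Option ℕ, k.elim (if j = i then ⋂ k, D k n else ∅) (D · j),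
    fun j hj => MeasurableSet.iUnion ?_, fun j hj => PairSeparable.iUnion_prod ?_ ?_,
    fun x => ?_⟩
  iterate 2
    rintro (_ | k)
    · simp only [Option.elim]
      split_ifs
      exacts [MeasurableSet.iInter hn, MeasurableSet.empty]
    · exact hD k j (Nat.lt_succ_of_lt hj)
  · rintro (_ | k)
    · simp only [Option.elim]
      split_ifs with hji
      · subst hji; exact hnew
      · refine .of_subset_of_disjoint MeasurableSet.empty isClosed_univ ?_ (by simp)
        simpa using SigmaSeparable.empty B
    · exact hP' k j hj
  · by_cases hx' : ∃ k, ∃ j < n, x ∈ D k j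
    · obtain ⟨k, j, hj, hxj⟩ := hx'
      exact ⟨j, hj, mem_iUnion.2 ⟨some k, hxj⟩⟩
    · push Not at hx'
      refine ⟨i, hi, mem_iUnion.2 ⟨none, ?_⟩⟩
      simp only [Option.elim, if_true]
      refine mem_iInter.2 fun k => ?_
      obtain ⟨j, hj, hxj⟩ := hx k x
      rcases Nat.lt_succ_iff_lt_or_eq.1 hj with hj | rfl
      · exact absurd hxj (hx' k j hj)
      · exact hxj

/-- A configuration is separable as soon as two of its pairs are separable above complementary
measurable subsets of `X`. -/
theorem configSeparable_of_separated {B : Set (X × Z)} {n : ℕ} {S T : ℕ → Set (X × Z)} {i j : ℕ}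
    (hi : i < n) (hj : j < n) (hij : i ≠ j) {D : Set X} (hD : MeasurableSet D)
    (hSi : PairSeparable B (S i ∩ D ×ˢ univ) (T i))
    (hSj : PairSeparable B (S j ∩ Dᶜ ×ˢ univ) (T j)) : ConfigSeparable B n S T := by
  have h0 : ∀ k, PairSeparable B (S k ∩ ∅ ×ˢ univ) (T k) := fun k => by
    refine .of_subset_of_disjoint MeasurableSet.empty isClosed_univ ?_ (by simp)
    simpa using SigmaSeparable.empty B
  refine ⟨fun k => if k = i then D else if k = j then Dᶜ else ∅, fun k _ => ?_, fun k _ => ?_,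
    fun x => ?_⟩
  · dsimp only
    split_ifs
    exacts [hD, hD.compl, MeasurableSet.empty]
  · dsimp only
    split_ifs with h1 h2
    · subst h1; exact hSi
    · subst h2; exact hSj
    · exact h0 k
  · by_cases hx : x ∈ D
    · exact ⟨i, hi, by simpa using hx⟩
    · exact ⟨j, hj, by simpa [hij.symm] using hx⟩

theorem PairSeparable.of_disjoint_left {B S : Set (X × Z)} (T : Set (X × Z)) {D : Set X}
    (h : Disjoint S (D ×ˢ univ)) : PairSeparable B (S ∩ D ×ˢ univ) T := by
  refine .of_subset_of_disjoint MeasurableSet.empty isClosed_univ ?_ (by simp)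
  rw [h.inter_eq, empty_sdiff]
  exact SigmaSeparable.empty B

theorem PairSeparable.of_disjoint_right {B T : Set (X × Z)} (S : Set (X × Z)) {D : Set X}
    (hD : MeasurableSet D) (h : Disjoint T (D ×ˢ univ)) :
    PairSeparable B (S ∩ D ×ˢ univ) T := by
  refine .of_subset_of_disjoint hD isClosed_univ ?_ h.symm
  rw [sdiff_eq_empty.2 inter_subset_right]
  exact SigmaSeparable.empty B

end Separation

section Construction

theorem false_of_not_configSeparable_of_disjoint {X Z : Type*} [MeasurableSpace X]
    [TopologicalSpace Z] [SecondCountableTopology Z] {B : Set (X × Z)} {n : ℕ} {S T : ℕ → Set (X × Z)}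
    (h : ¬ ConfigSeparable B n S T) {i j : ℕ} (hi : i < n) (hj : j < n) (hij : i ≠ j) {D : Set X}
    (hD : MeasurableSet D) (hDi : Disjoint (S i) (D ×ˢ univ) ∨ Disjoint (T i) (D ×ˢ univ))
    (hDj : Disjoint (S j) (Dᶜ ×ˢ univ) ∨ Disjoint (T j) (Dᶜ ×ˢ univ)) : False :=
  h (configSeparable_of_separated hi hj hij hD
    (hDi.elim (PairSeparable.of_disjoint_left _) (PairSeparable.of_disjoint_right _ hD))
    (hDj.elim (PairSeparable.of_disjoint_left _) (PairSeparable.of_disjoint_right _ hD.compl)))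

theorem exists_iUnion_isClosed_dist_le (α : Type*) [PseudoMetricSpace α] [SeparableSpace α] {ε : ℝ}
    (hε : 0 < ε) : ∃ c : ℕ → Set α, (∀ n, IsClosed (c n)) ∧
      (∀ n, ∀ x ∈ c n, ∀ y ∈ c n, dist x y ≤ ε) ∧ ⋃ n, c n = univ := by
  rcases isEmpty_or_nonempty α with hα | hα
  · exact ⟨fun _ => ∅, fun _ => isClosed_empty, by simp, Subsingleton.elim _ _⟩
  · refine ⟨fun n => Metric.closedBall (denseSeq α n) (ε / 2), fun n => Metric.isClosed_closedBall,
      fun n x hx y hy => ?_, eq_univ_of_forall fun x => ?_⟩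
    · have := dist_triangle_right x y (denseSeq α n)
      rw [Metric.mem_closedBall] at hx hy
      linarith
    · obtain ⟨n, hn⟩ := (denseRange_denseSeq α).exists_dist_lt x (half_pos hε)
      exact mem_iUnion.2 ⟨n, hn.le⟩

theorem exists_mem_of_antitone_of_dist_le {α : Type*} [PseudoMetricSpace α] [CompleteSpace α]
    {s : ℕ → Set α} (hs : Antitone s) (hc : ∀ n, IsClosed (s n)) (hne : ∀ n, (s n).Nonempty)
    (hd : ∀ n, ∀ x ∈ s n, ∀ y ∈ s n, dist x y ≤ (1 / 2 : ℝ) ^ n) : ∃ x, ∀ n, x ∈ s n := by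
  choose p hp using hne
  have hcau : CauchySeq p := cauchySeq_of_le_geometric (1 / 2) 1 (by norm_num) fun n => by
    rw [one_mul]
    exact hd n _ (hp n) _ (hs (Nat.le_succ n) (hp (n + 1)))
  obtain ⟨x, hx⟩ := cauchySeq_tendsto_of_complete hcau
  exact ⟨x, fun n => (hc n).mem_of_tendsto hx
    ((eventually_ge_atTop n).mono fun m hm => hs hm (hp m))⟩

variable {α β X Z : Type*} [MeasurableSpace X] [MetricSpace Z] [SecondCountableTopology Z]
  [MetricSpace α] [MetricSpace β]

/-- The sets `M i`, `N i`, for `i ≤ n`, are closed and form a configuration whose images are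
inseparable. -/
def IsInseparableStage (f : α → X × Z) (g : β → X × Z) (n : ℕ) (M : ℕ → Set α) (N : ℕ → Set β) :
    Prop :=
  (∀ i, IsClosed (M i)) ∧ (∀ i, IsClosed (N i)) ∧
    ¬ ConfigSeparable (range g) (n + 1) (fun i => f '' M i) fun i => g '' N i

/-- The stage `(M', N')` refines the stage `(M, N)` by adding a small child of the node `p`. -/
def StageRefines (f : α → X × Z) (g : β → X × Z) (n p : ℕ) (M M' : ℕ → Set α)
    (N N' : ℕ → Set β) : Prop :=
  (∀ i ≤ n, M' i = M i) ∧ (∀ i ≤ n, N' i ⊆ N i) ∧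
    (∀ i, ∀ x ∈ N' i, ∀ y ∈ N' i, dist x y ≤ (1 / 2 : ℝ) ^ n) ∧ M' (n + 1) ⊆ M p ∧
    (∀ x ∈ M' (n + 1), ∀ y ∈ M' (n + 1), dist x y ≤ (1 / 2 : ℝ) ^ n) ∧
    ∀ x ∈ M' (n + 1), ∃ y ∈ N p, dist (f x).2 (g y).2 < (1 / 2 : ℝ) ^ n

variable [SeparableSpace α] [SeparableSpace β] [TopologicalSpace X]

theorem IsInseparableStage.exists_refines {f : α → X × Z} {g : β → X × Z} (hf : Continuous f)
    {n : ℕ} {M : ℕ → Set α} {N : ℕ → Set β} (h : IsInseparableStage f g n M N) {p : ℕ}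
    (hp : p ≤ n) :
    ∃ M' N', IsInseparableStage f g (n + 1) M' N' ∧ StageRefines f g n p M M' N N' := by
  obtain ⟨hM, hN, hcfg⟩ := h
  have hε : (0 : ℝ) < (1 / 2) ^ n := by positivity
  obtain ⟨c, hc, hcd, hcU⟩ := exists_iUnion_isClosed_dist_le α hε
  obtain ⟨d, hd, hdd, hdU⟩ := exists_iUnion_isClosed_dist_le β hε
  set U : Set Z := ⋃ y ∈ N p, Metric.ball (g y).2 ((1 / 2) ^ n) with hU
  have hUo : IsOpen U := isOpen_biUnion fun _ _ => Metric.isOpen_ball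
  obtain ⟨F, hF, -, hFU, -⟩ :=
    (hUo.preimage (continuous_snd.comp hf)).exists_iUnion_isClosed
  obtain ⟨k, hk⟩ := exists_not_configSeparable_add hcfg (Nat.lt_succ_of_le hp) hUo
    (by
      rintro _ ⟨y, hy, rfl⟩
      exact ⟨trivial, mem_iUnion₂.2 ⟨y, hy, Metric.mem_ball_self hε⟩⟩)
    (S' := fun k => f '' (M p ∩ F k.unpair.1 ∩ c k.unpair.2))
    (by
      rintro _ ⟨⟨x, hx, rfl⟩, -, hxU⟩
      have hxF : x ∈ ⋃ m, F m := by rw [hFU]; exact hxU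
      obtain ⟨m, hm⟩ := mem_iUnion.1 hxF
      obtain ⟨l, hl⟩ := mem_iUnion.1 (hcU ▸ mem_univ x : x ∈ ⋃ l, c l)
      exact mem_iUnion.2 ⟨Nat.pair m l, mem_image_of_mem f (by simpa using ⟨⟨hx, hm⟩, hl⟩)⟩)
  set M' := Function.update M (n + 1) (M p ∩ F k.unpair.1 ∩ c k.unpair.2) with hM'
  set N₀ := Function.update N (n + 1) univ with hN₀
  have hS : Function.update (fun i => f '' M i) (n + 1)
      (f '' (M p ∩ F k.unpair.1 ∩ c k.unpair.2)) = fun i => f '' M' i := by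
    ext1 i
    by_cases hi : i = n + 1
    · subst hi; simp [hM']
    · simp [hM', hi]
  have hT : Function.update (fun i => g '' N i) (n + 1) (range g) = fun i => g '' N₀ i := by
    ext1 i
    by_cases hi : i = n + 1
    · subst hi; simp [hN₀]
    · simp [hN₀, hi]
  rw [hS, hT] at hk
  obtain ⟨l, hl⟩ := exists_not_configSeparable_split hk (T' := fun i k => g '' (N₀ i ∩ d k))
    (fun i => by rw [← image_iUnion, ← inter_iUnion, hdU, inter_univ])
  have hM'n : M' (n + 1) = M p ∩ F k.unpair.1 ∩ c k.unpair.2 := Function.update_self ..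
  refine ⟨M', fun i => N₀ i ∩ d (l i), ⟨fun i => ?_, fun i => ?_, hl⟩, fun i hi => ?_,
    fun i hi => ?_, fun i x hx y hy => hdd _ x hx.2 y hy.2, ?_, ?_, ?_⟩
  · by_cases hi : i = n + 1
    · subst hi
      rw [hM'n]
      exact ((hM p).inter (hF _)).inter (hc _)
    · rw [hM', Function.update_of_ne hi]
      exact hM i
  · refine IsClosed.inter ?_ (hd _)
    by_cases hi : i = n + 1
    · subst hi; simp [hN₀]
    · rw [hN₀, Function.update_of_ne hi]
      exact hN i
  · rw [hM', Function.update_of_ne (Nat.lt_succ_of_le hi).ne]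
  · dsimp only
    rw [hN₀, Function.update_of_ne (Nat.lt_succ_of_le hi).ne]
    exact inter_subset_left
  · rw [hM'n]
    exact fun x hx => hx.1.1
  · rw [hM'n]
    exact fun x hx y hy => hcd _ x hx.2 y hy.2
  · rw [hM'n]
    intro x hx
    have hxU : x ∈ ⋃ m, F m := mem_iUnion.2 ⟨_, hx.1.2⟩
    rw [hFU] at hxU
    obtain ⟨y, hy, hxy⟩ := mem_iUnion₂.1 (show (f x).2 ∈ U from hxU)
    exact ⟨y, hy, hxy⟩

variable [CompleteSpace α] [CompleteSpace β] [T2Space X] [OpensMeasurableSpace X]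

/-- If the sections of an analytic set can be separated from those of another one by `F_σ` sets,
then this can be done in a Borel way. -/
theorem sigmaSeparable_range {f : α → X × Z} {g : β → X × Z} (hf : Continuous f)
    (hg : Continuous g)
    (h : ∀ x, ∃ K : ℕ → Set Z, (∀ n, IsClosed (K n)) ∧ (∀ n, ∀ z ∈ K n, (x, z) ∉ range g) ∧
      ∀ z, (x, z) ∈ range f → ∃ n, z ∈ K n) : SigmaSeparable (range g) (range f) := by
  by_contra hsep
  have h0 : IsInseparableStage f g 0 (fun _ => univ) (fun _ => univ) := by
    refine ⟨fun _ => isClosed_univ, fun _ => isClosed_univ, ?_⟩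
    rintro ⟨D, -, hD, hDU⟩
    simp only [image_univ] at hD
    refine hsep ((SigmaSeparable.of_pairSeparable (hD 0 zero_lt_one)).mono fun p hp => ?_)
    obtain ⟨i, hi, hpi⟩ := hDU p.1
    obtain rfl : i = 0 := by lia
    exact ⟨hp, hpi, trivial⟩
  choose! M' N' hst href using fun (n : ℕ) (M : ℕ → Set α) (N : ℕ → Set β)
    (h : IsInseparableStage f g n M N) => h.exists_refines hf (Nat.unpair_left_le n)
  let s : ℕ → (ℕ → Set α) × (ℕ → Set β) := fun n =>
    Nat.rec (fun _ => univ, fun _ => univ) (fun n s => (M' n s.1 s.2, N' n s.1 s.2)) n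
  have hs : ∀ n, IsInseparableStage f g n (s n).1 (s n).2 := fun n => by
    induction n with
    | zero => exact h0
    | succ n ih => exact hst n _ _ ih
  have hr : ∀ n, StageRefines f g n n.unpair.1 (s n).1 (s (n + 1)).1 (s n).2 (s (n + 1)).2 :=
    fun n => href n _ _ (hs n)
  generalize s = s at hs hr
  set M : ℕ → Set α := fun i => (s i).1 i with hM
  have hMs : ∀ i n, i ≤ n → (s n).1 i = M i := fun i n hin => by
    induction n, hin using Nat.le_induction with
    | base => rfl
    | succ n hin ih => rw [(hr n).1 i hin, ih]
  have hMc : ∀ i, IsClosed (M i) := fun i => (hs i).1 i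
  have hNanti : ∀ i m n, i ≤ m → m ≤ n → (s n).2 i ⊆ (s m).2 i := fun i m n him hmn => by
    induction n, hmn using Nat.le_induction with
    | base => exact Subset.rfl
    | succ n hin ih => exact ((hr n).2.1 i (him.trans hin)).trans ih
  have hMne : ∀ i, (M i).Nonempty := fun i => by
    by_contra hne
    rw [not_nonempty_iff_eq_empty, ← hMs i (i + 1) (Nat.le_succ i)] at hne
    exact false_of_not_configSeparable_of_disjoint (hs (i + 1)).2.2 (i := i) (j := i + 1) (by lia)
      (by lia) (by lia) MeasurableSet.univ (Or.inl (by simp [hne])) (Or.inl (by simp))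
  have hNne : ∀ i n, i ≤ n → ((s n).2 i).Nonempty := fun i n hin => by
    refine Nonempty.mono (hNanti i n (n + 1) hin (Nat.le_succ n)) ?_
    by_contra hne
    rw [not_nonempty_iff_eq_empty] at hne
    exact false_of_not_configSeparable_of_disjoint (hs (n + 1)).2.2 (i := i) (j := n + 1) (by lia)
      (by lia) (by lia) MeasurableSet.univ (Or.inr (by simp [hne])) (Or.inl (by simp))
  have hb : ∀ i, ∃ b, ∀ n, i ≤ n → b ∈ (s n).2 i := fun i => by
    obtain ⟨b, hb⟩ := exists_mem_of_antitone_of_dist_le (s := fun m => (s (i + m + 1)).2 i)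
      (fun m n hmn => hNanti i _ _ (by lia) (by lia)) (fun m => (hs _).2.1 i)
      (fun m => hNne i _ (by lia)) (fun m x hx y hy => ((hr (i + m)).2.2.1 i x hx y hy).trans
        (pow_le_pow_of_le_one (by norm_num) (by norm_num) (by lia)))
    exact ⟨b, fun n hn => hNanti i n (i + n + 1) hn (by lia) (hb n)⟩
  choose b hb using hb
  have hbnhds : ∀ i, ∀ V ∈ 𝓝 (g (b i)), ∀ᶠ n in atTop, g '' (s n).2 i ⊆ V := fun i V hV => by
    obtain ⟨ε, hε, hεV⟩ := Metric.mem_nhds_iff.1 (hg.continuousAt.preimage_mem_nhds hV)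
    obtain ⟨m, hm⟩ := exists_pow_lt_of_lt_one hε (by norm_num : (1 / 2 : ℝ) < 1)
    filter_upwards [eventually_ge_atTop (i + m + 1)] with n hn
    rintro _ ⟨y, hy, rfl⟩
    have hy' := hNanti i (i + m + 1) n (by lia) hn hy
    refine hεV (lt_of_le_of_lt ((hr (i + m)).2.2.1 i y hy' _ (hb i _ (by lia)))
      (lt_of_le_of_lt (pow_le_pow_of_le_one (by norm_num) (by norm_num) (by lia)) hm))
  have hb1 : ∀ i, (g (b i)).1 = (g (b 0)).1 := fun i => by
    by_contra hne
    obtain ⟨V, W, hV, hW, hiV, h0W, hVW⟩ := t2_separation hne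
    obtain ⟨n, h1, h2, h3⟩ := ((hbnhds i _ ((hV.preimage continuous_fst).mem_nhds hiV)).and
      ((hbnhds 0 _ ((hW.preimage continuous_fst).mem_nhds h0W)).and
        (eventually_ge_atTop i))).exists
    have hi : i ≠ 0 := by rintro rfl; exact hne rfl
    refine false_of_not_configSeparable_of_disjoint (hs n).2.2 (i := 0) (j := i) (by lia)
      (by lia) hi.symm hV.measurableSet (Or.inr ?_) (Or.inr ?_)
    · exact disjoint_left.2 fun p hp hpV => disjoint_left.1 hVW hpV.1 (h2 hp)
    · exact disjoint_left.2 fun p hp hpV => hpV.1 (h1 hp)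
  set x := (g (b 0)).1 with hx
  obtain ⟨K, hK, hKg, hKf⟩ := h x
  have hchild : ∀ i k, ∃ n, i ≤ n ∧ n.unpair.1 = i ∧ ∀ a ∈ M (n + 1), (f a).2 ∉ K k := fun i k => by
    have hbK : (g (b i)).2 ∉ K k := fun hc => hKg k _ hc ⟨b i, by rw [← hb1 i]⟩
    obtain ⟨ε, hε, hεK⟩ := Metric.mem_nhds_iff.1 ((hK k).isOpen_compl.mem_nhds hbK)
    obtain ⟨m, hm⟩ := exists_pow_lt_of_lt_one (half_pos hε) (by norm_num : (1 / 2 : ℝ) < 1)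
    obtain ⟨m', hm'⟩ := eventually_atTop.1 (hbnhds i (Prod.snd ⁻¹' Metric.ball (g (b i)).2 (ε / 2))
      (continuous_snd.continuousAt.preimage_mem_nhds (Metric.ball_mem_nhds _ (half_pos hε))))
    have hle := Nat.right_le_pair i (m + m')
    refine ⟨Nat.pair i (m + m'), Nat.left_le_pair _ _, by simp, fun a ha => ?_⟩
    obtain ⟨y, hy, hay⟩ := (hr (Nat.pair i (m + m'))).2.2.2.2.2 a ha
    rw [Nat.unpair_pair] at hy
    have hyb : dist (g y).2 (g (b i)).2 < ε / 2 := hm' _ (by lia) (mem_image_of_mem g hy)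
    have hay' : dist (f a).2 (g y).2 < ε / 2 := hay.trans (lt_of_le_of_lt
      (pow_le_pow_of_le_one (by norm_num) (by norm_num) (by lia)) hm)
    refine hεK (Metric.mem_ball.2 ?_)
    linarith [dist_triangle (f a).2 (g y).2 (g (b i)).2]
  choose c hc1 hc2 hc3 using hchild
  let j : ℕ → ℕ := fun n => Nat.rec 0 (fun k i => c i k + 1) n
  have hj : ∀ k, j (k + 1) = c (j k) k + 1 := fun k => rfl
  have hjk : ∀ k, k ≤ j k := fun k => by
    induction k with
    | zero => exact Nat.zero_le _
    | succ k ih => rw [hj]; have := hc1 (j k) k; lia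
  obtain ⟨a, ha⟩ := exists_mem_of_antitone_of_dist_le (s := fun k => M (j (k + 1)))
    (antitone_nat_of_succ_le fun k => by
      have := (hr (c (j (k + 1)) (k + 1))).2.2.2.1
      rwa [hc2, hMs _ _ (hc1 _ _)] at this)
    (fun k => hMc _) (fun k => hMne _)
    (fun k x hx y hy => ((hr (c (j k) k)).2.2.2.2.1 x hx y hy).trans
      (pow_le_pow_of_le_one (by norm_num) (by norm_num) ((hjk k).trans (hc1 _ _))))
  have hfa : (f a).1 = x := by
    by_contra hne
    obtain ⟨V, W, hV, hW, haV, h0W, hVW⟩ := t2_separation hne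
    obtain ⟨ε, hε, hεV⟩ := Metric.mem_nhds_iff.1
      (((hV.preimage continuous_fst).preimage hf).mem_nhds haV)
    obtain ⟨m, hm⟩ := exists_pow_lt_of_lt_one hε (by norm_num : (1 / 2 : ℝ) < 1)
    obtain ⟨n, h2, h3⟩ := ((hbnhds 0 _ ((hW.preimage continuous_fst).mem_nhds h0W)).and
        (eventually_ge_atTop (j (m + 1)))).exists
    refine false_of_not_configSeparable_of_disjoint (hs n).2.2 (i := 0) (j := j (m + 1)) (by lia)
      (by lia) (by rw [hj]; lia) hV.measurableSet (Or.inr ?_) (Or.inl ?_)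
    · exact disjoint_left.2 fun p hp hpV => disjoint_left.1 hVW hpV.1 (h2 hp)
    · rw [hMs _ _ h3]
      refine disjoint_left.2 ?_
      rintro _ ⟨y, hy, rfl⟩ hpV
      refine hpV.1 (hεV (lt_of_le_of_lt ((hr (c (j m) m)).2.2.2.2.1 y hy a (ha m))
        (lt_of_le_of_lt (pow_le_pow_of_le_one (by norm_num) (by norm_num) ?_) hm)))
      exact (hjk m).trans (hc1 _ _)
  obtain ⟨k, hk⟩ := hKf (f a).2 ⟨a, by rw [← hfa]⟩
  exact hc3 (j k) k a (ha k) hk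

end Construction

section Uniformization

open MeasureTheory

/-- **Saint Raymond's theorem** for `F_σ` sections: a Borel set with `F_σ` sections is a countable
union of Borel sets with closed sections. -/
theorem MeasurableSet.exists_iUnion_borelSectionClosed {X Z : Type*}
    [TopologicalSpace X] [PolishSpace X] [MeasurableSpace X] [BorelSpace X] [MetricSpace Z]
    [PolishSpace Z] [MeasurableSpace Z] [BorelSpace Z] {P : Set (X × Z)} (hP : MeasurableSet P)
    (hsec : ∀ x, ∃ K : ℕ → Set Z, (∀ n, IsClosed (K n)) ∧ {z | (x, z) ∈ P} = ⋃ n, K n) :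
    ∃ C : ℕ → Set (X × Z), (∀ n, BorelSectionClosed (C n)) ∧ P = ⋃ n, C n := by
  obtain ⟨α, _, _, f, hf, hfP⟩ := analyticSet_iff_exists_polishSpace_range.1 hP.analyticSet
  obtain ⟨β, _, _, g, hg, hgP⟩ := analyticSet_iff_exists_polishSpace_range.1 hP.compl.analyticSet
  let _ := upgradeIsCompletelyMetrizable α
  let _ := upgradeIsCompletelyMetrizable β
  obtain ⟨C, hC, hCd, hPC⟩ := sigmaSeparable_range hf hg fun x => by
    obtain ⟨K, hK, hKP⟩ := hsec x
    have hmem : ∀ z, (x, z) ∈ P ↔ ∃ n, z ∈ K n := fun z => by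
      rw [← mem_iUnion, ← hKP]; rfl
    rw [hfP, hgP]
    exact ⟨K, hK, fun n z hz hc => hc ((hmem z).2 ⟨n, hz⟩), fun z hz => (hmem z).1 hz⟩
  rw [hfP] at hPC
  refine ⟨C, hC, hPC.antisymm (iUnion_subset fun n => ?_)⟩
  have := hCd n
  rw [hgP] at this
  exact disjoint_compl_right_iff_subset.1 this

/-- Uniformization of a countable union of sectionwise closed subsets of `X × ℝ`, choosing the least
point of the first nonempty bounded piece. -/
theorem exists_measurableSet_uniformization_iUnion {X : Type*} [MeasurableSpace X]
    {C : ℕ → Set (X × ℝ)}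
    (hC : ∀ n, BorelSectionClosed (C n)) :
    ∃ Q ⊆ ⋃ n, C n, MeasurableSet Q ∧
      ∀ x, (∃ z, (x, z) ∈ ⋃ n, C n) → ∃! z, (x, z) ∈ Q := by
  let I : ℕ → Set ℝ := fun m => Icc (-(m.unpair.2 : ℝ)) m.unpair.2
  let R : ℕ → Set (X × ℝ) := fun m => C m.unpair.1 ∩ univ ×ˢ I m
  have hproj : ∀ m, MeasurableSet {x | ∃ z ∈ I m, (x, z) ∈ C m.unpair.1} := fun m =>
    (hC _).measurableSet_exists_mem isCompact_Icc
  have hproj' : ∀ m (q : ℚ), MeasurableSet {x | ∃ z ∈ I m ∩ Iic (q : ℝ), (x, z) ∈ C m.unpair.1} :=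
    fun m q => (hC _).measurableSet_exists_mem (isCompact_Icc.inter_right isClosed_Iic)
  refine ⟨⋃ m, (R m ∩ ⋂ k ∈ Iio m, Prod.fst ⁻¹' {x | ∃ z ∈ I k, (x, z) ∈ C k.unpair.1}ᶜ) ∩
    ⋂ q : ℚ, {p | (q : ℝ) < p.2}ᶜ ∪
      Prod.fst ⁻¹' {x | ∃ z ∈ I m ∩ Iic (q : ℝ), (x, z) ∈ C m.unpair.1}ᶜ, ?_, ?_, ?_⟩
  · exact iUnion_subset fun m p hp => mem_iUnion.2 ⟨_, hp.1.1.1⟩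
  · refine MeasurableSet.iUnion fun m => MeasurableSet.inter (MeasurableSet.inter ?_ ?_) ?_
    · exact (hC _).measurableSet.inter (MeasurableSet.univ.prod measurableSet_Icc)
    · exact MeasurableSet.biInter (to_countable _) fun k _ => measurable_fst (hproj k).compl
    · exact MeasurableSet.iInter fun q =>
        (measurableSet_lt measurable_const measurable_snd).compl.union
          (measurable_fst (hproj' m q).compl)
  · rintro x ⟨z, hz⟩
    have hex : ∃ m, ∃ z ∈ I m, (x, z) ∈ C m.unpair.1 := by
      obtain ⟨n, hn⟩ := mem_iUnion.1 hz
      obtain ⟨k, hk⟩ := exists_nat_ge |z|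
      exact ⟨Nat.pair n k, z, by simpa [I] using abs_le.1 hk, by simpa using hn⟩
    classical
    set m := Nat.find hex with hm
    have hmin : ∀ k < m, ¬ ∃ z ∈ I k, (x, z) ∈ C k.unpair.1 := fun k hk => Nat.find_min hex hk
    have hcpt : IsCompact (I m ∩ {z | (x, z) ∈ C m.unpair.1}) :=
      isCompact_Icc.inter_right ((hC _).isClosed_section x)
    obtain ⟨y, hy, hyl⟩ := hcpt.exists_isLeast (Nat.find_spec hex)
    refine ⟨y, mem_iUnion.2 ⟨m, ⟨⟨hy.2, trivial, hy.1⟩, ?_⟩, ?_⟩, fun y' hy' => ?_⟩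
    · exact mem_iInter₂.2 fun k hk => hmin k hk
    · refine mem_iInter.2 fun q => or_iff_not_imp_left.2 fun hq => ?_
      rintro ⟨w, ⟨hw, hwq⟩, hwC⟩
      have hqy : (q : ℝ) < y := not_not.1 hq
      exact absurd (hyl ⟨hw, hwC⟩) (not_le.2 (lt_of_le_of_lt hwq hqy))
    · obtain ⟨k, ⟨⟨hkC, -, hkI⟩, hkmin⟩, hkq⟩ := mem_iUnion.1 hy'
      have hkm : k = m := by
        rcases lt_trichotomy k m with h | h | h
        · exact absurd ⟨y', hkI, hkC⟩ (hmin k h)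
        · exact h
        · exact absurd ⟨y, hy⟩ (mem_iInter₂.1 hkmin m h)
      subst hkm
      refine le_antisymm (not_lt.1 fun hlt => ?_) (hyl ⟨hkI, hkC⟩)
      obtain ⟨q, hyq, hqy'⟩ := exists_rat_btwn hlt
      exact (mem_iInter.1 hkq q).elim (fun h => h hqy') fun h => h ⟨y, ⟨hy.1, hyq.le⟩, hy.2⟩

theorem exists_continuous_injective_real : ∃ φ : (ℕ → ℕ) → ℝ, Continuous φ ∧ φ.Injective := by
  let e : (ℕ → ℕ) → ℕ → Bool := fun y n => decide (y n.unpair.1 = n.unpair.2)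
  have he : Continuous e := continuous_pi fun n =>
    (continuous_of_discreteTopology (f := fun k : ℕ => decide (k = n.unpair.2))).comp
      (continuous_apply n.unpair.1)
  have hei : e.Injective := fun y y' h => by
    ext n
    have := congrFun h (Nat.pair n (y' n))
    simpa [e] using this
  refine ⟨fun y => Cardinal.cantorFunction (1 / 3) (e y), ?_,
    (Cardinal.cantorFunction_injective (by norm_num) (by norm_num)).comp hei⟩
  refine Continuous.comp (g := Cardinal.cantorFunction (1 / 3)) ?_ he
  refine continuous_tsum (u := fun n => (1 / 3 : ℝ) ^ n) (fun n => ?_)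
    (summable_geometric_of_lt_one (by norm_num) (by norm_num)) fun n b => ?_
  · exact (continuous_of_discreteTopology
      (f := fun b : Bool => cond b ((1 / 3 : ℝ) ^ n) 0)).comp (continuous_apply n)
  · rw [Real.norm_of_nonneg (Cardinal.cantorFunctionAux_nonneg (by norm_num))]
    cases h : b n
    · rw [Cardinal.cantorFunctionAux_false h]; positivity
    · rw [Cardinal.cantorFunctionAux_true h]

end Uniformization

theorem stmt_10 {X : Type*} [TopologicalSpace X] [PolishSpace X]
    [MeasurableSpace X] [BorelSpace X]
    (P : Set (X × (ℕ → ℕ))) (hP : MeasurableSet P)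
    (hsec : ∀ x : X, IsSigmaCompact {y : ℕ → ℕ | (x, y) ∈ P}) :
    ∃ Q : Set (X × (ℕ → ℕ)), Q ⊆ P ∧ MeasurableSet Q ∧
      ∀ x : X, {y : ℕ → ℕ | (x, y) ∈ P}.Nonempty → ∃! y : ℕ → ℕ, (x, y) ∈ Q := by
  obtain ⟨φ, hφ, hφi⟩ := exists_continuous_injective_real
  let Φ : X × (ℕ → ℕ) → X × ℝ := Prod.map id φ
  have hΦ : Measurable Φ := measurable_id.prodMap hφ.measurable
  have hΦi : Φ.Injective := Function.injective_id.prodMap hφi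
  obtain ⟨C, hC, hPC⟩ := (hP.image_of_measurable_injOn hΦ
    hΦi.injOn).exists_iUnion_borelSectionClosed fun x => by
      obtain ⟨K, hK, hKP⟩ := (hsec x).image hφ
      refine ⟨K, fun n => (hK n).isClosed, ?_⟩
      rw [hKP]
      ext z
      constructor
      · rintro ⟨⟨x', y⟩, hp, h⟩
        obtain ⟨rfl, rfl⟩ := Prod.mk.inj h
        exact ⟨y, hp, rfl⟩
      · rintro ⟨y, hy, rfl⟩
        exact ⟨(x, y), hy, rfl⟩
  obtain ⟨Q, hQC, hQ, hQu⟩ := exists_measurableSet_uniformization_iUnion hC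
  rw [← hPC] at hQC hQu
  refine ⟨Φ ⁻¹' Q, fun p hp => ?_, hΦ hQ, fun x ⟨y, hy⟩ => ?_⟩
  · obtain ⟨p', hp', h⟩ := hQC hp
    rwa [← hΦi h]
  · obtain ⟨z, hz, hzu⟩ := hQu x ⟨φ y, (x, y), hy, rfl⟩
    obtain ⟨⟨x', y'⟩, -, h⟩ := hQC hz
    obtain ⟨rfl, rfl⟩ := Prod.mk.inj h
    exact ⟨y', hz, fun w hw => hφi (hzu _ hw)⟩
end

section
/- Let X be a Polish space and P ⊆ X × ℕ^ℕ a Borel set all of whose vertical sections are σ-compact. Then P is a countable union of Borel sets P_n each of whose vertical sections is compact. -/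
open Set Filter Topology

namespace SaintRaymond

variable {X : Type*} [MeasurableSpace X] {P : Set (X × (ℕ → Bool))}

/-- `A` is covered by countably many measurable subsets of `P` with closed sections. -/
def Small (P A : Set (X × (ℕ → Bool))) : Prop :=
  ∃ C : ℕ → Set (X × (ℕ → Bool)), (∀ n, MeasurableSet (C n)) ∧
    (∀ n x, IsClosed {y | (x, y) ∈ C n}) ∧ (∀ n, C n ⊆ P) ∧ A ⊆ ⋃ n, C n

lemma Small.mono {A A' : Set (X × (ℕ → Bool))} (h : Small P A) (hA : A' ⊆ A) : Small P A' := by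
  obtain ⟨C, h1, h2, h3, h4⟩ := h
  exact ⟨C, h1, h2, h3, hA.trans h4⟩

lemma Small.iUnion {A : ℕ → Set (X × (ℕ → Bool))} (h : ∀ n, Small P (A n)) :
    Small P (⋃ n, A n) := by
  choose C h1 h2 h3 h4 using h
  refine ⟨fun k => C k.unpair.1 k.unpair.2, fun k => h1 _ _, fun k => h2 _ _, fun k => h3 _ _, ?_⟩
  refine iUnion_subset fun n p hp => ?_
  obtain ⟨m, hm⟩ := mem_iUnion.1 (h4 n hp)
  exact mem_iUnion.2 ⟨Nat.pair n m, by simpa using hm⟩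

lemma Small.of_closed {C : Set (X × (ℕ → Bool))} (hC : MeasurableSet C)
    (hc : ∀ x, IsClosed {y | (x, y) ∈ C}) (hP : C ⊆ P) : Small P C :=
  ⟨fun _ => C, fun _ => hC, fun _ => hc, fun _ => hP, fun _ h => mem_iUnion.2 ⟨0, h⟩⟩

lemma Small.empty : Small P ∅ :=
  Small.of_closed MeasurableSet.empty (fun _ => by simp) (empty_subset _)

/-- Over `D`, the set `A` is, up to a small set, contained in a measurable set with closed sections
that is disjoint from `B`. -/
def Sep (P A B : Set (X × (ℕ → Bool))) (D : Set X) : Prop :=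
  ∃ C : Set (X × (ℕ → Bool)), MeasurableSet C ∧ (∀ x, IsClosed {y | (x, y) ∈ C}) ∧
    (∀ p ∈ C, p.1 ∈ D → p ∉ B) ∧ Small P {p | p ∈ A ∧ p.1 ∈ D ∧ p ∉ C}

variable {A B : Set (X × (ℕ → Bool))}

lemma Sep.mono {D D' : Set X} (h : Sep P A B D) (hD : D' ⊆ D) : Sep P A B D' := by
  obtain ⟨C, h1, h2, h3, h4⟩ := h
  exact ⟨C, h1, h2, fun p hp hD' => h3 p hp (hD hD'),
    h4.mono fun p hp => ⟨hp.1, hD hp.2.1, hp.2.2⟩⟩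

lemma Sep.of_left {D : Set X} (h : ∀ p ∈ A, p.1 ∉ D) : Sep P A B D := by
  refine ⟨∅, MeasurableSet.empty, fun _ => by simp, fun p hp => hp.elim, ?_⟩
  exact Small.empty.mono fun p hp => (h p hp.1 hp.2.1).elim

lemma Sep.of_right {D : Set X} (h : ∀ p ∈ B, p.1 ∉ D) : Sep P A B D := by
  refine ⟨univ, MeasurableSet.univ, fun _ => by simp, fun p _ hD hB => h p hB hD, ?_⟩
  exact Small.empty.mono fun p hp => (hp.2.2 trivial).elim

lemma Sep.iUnion {D : ℕ → Set X} (hD : ∀ n, MeasurableSet (D n)) (h : ∀ n, Sep P A B (D n)) :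
    Sep P A B (⋃ n, D n) := by
  choose C h1 h2 h3 h4 using h
  have hd : ∀ n, MeasurableSet (disjointed D n) := fun n => MeasurableSet.disjointed hD n
  refine ⟨⋃ n, C n ∩ Prod.fst ⁻¹' disjointed D n,
    MeasurableSet.iUnion fun n => (h1 n).inter (measurable_fst (hd n)), fun x => ?_, ?_, ?_⟩
  · by_cases hx : ∃ n, x ∈ disjointed D n
    · obtain ⟨n, hn⟩ := hx
      convert h2 n x using 1
      ext y
      simp only [mem_ofPred_eq, mem_iUnion, mem_inter_iff, mem_preimage]
      refine ⟨fun ⟨m, hm, hmx⟩ => ?_, fun hy => ⟨n, hy, hn⟩⟩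
      have : m = n := by
        by_contra hne
        exact (Set.disjoint_left.1 (disjoint_disjointed D hne)) hmx hn
      exact this ▸ hm
    · convert isClosed_empty using 1
      ext y
      simp only [mem_ofPred_eq, mem_iUnion, mem_inter_iff, mem_preimage, mem_empty_iff_false,
        iff_false]
      rintro ⟨m, -, hm⟩
      exact hx ⟨m, hm⟩
  · intro p hp _
    obtain ⟨n, hn, hn'⟩ := mem_iUnion.1 hp
    exact h3 n p hn (disjointed_subset D n hn')
  · refine (Small.iUnion h4).mono fun p hp => ?_
    obtain ⟨hA, hpD, hC⟩ := hp
    rw [← iUnion_disjointed] at hpD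
    obtain ⟨n, hn⟩ := mem_iUnion.1 hpD
    exact mem_iUnion.2 ⟨n, hA, disjointed_subset D n hn, fun h => hC (mem_iUnion.2 ⟨n, h, hn⟩)⟩

lemma Sep.union {D D' : Set X} (hD : MeasurableSet D) (hD' : MeasurableSet D')
    (h : Sep P A B D) (h' : Sep P A B D') : Sep P A B (D ∪ D') := by
  have := Sep.iUnion (P := P) (A := A) (B := B) (D := fun n : ℕ => if n = 0 then D else D')
    (fun n => by split_ifs <;> assumption)
    (fun n => by split_ifs <;> assumption)
  refine this.mono ?_
  rintro x (hx | hx)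
  · exact mem_iUnion.2 ⟨0, by simpa using hx⟩
  · exact mem_iUnion.2 ⟨1, by simpa using hx⟩

lemma Sep.empty : Sep P A B (∅ : Set X) := Sep.of_left fun _ _ h => h.elim

lemma Sep.small {D : Set X} (hD : MeasurableSet D) (h : Sep P A Pᶜ D) :
    Small P {p | p ∈ A ∧ p.1 ∈ D} := by
  obtain ⟨C, h1, h2, h3, h4⟩ := h
  have hC : Small P (C ∩ Prod.fst ⁻¹' D) := by
    refine Small.of_closed (h1.inter (measurable_fst hD)) (fun x => ?_) fun p hp => ?_
    · by_cases hx : x ∈ D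
      · simpa [hx] using h2 x
      · simp [hx]
    · simpa using h3 p hp.1 hp.2
  refine (Small.iUnion (A := fun n : ℕ => if n = 0 then C ∩ Prod.fst ⁻¹' D else
    {p | p ∈ A ∧ p.1 ∈ D ∧ p ∉ C}) fun n => ?_).mono fun p hp => ?_
  · split_ifs <;> assumption
  · by_cases hpC : p ∈ C
    · exact mem_iUnion.2 ⟨0, by simpa using ⟨hpC, hp.2⟩⟩
    · exact mem_iUnion.2 ⟨1, hp.1, hp.2, hpC⟩

/-- A finite-information approximation to a tree of points: at each active node `v`, a set `R v` of
codes for points of `P` and a set `T v` of codes for points of its complement. -/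
structure Cond where
  act : Set (List ℕ)
  R : List ℕ → Set (ℕ → ℕ)
  T : List ℕ → Set (ℕ → ℕ)

variable {f g : (ℕ → ℕ) → X × (ℕ → Bool)}

/-- The separation property at the node `v` of a condition, over `D`. -/
def Cond.SepAt (f g : (ℕ → ℕ) → X × (ℕ → Bool)) (P : Set (X × (ℕ → Bool))) (p : Cond)
    (v : List ℕ) (D : Set X) : Prop :=
  Sep P (f '' p.R v) (g '' p.T v) D

/-- The base space is covered by measurable sets over each of which some active node separates. -/
def Cond.Good (f g : (ℕ → ℕ) → X × (ℕ → Bool)) (P : Set (X × (ℕ → Bool))) (p : Cond) : Prop :=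
  ∃ D : List ℕ → Set X, (∀ v, MeasurableSet (D v)) ∧ (∀ v ∈ p.act, p.SepAt f g P v (D v)) ∧
    ∀ x, ∃ v ∈ p.act, x ∈ D v

lemma Cond.Good.of_compl {p : Cond} {v w : List ℕ} (hv : v ∈ p.act) (hw : w ∈ p.act) {V : Set X}
    (hV : MeasurableSet V) (h1 : p.SepAt f g P v V) (h2 : p.SepAt f g P w Vᶜ) :
    p.Good f g P := by
  classical
  refine ⟨fun u => (if u = v then V else ∅) ∪ (if u = w then Vᶜ else ∅), fun u => ?_,
    fun u _ => ?_, fun x => ?_⟩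
  · refine MeasurableSet.union ?_ ?_ <;> split_ifs <;> simp [hV]
  · refine Sep.union ?_ ?_ ?_ ?_
    · split_ifs <;> simp [hV]
    · split_ifs <;> simp [hV]
    · split_ifs with h
      · exact h ▸ h1
      · exact Sep.empty
    · split_ifs with h
      · exact h ▸ h2
      · exact Sep.empty
  · by_cases hx : x ∈ V
    · exact ⟨v, hv, by simp [hx]⟩
    · exact ⟨w, hw, by simp [hx]⟩

lemma Cond.Good.of_refinements {p : Cond} {q : ℕ → Cond} {v w : List ℕ} (hv : v ∈ p.act)
    (hact : ∀ c, ∀ u ∈ (q c).act, u ≠ w → u ∈ p.act)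
    (hsame : ∀ c, ∀ u ∈ p.act, u ≠ w →
      u ∈ (q c).act ∧ (q c).R u = p.R u ∧ (q c).T u = p.T u)
    (hw : ∀ c, w ∈ (q c).act)
    (hsep : ∀ D : ℕ → Set X, (∀ c, MeasurableSet (D c)) →
      (∀ c, (q c).SepAt f g P w (D c)) → p.SepAt f g P v (⋂ c, D c))
    (hq : ∀ c, (q c).Good f g P) : p.Good f g P := by
  classical
  choose D h1 h2 h3 using hq
  refine ⟨fun u => (if u = w then ∅ else ⋃ c, D c u) ∪ (if u = v then ⋂ c, D c w else ∅),
    fun u => ?_, fun u hu => ?_, fun x => ?_⟩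
  · refine MeasurableSet.union ?_ ?_ <;> split_ifs
    · simp
    · exact MeasurableSet.iUnion fun c => h1 c u
    · exact MeasurableSet.iInter fun c => h1 c w
    · simp
  · refine Sep.union ?_ ?_ ?_ ?_
    · split_ifs
      · simp
      · exact MeasurableSet.iUnion fun c => h1 c u
    · split_ifs
      · exact MeasurableSet.iInter fun c => h1 c w
      · simp
    · split_ifs with h
      · exact Sep.empty
      · refine Sep.iUnion (fun c => h1 c u) fun c => ?_
        obtain ⟨ha, hR, hT⟩ := hsame c u hu h
        have := h2 c u ha
        rwa [Cond.SepAt, hR, hT] at this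
    · split_ifs with h
      · exact h ▸ hsep (fun c => D c w) (fun c => h1 c w) fun c => h2 c w (hw c)
      · exact Sep.empty
  · by_cases hx : ∀ c, x ∈ D c w
    · exact ⟨v, hv, Or.inr (by simpa using hx)⟩
    · push Not at hx
      obtain ⟨c, hc⟩ := hx
      obtain ⟨u, hu, hxu⟩ := h3 c x
      have huw : u ≠ w := fun h => hc (h ▸ hxu)
      exact ⟨u, hact c u hu huw, Or.inl (by simpa [huw] using ⟨c, hxu⟩)⟩

/-- Restrict the set `T v` to `Q`. -/
def Cond.refine (p : Cond) (v : List ℕ) (Q : Set (ℕ → ℕ)) : Cond where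
  act := p.act
  R := p.R
  T := Function.update p.T v (p.T v ∩ Q)

lemma Cond.Good.of_refine {p : Cond} {v : List ℕ} (hv : v ∈ p.act) {Q : ℕ → Set (ℕ → ℕ)}
    (hQ : ∀ β, ∃ c, β ∈ Q c) (h : ∀ c, (p.refine v (Q c)).Good f g P) : p.Good f g P := by
  refine Cond.Good.of_refinements (q := fun c => p.refine v (Q c)) (w := v) hv
    (fun c u hu _ => hu) (fun c u hu hne => ⟨hu, rfl, by simp [Cond.refine, hne]⟩)
    (fun c => hv) (fun D hD hs => ?_) h
  choose C h1 h2 h3 h4 using hs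
  refine ⟨⋂ c, C c, MeasurableSet.iInter h1, fun x => ?_, ?_, ?_⟩
  · have : {y | (x, y) ∈ ⋂ c, C c} = ⋂ c, {y | (x, y) ∈ C c} := by ext; simp
    rw [this]
    exact isClosed_iInter fun c => h2 c x
  · rintro p hp hpD ⟨β, hβ, rfl⟩
    obtain ⟨c, hc⟩ := hQ β
    refine h3 c _ (mem_iInter.1 hp c) (mem_iInter.1 hpD c) ⟨β, ?_, rfl⟩
    simpa [Cond.refine] using ⟨hβ, hc⟩
  · refine (Small.iUnion h4).mono fun p hp => ?_
    obtain ⟨hA, hpD, hC⟩ := hp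
    simp only [mem_iInter, not_forall] at hC
    obtain ⟨c, hc⟩ := hC
    exact mem_iUnion.2 ⟨c, hA, mem_iInter.1 hpD c, hc⟩

/-- Code for the restriction of a binary sequence to its first `m` terms. -/
def code (m : ℕ) (z : ℕ → Bool) : ℕ := Encodable.encode fun i : Fin m => z i

lemma continuous_code (m : ℕ) : Continuous (code m) :=
  (continuous_of_discreteTopology (f := fun s : Fin m → Bool => Encodable.encode s)).comp
    (continuous_pi fun i => continuous_apply (i : ℕ))

lemma code_eq_iff {m : ℕ} {z z' : ℕ → Bool} : code m z = code m z' ↔ ∀ i < m, z i = z' i := by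
  rw [code, code, Encodable.encode_inj, funext_iff]
  exact ⟨fun h i hi => h ⟨i, hi⟩, fun h i => h i i.2⟩

/-- Activate a child of `v`, with `R`-set the part of `R v` prescribed by `u` and `c`. -/
def Cond.child (f : (ℕ → ℕ) → X × (ℕ → Bool)) (p : Cond) (v : List ℕ) (m u c : ℕ) : Cond where
  act := insert (m :: v) p.act
  R := Function.update p.R (m :: v) {α | α ∈ p.R v ∧ code m (f α).2 = u ∧ α v.length = c}
  T := Function.update p.T (m :: v) univ

lemma Cond.Good.of_child (hg : range g = Pᶜ) {p : Cond} {v : List ℕ} (hv : v ∈ p.act) {m u : ℕ}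
    (hu : ∀ β ∈ p.T v, code m (g β).2 = u)
    (h : ∀ c, (p.child f v m u c).Good f g P) : p.Good f g P := by
  refine Cond.Good.of_refinements (q := p.child f v m u) (w := m :: v) hv
    (fun c u hu hne => hu.resolve_left hne)
    (fun c u hu hne => ⟨Or.inr hu, by simp [Cond.child, hne], by simp [Cond.child, hne]⟩)
    (fun c => Or.inl rfl) (fun D hD hs => ?_) h
  have hs' : ∀ c, Small P {q | q ∈ f '' (p.child f v m u c).R (m :: v) ∧ q.1 ∈ D c} := fun c => by
    refine Sep.small (hD c) ?_
    have := hs c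
    simpa [Cond.SepAt, Cond.child, hg] using this
  have hcl : IsClosed {y : ℕ → Bool | code m y ≠ u} :=
    (isClosed_discrete {n | n ≠ u}).preimage (continuous_code m)
  refine ⟨{q | code m q.2 ≠ u}, measurable_snd hcl.measurableSet, fun x => hcl, ?_, ?_⟩
  · rintro q hq - ⟨β, hβ, rfl⟩
    exact hq (hu β hβ)
  · refine (Small.iUnion hs').mono ?_
    rintro q ⟨⟨α, hα, rfl⟩, hqD, hq⟩
    refine mem_iUnion.2 ⟨α v.length, ⟨α, ?_, rfl⟩, mem_iInter.1 hqD _⟩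
    simp only [Cond.child, Function.update_self]
    exact ⟨hα, not_not.1 hq, rfl⟩


/-- Compatibility of the sets attached to a node with those attached to its children. -/
def Cond.Valid (f g : (ℕ → ℕ) → X × (ℕ → Bool)) (p : Cond) : Prop :=
  [] ∈ p.act ∧ ∀ m v, m :: v ∈ p.act → v ∈ p.act ∧ p.R (m :: v) ⊆ p.R v ∧
    (∃ c, ∀ α ∈ p.R (m :: v), α v.length = c) ∧
    ∃ u, (∀ α ∈ p.R (m :: v), code m (f α).2 = u) ∧ ∀ β ∈ p.T v, code m (g β).2 = u

lemma Cond.Valid.refine {X : Type*} {f g : (ℕ → ℕ) → X × (ℕ → Bool)}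
    {p : Cond} (hp : p.Valid f g) (w : List ℕ) (Q : Set (ℕ → ℕ)) :
    (p.refine w Q).Valid f g := by
  refine ⟨hp.1, fun m v hv => ?_⟩
  obtain ⟨h1, h2, h3, u, h4, h5⟩ := hp.2 m v hv
  refine ⟨h1, h2, h3, u, h4, fun β hβ => h5 β ?_⟩
  by_cases hvw : v = w
  · subst hvw
    simp only [Cond.refine, Function.update_self] at hβ
    exact hβ.1
  · simpa [Cond.refine, hvw] using hβ

lemma Cond.Valid.child {X : Type*} {f g : (ℕ → ℕ) → X × (ℕ → Bool)}
    {p : Cond} (hp : p.Valid f g) {w : List ℕ} {k u c : ℕ} (hw : w ∈ p.act)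
    (hk : k :: w ∉ p.act) (hu : ∀ β ∈ p.T w, code k (g β).2 = u) :
    (p.child f w k u c).Valid f g := by
  have hne : ∀ v ∈ p.act, v ≠ k :: w := fun v hv h => hk (h ▸ hv)
  refine ⟨Or.inr hp.1, fun m v hv => ?_⟩
  rcases hv with hv | hv
  · obtain ⟨rfl, rfl⟩ := List.cons.inj hv
    simp only [Cond.child, Function.update_self, Function.update_of_ne (hne v hw)]
    exact ⟨Or.inr hw, fun α hα => hα.1, ⟨c, fun α hα => hα.2.2⟩, u, fun α hα => hα.2.1, hu⟩
  · have hv' := (hp.2 m v hv).1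
    simp only [Cond.child, Function.update_of_ne (hne _ hv), Function.update_of_ne (hne _ hv')]
    exact ⟨Or.inr hv', (hp.2 m v hv).2⟩

instance : Preorder Cond where
  le p q := p.act ⊆ q.act ∧ ∀ v ∈ p.act, q.R v = p.R v ∧ q.T v ⊆ p.T v
  le_refl p := ⟨Subset.rfl, fun _ _ => ⟨rfl, Subset.rfl⟩⟩
  le_trans p q r hpq hqr := ⟨hpq.1.trans hqr.1, fun v hv =>
    ⟨(hqr.2 v (hpq.1 hv)).1.trans (hpq.2 v hv).1,
      (hqr.2 v (hpq.1 hv)).2.trans (hpq.2 v hv).2⟩⟩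

lemma Cond.le_refine (p : Cond) (w : List ℕ) (Q : Set (ℕ → ℕ)) : p ≤ p.refine w Q := by
  refine ⟨Subset.rfl, fun v _ => ⟨rfl, fun β hβ => ?_⟩⟩
  by_cases hvw : v = w
  · subst hvw
    simp only [Cond.refine, Function.update_self] at hβ
    exact hβ.1
  · simpa [Cond.refine, hvw] using hβ

lemma Cond.le_child {X : Type*} {f : (ℕ → ℕ) → X × (ℕ → Bool)}
    {p : Cond} {w : List ℕ} {k u c : ℕ} (hk : k :: w ∉ p.act) :
    p ≤ p.child f w k u c := by
  refine ⟨fun v hv => Or.inr hv, fun v hv => ?_⟩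
  have hne : v ≠ k :: w := fun h => hk (h ▸ hv)
  simp [Cond.child, hne]

/-- The valid conditions that do not separate. -/
abbrev Forcing (f g : (ℕ → ℕ) → X × (ℕ → Bool)) (P : Set (X × (ℕ → Bool))) : Type :=
  {p : Cond // p.Valid f g ∧ ¬ p.Good f g P}

lemma Forcing.exists_refine (p : Forcing f g P) {v : List ℕ} (hv : v ∈ p.1.act)
    {Q : ℕ → Set (ℕ → ℕ)} (hQ : ∀ β, ∃ c, β ∈ Q c) :
    ∃ q : Forcing f g P, p ≤ q ∧ v ∈ q.1.act ∧ ∃ c, q.1.T v ⊆ Q c := by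
  by_contra! hcon
  refine p.2.2 (Cond.Good.of_refine hv hQ fun c => ?_)
  by_contra hc
  refine hcon ⟨p.1.refine v (Q c), p.2.1.refine v _, hc⟩ (p.1.le_refine v _) hv c ?_
  simp [Cond.refine]

lemma Forcing.exists_active (hg : range g = Pᶜ) (v : List ℕ) :
    ∀ p : Forcing f g P, ∃ q : Forcing f g P, p ≤ q ∧ v ∈ q.1.act := by
  induction v with
  | nil => exact fun p => ⟨p, le_rfl, p.2.1.1⟩
  | cons m v ih =>
    intro p
    obtain ⟨q, hpq, hvq⟩ := ih p
    obtain ⟨r, hqr, hvr, u, hu⟩ := q.exists_refine hvq (Q := fun u => {β | code m (g β).2 = u})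
      fun β => ⟨_, rfl⟩
    by_cases hm : m :: v ∈ r.1.act
    · exact ⟨r, hpq.trans hqr, hm⟩
    by_contra! hcon
    refine r.2.2 (Cond.Good.of_child hg hvr hu fun c => ?_)
    by_contra hc
    exact hcon ⟨r.1.child f v m u c, r.2.1.child hvr hm hu, hc⟩
      ((hpq.trans hqr).trans (Cond.le_child hm)) (Or.inl rfl)

lemma Forcing.exists_generic (hg : range g = Pᶜ) (p : Forcing f g P) :
    ∃ r : ℕ → Forcing f g P, Monotone r ∧
      ∀ v k, ∃ n, v ∈ (r n).1.act ∧ ∃ c, ∀ β ∈ (r n).1.T v, β k = c := by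
  let 𝒟 : List ℕ × ℕ → Order.Cofinal (Forcing f g P) := fun i =>
    ⟨{q | i.1 ∈ q.1.act ∧ ∃ c, ∀ β ∈ q.1.T i.1, β i.2 = c}, fun q => by
      obtain ⟨r, hqr, hr⟩ := Forcing.exists_active hg i.1 q
      obtain ⟨s, hrs, hs, c, hc⟩ := r.exists_refine hr (Q := fun c => {β | β i.2 = c})
        fun β => ⟨_, rfl⟩
      exact ⟨s, ⟨hs, c, hc⟩, hqr.trans hrs⟩⟩
  exact ⟨Order.sequenceOfCofinals p 𝒟, Order.sequenceOfCofinals.monotone p 𝒟, fun v k =>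
    ⟨_, Order.sequenceOfCofinals.encode_mem p 𝒟 (v, k)⟩⟩

lemma Forcing.not_separated (p : Forcing f g P) {v w : List ℕ} (hv : v ∈ p.1.act)
    (hw : w ∈ p.1.act) {V : Set X} (hV : MeasurableSet V)
    (h1 : (∀ α ∈ p.1.R v, (f α).1 ∉ V) ∨ ∀ β ∈ p.1.T v, (g β).1 ∉ V)
    (h2 : (∀ α ∈ p.1.R w, (f α).1 ∈ V) ∨ ∀ β ∈ p.1.T w, (g β).1 ∈ V) : False := by
  refine p.2.2 (Cond.Good.of_compl hv hw hV ?_ ?_)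
  · rcases h1 with h | h
    · exact Sep.of_left (by rintro _ ⟨α, hα, rfl⟩; exact h α hα)
    · exact Sep.of_right (by rintro _ ⟨α, hα, rfl⟩; exact h α hα)
  · rcases h2 with h | h
    · exact Sep.of_left (by rintro _ ⟨α, hα, rfl⟩; exact not_not.2 (h α hα))
    · exact Sep.of_right (by rintro _ ⟨α, hα, rfl⟩; exact not_not.2 (h α hα))

lemma Forcing.nonempty (p : Forcing f g P) {v : List ℕ} (hv : v ∈ p.1.act) :
    (p.1.R v).Nonempty ∧ (p.1.T v).Nonempty := by
  constructor
  · by_contra! h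
    exact p.not_separated hv p.2.1.1 MeasurableSet.univ (Or.inl (by simp [h])) (by simp)
  · by_contra! h
    exact p.not_separated hv p.2.1.1 MeasurableSet.univ (Or.inr (by simp [h])) (by simp)

lemma exists_forall_lt_mem_of_isOpen {O : Set (ℕ → ℕ)} (hO : IsOpen O) {z : ℕ → ℕ} (hz : z ∈ O) :
    ∃ K, ∀ z' : ℕ → ℕ, (∀ k < K, z' k = z k) → z' ∈ O := by
  obtain ⟨_, ⟨y, n, rfl⟩, hzn, hn⟩ :=
    (PiNat.isTopologicalBasis_cylinders fun _ : ℕ => ℕ).exists_subset_of_mem_open hz hO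
  refine ⟨n, fun z' h => hn ?_⟩
  rw [← PiNat.mem_cylinder_iff_eq.1 hzn]
  exact h

lemma continuous_apply_res {E : Type*} [TopologicalSpace E] (c : List ℕ → E) (n : ℕ) :
    Continuous fun z : ℕ → ℕ => c (PiNat.res z n) := by
  refine IsLocallyConstant.continuous ((IsLocallyConstant.iff_exists_open _).2 fun z =>
    ⟨PiNat.cylinder z n, PiNat.isOpen_cylinder (fun _ : ℕ => ℕ) z n, PiNat.self_mem_cylinder z n,
      fun y hy => ?_⟩)
  rw [PiNat.cylinder_eq_res] at hy
  exact congrArg c hy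

/-- From a condition that does not separate, one obtains a continuous map of the Baire space into a
single section of `P`, and points of the complement to which the images of cylinders accumulate. -/
lemma Forcing.exists_scheme [TopologicalSpace X] [T2Space X] [OpensMeasurableSpace X]
    (hf : Continuous f) (hgc : Continuous g) (hg : range g = Pᶜ) (p : Forcing f g P) :
    ∃ (x : X) (Φ : (ℕ → ℕ) → ℕ → Bool) (b : List ℕ → ℕ → Bool), Continuous Φ ∧
      (∀ z, (x, Φ z) ∈ range f) ∧ (∀ v, (x, b v) ∈ range g) ∧
      ∀ z k, code (z k) (Φ z) = code (z k) (b (PiNat.res z k)) := by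
  obtain ⟨r, hr, hdec⟩ := Forcing.exists_generic hg p
  have hact : ∀ {v i j}, v ∈ (r i).1.act → i ≤ j → v ∈ (r j).1.act := fun hv hij =>
    (hr hij).1 hv
  have hT : ∀ {v i j}, v ∈ (r i).1.act → i ≤ j → (r j).1.T v ⊆ (r i).1.T v := fun hv hij =>
    ((hr hij).2 _ hv).2
  choose n hn β hβ using hdec
  have hnear : ∀ v K, ∃ N, ∀ i ≥ N, v ∈ (r i).1.act ∧ ∀ γ ∈ (r i).1.T v, ∀ k < K,
      γ k = β v k := by
    intro v K
    refine ⟨(Finset.range (K + 1)).sup (n v), fun i hi => ?_⟩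
    have hle : ∀ k < K + 1, n v k ≤ i := fun k hk =>
      (Finset.le_sup (f := n v) (Finset.mem_range.2 hk)).trans hi
    refine ⟨hact (hn v 0) (hle 0 (by omega)), fun γ hγ k hk => hβ v k γ ?_⟩
    exact hT (hn v k) (hle k (by omega)) hγ
  have hnear_open : ∀ v (O : Set (ℕ → ℕ)), IsOpen O → β v ∈ O →
      ∃ N, ∀ i ≥ N, v ∈ (r i).1.act ∧ (r i).1.T v ⊆ O := by
    intro v O hO hv
    obtain ⟨K, hK⟩ := exists_forall_lt_mem_of_isOpen hO hv
    obtain ⟨N, hN⟩ := hnear v K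
    exact ⟨N, fun i hi => ⟨(hN i hi).1, fun γ hγ => hK γ ((hN i hi).2 γ hγ)⟩⟩
  set R : List ℕ → Set (ℕ → ℕ) := fun v => (r (n v 0)).1.R v
  have hR : ∀ {v i}, v ∈ (r i).1.act → (r i).1.R v = R v := by
    intro v i hi
    rcases le_total i (n v 0) with h | h
    · exact (((hr h).2 v hi).1).symm
    · exact ((hr h).2 v (hn v 0)).1
  have hRne : ∀ v, (R v).Nonempty := fun v => ((r (n v 0)).nonempty (hn v 0)).1
  have hval : ∀ m v, ∃ c, R (m :: v) ⊆ R v ∧ (∀ α ∈ R (m :: v), α v.length = c) ∧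
      ∀ α ∈ R (m :: v), code m (f α).2 = code m (g (β v)).2 := by
    intro m v
    obtain ⟨h1, h2, ⟨c, h3⟩, u, h4, h5⟩ := (r (n (m :: v) 0)).2.1.2 m v (hn _ 0)
    rw [hR h1] at h2
    refine ⟨c, h2, h3, fun α hα => (h4 α hα).trans ?_⟩
    by_contra hne
    obtain ⟨N, hN⟩ := hnear_open v {γ | code m (g γ).2 ≠ u}
      ((isOpen_discrete {k | k ≠ u}).preimage
        ((continuous_code m).comp (continuous_snd.comp hgc))) (Ne.symm hne)
    obtain ⟨hN1, hN2⟩ := hN (max N (n (m :: v) 0)) (le_max_left _ _)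
    obtain ⟨γ, hγ⟩ := ((r (max N (n (m :: v) 0))).nonempty hN1).2
    exact hN2 hγ (h5 γ (hT h1 (le_max_right _ _) hγ))
  choose c hR1 hc hcode using hval
  set a : (ℕ → ℕ) → ℕ → ℕ := fun z k => c (z k) (PiNat.res z k)
  have ha_cont : Continuous a := by
    refine continuous_pi fun k => ?_
    exact (continuous_apply_res (fun v => c v.headI v.tail) (k + 1)).congr fun z => rfl
  have hRa : ∀ z K, ∀ α ∈ R (PiNat.res z K), ∀ k < K, α k = a z k := by
    intro z K
    induction K with
    | zero => intro _ _ k hk; omega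
    | succ K ih =>
      intro α hα k hk
      rw [PiNat.res_succ] at hα
      rcases Nat.lt_succ_iff_lt_or_eq.1 hk with hk | rfl
      · exact ih α (hR1 _ _ hα) k hk
      · simpa using hc _ _ α hα
  have hR_open : ∀ z (O : Set (ℕ → ℕ)), IsOpen O → a z ∈ O → ∃ K, R (PiNat.res z K) ⊆ O := by
    intro z O hO hz
    obtain ⟨K, hK⟩ := exists_forall_lt_mem_of_isOpen hO hz
    exact ⟨K, fun α hα => hK α (hRa z K α hα)⟩
  have hRanti : ∀ z, Antitone fun K => R (PiNat.res z K) := fun z =>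
    antitone_nat_of_succ_le fun K => hR1 _ _
  have hxT : ∀ v w, (g (β v)).1 = (g (β w)).1 := by
    intro v w
    by_contra hne
    obtain ⟨V, W, hV, hW, hvV, hwW, hVW⟩ := t2_separation hne
    obtain ⟨N, hN⟩ := hnear_open v _ (hV.preimage (continuous_fst.comp hgc)) hvV
    obtain ⟨N', hN'⟩ := hnear_open w _ (hW.preimage (continuous_fst.comp hgc)) hwW
    obtain ⟨h1, h2⟩ := hN (max N N') (le_max_left _ _)
    obtain ⟨h1', h2'⟩ := hN' (max N N') (le_max_right _ _)
    exact (r (max N N')).not_separated h1' h1 hV.measurableSet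
      (Or.inr fun γ hγ => Set.disjoint_right.1 hVW (h2' hγ)) (Or.inr fun γ hγ => h2 hγ)
  have hxR : ∀ z, (f (a z)).1 = (g (β [])).1 := by
    intro z
    by_contra hne
    obtain ⟨V, W, hV, hW, hvV, hwW, hVW⟩ := t2_separation hne
    obtain ⟨K, hK⟩ := hR_open z _ (hV.preimage (continuous_fst.comp hf)) hvV
    obtain ⟨N, hN⟩ := hnear_open [] _ (hW.preimage (continuous_fst.comp hgc)) hwW
    set M := max N (n (PiNat.res z K) 0)
    obtain ⟨h1, h2⟩ := hN M (le_max_left _ _)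
    have h1' : PiNat.res z K ∈ (r M).1.act := hact (hn _ 0) (le_max_right _ _)
    refine (r M).not_separated h1 h1' hV.measurableSet
      (Or.inr fun γ hγ => Set.disjoint_right.1 hVW (h2 hγ)) (Or.inl fun α hα => hK ?_)
    rwa [hR h1'] at hα
  refine ⟨(g (β [])).1, fun z => (f (a z)).2, fun v => (g (β v)).2,
    continuous_snd.comp (hf.comp ha_cont), fun z => ⟨a z, ?_⟩, fun v => ⟨β v, ?_⟩, fun z k => ?_⟩
  · rw [← hxR z]
  · rw [hxT [] v]
  · by_contra hne
    obtain ⟨K, hK⟩ := hR_open z {α | code (z k) (f α).2 ≠ code (z k) (g (β (PiNat.res z k))).2}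
      ((isOpen_discrete {j | j ≠ code (z k) (g (β (PiNat.res z k))).2}).preimage
        ((continuous_code (z k)).comp (continuous_snd.comp hf))) hne
    obtain ⟨α, hα⟩ := hRne (PiNat.res z (max K (k + 1)))
    refine hK (hRanti z (le_max_left _ _) hα) (hcode (z k) _ α ?_)
    exact hRanti z (le_max_right K (k + 1)) hα

/-- A scheme as in `Forcing.exists_scheme` shows that a section is not an `F_σ` set. -/
lemma false_of_scheme {S : Set (ℕ → Bool)} {K : ℕ → Set (ℕ → Bool)} (hK : ∀ n, IsClosed (K n))
    (hS : S = ⋃ n, K n) {Φ : (ℕ → ℕ) → ℕ → Bool} {b : List ℕ → ℕ → Bool} (hΦ : Continuous Φ)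
    (hΦS : ∀ z, Φ z ∈ S) (hb : ∀ v, b v ∉ S)
    (h : ∀ z k, code (z k) (Φ z) = code (z k) (b (PiNat.res z k))) : False := by
  obtain ⟨n, z, hz⟩ := nonempty_interior_of_iUnion_of_closed
    (f := fun n => Φ ⁻¹' K n) (fun n => (hK n).preimage hΦ) (by
      refine eq_univ_of_forall fun z => ?_
      have := hΦS z
      rw [hS] at this
      simpa using this)
  obtain ⟨k, hk⟩ := exists_forall_lt_mem_of_isOpen isOpen_interior hz
  let zs : ℕ → ℕ → ℕ := fun m j => if j < k then z j else m
  have hzs : ∀ m, PiNat.res (zs m) k = PiNat.res z k := fun m =>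
    PiNat.res_eq_res.2 fun {j} hj => if_pos hj
  have hmem : ∀ m, Φ (zs m) ∈ K n := fun m =>
    interior_subset (s := Φ ⁻¹' K n) (hk (zs m) fun j hj => if_pos hj)
  have hcode : ∀ m, code m (Φ (zs m)) = code m (b (PiNat.res z k)) := fun m => by
    have := h (zs m) k
    rw [hzs] at this
    simpa [zs] using this
  have hlim : Tendsto (fun m => Φ (zs m)) atTop (𝓝 (b (PiNat.res z k))) := by
    refine tendsto_pi_nhds.2 fun i => tendsto_const_nhds.congr' ?_
    filter_upwards [eventually_gt_atTop i] with m hm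
    exact (code_eq_iff.1 (hcode m) i hm).symm
  refine hb (PiNat.res z k) ?_
  rw [hS]
  exact mem_iUnion.2 ⟨n, (hK n).mem_of_tendsto hlim (Eventually.of_forall hmem)⟩

/-- **Saint Raymond's theorem** for `F_σ` sections in the Cantor space. -/
theorem small_of_isClosed_sections [TopologicalSpace X] [PolishSpace X] [BorelSpace X]
    (hP : MeasurableSet P) (K : X → ℕ → Set (ℕ → Bool)) (hK : ∀ x n, IsClosed (K x n))
    (hPK : ∀ x, {y | (x, y) ∈ P} = ⋃ n, K x n) : Small P P := by
  by_contra hsmall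
  have : PolishSpace Bool := inferInstance
  have hPa := hP.analyticSet
  have hPc := hP.compl.analyticSet
  rw [MeasureTheory.AnalyticSet] at hPa hPc
  rcases hPa with rfl | ⟨f, hf, hfP⟩
  · exact hsmall Small.empty
  rcases hPc with hPc | ⟨g, hg, hgP⟩
  · rw [compl_empty_iff] at hPc
    exact hsmall (Small.of_closed hP (fun x => by simp [hPc]) Subset.rfl)
  let p : Cond := ⟨{[]}, fun _ => univ, fun _ => univ⟩
  have hp : p.Valid f g := ⟨rfl, fun m v hv => by simp [p] at hv⟩
  have hpg : ¬ p.Good f g P := by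
    rintro ⟨D, h1, h2, h3⟩
    have := h2 [] rfl
    rw [Cond.SepAt, image_univ, image_univ, hfP, hgP] at this
    refine hsmall ((this.small (h1 [])).mono fun q hq => ⟨hq, ?_⟩)
    obtain ⟨v, hv, hvq⟩ := h3 q.1
    obtain rfl : v = [] := hv
    exact hvq
  obtain ⟨x, Φ, b, hΦ, hΦf, hb, h⟩ := Forcing.exists_scheme hf hg hgP
    (⟨p, hp, hpg⟩ : Forcing f g P)
  rw [hfP] at hΦf
  rw [hgP] at hb
  exact false_of_scheme (hK x) (hPK x) hΦ hΦf hb h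

/-- The standard embedding of the Baire space into the Cantor space. -/
def toCantor (y : ℕ → ℕ) (n : ℕ) : Bool := decide (y n.unpair.1 = n.unpair.2)

lemma toCantor_pair {y : ℕ → ℕ} {i j : ℕ} : toCantor y (Nat.pair i j) = true ↔ y i = j := by
  simp [toCantor]

lemma continuous_toCantor : Continuous toCantor :=
  continuous_pi fun n => (continuous_of_discreteTopology
    (f := fun k : ℕ => decide (k = n.unpair.2))).comp (continuous_apply n.unpair.1)

lemma injective_toCantor : Function.Injective toCantor := fun y y' h => by
  ext i
  have : toCantor y (Nat.pair i (y' i)) = true := by rw [h, toCantor_pair]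
  exact toCantor_pair.1 this

lemma isInducing_toCantor : IsInducing toCantor := by
  refine ⟨le_antisymm continuous_toCantor.le_induced ?_⟩
  refine le_iInf fun i => ?_
  rintro _ ⟨O, -, rfl⟩
  refine ⟨⋃ j ∈ O, {z : ℕ → Bool | z (Nat.pair i j) = true}, isOpen_biUnion fun j _ => ?_, ?_⟩
  · exact (isOpen_discrete {true}).preimage
      (continuous_apply (A := fun _ : ℕ => Bool) (Nat.pair i j))
  · ext y
    simp [toCantor_pair]

end SaintRaymond

open SaintRaymond

theorem stmt_11 {X : Type*} [TopologicalSpace X] [PolishSpace X]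
    [MeasurableSpace X] [BorelSpace X]
    (P : Set (X × (ℕ → ℕ))) (hP : MeasurableSet P)
    (hsec : ∀ x : X, IsSigmaCompact {y : ℕ → ℕ | (x, y) ∈ P}) :
    ∃ Pn : ℕ → Set (X × (ℕ → ℕ)),
      (∀ n, MeasurableSet (Pn n)) ∧
      (∀ n, ∀ x : X, IsCompact {y : ℕ → ℕ | (x, y) ∈ Pn n}) ∧
      P = ⋃ n, Pn n := by
  have hec : Continuous (Prod.map id toCantor : X × (ℕ → ℕ) → X × (ℕ → Bool)) :=
    continuous_id.prodMap continuous_toCantor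
  have hei : Function.Injective (Prod.map id toCantor : X × (ℕ → ℕ) → X × (ℕ → Bool)) :=
    Function.injective_id.prodMap injective_toCantor
  have hP' : MeasurableSet (Prod.map id toCantor '' P : Set (X × (ℕ → Bool))) :=
    hP.image_of_continuousOn_injOn hec.continuousOn hei.injOn
  have hmem : ∀ x z, (x, z) ∈ (Prod.map id toCantor '' P : Set (X × (ℕ → Bool))) ↔
      ∃ y, (x, y) ∈ P ∧ toCantor y = z := by
    intro x z
    constructor
    · rintro ⟨⟨x', y⟩, hy, h⟩
      obtain ⟨rfl, rfl⟩ := Prod.mk.inj h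
      exact ⟨y, hy, rfl⟩
    · rintro ⟨y, hy, rfl⟩
      exact ⟨(x, y), hy, rfl⟩
  choose K hK hKP using hsec
  obtain ⟨C, h1, h2, h3, h4⟩ := small_of_isClosed_sections hP' (fun x n => toCantor '' K x n)
    (fun x n => ((hK x n).image continuous_toCantor).isClosed) (fun x => by
      rw [← image_iUnion, hKP x]
      ext z
      exact hmem x z)
  refine ⟨fun n => Prod.map id toCantor ⁻¹' C n, fun n => hec.measurable (h1 n), fun n x => ?_, ?_⟩
  · refine isInducing_toCantor.isCompact_preimage' (h2 n x).isCompact fun z hz => ?_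
    obtain ⟨y, -, rfl⟩ := (hmem x z).1 (h3 n hz)
    exact ⟨y, rfl⟩
  · rw [← preimage_iUnion, ← Subset.antisymm h4 (iUnion_subset h3), preimage_image_eq _ hei]
end

section
/- (Burgess–Hillard) Let X be a Polish space and P ⊆ X × ℕ^ℕ an analytic set each of whose vertical sections P_x is contained in a σ-compact subset of ℕ^ℕ. Then there is a countable family of Borel sets P_n ⊆ X × ℕ^ℕ, each with all vertical sections compact, such that P ⊆ ⋃_n P_n. -/
open Set Topology MeasureTheory

namespace BurgessHillard

/-- The initial segment of length `n` of a sequence. -/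
def pre (y : ℕ → ℕ) (n : ℕ) : List ℕ := (List.range n).map y

/-- The sequences extending the finite sequence `s`. -/
def Cyl (s : List ℕ) : Set (ℕ → ℕ) := {y | pre y s.length = s}

/-- The sequences extending `s ++ [m]` for some `m ≥ M`. -/
def Tail (s : List ℕ) (M : ℕ) : Set (ℕ → ℕ) := {y | y ∈ Cyl s ∧ M ≤ y s.length}

@[simp] lemma length_pre (y : ℕ → ℕ) (n : ℕ) : (pre y n).length = n := by simp [pre]

lemma pre_succ (y : ℕ → ℕ) (n : ℕ) : pre y (n + 1) = pre y n ++ [y n] := by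
  simp [pre, List.range_succ]

lemma mem_cyl_pre (y : ℕ → ℕ) (n : ℕ) : y ∈ Cyl (pre y n) := by simp [Cyl]

lemma mem_cyl_nil (y : ℕ → ℕ) : y ∈ Cyl [] := by simp [Cyl, pre]

lemma mem_cyl_concat {y : ℕ → ℕ} {s : List ℕ} {m : ℕ} :
    y ∈ Cyl (s ++ [m]) ↔ y ∈ Cyl s ∧ y s.length = m := by
  simp only [Cyl, mem_ofPred_eq, List.length_append, List.length_singleton, pre_succ]
  constructor
  · intro h
    have h2 := List.append_inj' h rfl
    exact ⟨h2.1, by simpa using h2.2⟩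
  · rintro ⟨h, h'⟩
    rw [h, h']

lemma cyl_append_subset (s l : List ℕ) : Cyl (s ++ l) ⊆ Cyl s := by
  induction l using List.reverseRecOn with
  | nil => simp
  | append_singleton l a ih =>
    intro y hy
    rw [← List.append_assoc] at hy
    exact ih (mem_cyl_concat.1 hy).1

lemma isClopen_apply_eq (k m : ℕ) : IsClopen {y : ℕ → ℕ | y k = m} :=
  (isClopen_discrete ({m} : Set ℕ)).preimage (continuous_apply k)

lemma isClopen_cyl (s : List ℕ) : IsClopen (Cyl s) := by
  induction s using List.reverseRecOn with
  | nil =>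
    rw [show Cyl [] = univ from eq_univ_of_forall mem_cyl_nil]
    exact isClopen_univ
  | append_singleton l a ih =>
    rw [show Cyl (l ++ [a]) = Cyl l ∩ {y | y l.length = a} from
      Set.ext fun y => mem_cyl_concat]
    exact ih.inter (isClopen_apply_eq _ _)

lemma isClopen_tail (s : List ℕ) (M : ℕ) : IsClopen (Tail s M) :=
  (isClopen_cyl s).inter
    ((isClopen_discrete (Ici M)).preimage (continuous_apply s.length))

lemma cyl_pre_anti (z : ℕ → ℕ) {i j : ℕ} (h : i ≤ j) : Cyl (pre z j) ⊆ Cyl (pre z i) := by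
  induction j, h using Nat.le_induction with
  | base => exact subset_rfl
  | succ j _ ih =>
    rw [pre_succ]
    exact (cyl_append_subset _ _).trans ih

lemma apply_eq_of_mem_cyl_pre {z w : ℕ → ℕ} {j i : ℕ} (h : w ∈ Cyl (pre z j)) (hi : i < j) :
    w i = z i := by
  have h1 := cyl_pre_anti z (Nat.succ_le_of_lt hi) h
  rw [Nat.succ_eq_add_one, pre_succ, mem_cyl_concat] at h1
  simpa using h1.2

lemma exists_cyl_pre_subset {O : Set (ℕ → ℕ)} (hO : IsOpen O) {z : ℕ → ℕ} (hz : z ∈ O) :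
    ∃ j, Cyl (pre z j) ⊆ O := by
  by_contra! hcon
  have : ∀ j, ∃ w ∈ Cyl (pre z j), w ∉ O := fun j => Set.not_subset.1 (hcon j)
  choose w hw hwO using this
  have hlim : Filter.Tendsto w Filter.atTop (𝓝 z) := by
    rw [tendsto_pi_nhds]
    intro i
    refine tendsto_const_nhds.congr' ?_
    filter_upwards [Filter.eventually_gt_atTop i] with j hj
    exact (apply_eq_of_mem_cyl_pre (hw j) hj).symm
  obtain ⟨j, hj⟩ := (hlim.eventually (hO.mem_nhds hz)).exists
  exact hwO j hj

/-- A subset of the Baire space is compact if it is closed and finitely branching above `s`. -/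
lemma isCompact_of_finitely_branching {K : Set (ℕ → ℕ)} (hK : IsClosed K) (s : List ℕ)
    (hs : K ⊆ Cyl s) (g : List ℕ → ℕ)
    (hg : ∀ r, ∀ y ∈ K, y ∈ Cyl (s ++ r) → y (s ++ r).length < g r) : IsCompact K := by
  have hfin : ∀ k, ((fun y => pre y (s.length + k)) '' K).Finite := by
    intro k
    induction k with
    | zero =>
      refine (finite_singleton s).subset ?_
      rintro _ ⟨y, hy, rfl⟩
      exact hs hy
    | succ k ih =>
      refine (ih.biUnion fun t _ => (finite_Iio (g (t.drop s.length))).image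
        fun m => t ++ [m]).subset ?_
      rintro _ ⟨y, hy, rfl⟩
      refine mem_biUnion (mem_image_of_mem _ hy) ⟨y (s.length + k), ?_, (pre_succ _ _).symm⟩
      have htake : (pre y (s.length + k)).take s.length = s := by
        have h1 : pre y s.length = s := hs hy
        conv_rhs => rw [← h1]
        simp [pre, ← List.map_take, List.take_range]
      have happ : s ++ (pre y (s.length + k)).drop s.length = pre y (s.length + k) := by
        conv_lhs => rw [← htake]
        simp
      have h2 := hg ((pre y (s.length + k)).drop s.length) y hy
      rw [happ] at h2
      simpa using h2 (mem_cyl_pre _ _)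
  have hval : ∀ n, ((fun y : ℕ → ℕ => y n) '' K).Finite := by
    intro n
    refine ((hfin (n + 1)).image fun l => l.getD n 0).subset ?_
    rintro _ ⟨y, hy, rfl⟩
    refine ⟨_, mem_image_of_mem _ hy, ?_⟩
    have : n < s.length + (n + 1) := by omega
    simp [pre, List.getElem?_range this]
  exact (isCompact_univ_pi fun n => (hval n).isCompact).of_isClosed_subset hK
    fun y hy n _ => mem_image_of_mem _ hy

section Small

variable {X : Type*} [MeasurableSpace X]

/-- Sets covered by countably many Borel sets with compact sections. -/
def Small (A : Set (X × (ℕ → ℕ))) : Prop :=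
  ∃ C : Set (Set (X × (ℕ → ℕ))), C.Countable ∧
    (∀ K ∈ C, MeasurableSet K ∧ ∀ x, IsCompact {y | (x, y) ∈ K}) ∧ A ⊆ ⋃₀ C

lemma Small.mono {A A' : Set (X × (ℕ → ℕ))} (h : Small A') (hA : A ⊆ A') : Small A := by
  obtain ⟨C, h1, h2, h3⟩ := h
  exact ⟨C, h1, h2, hA.trans h3⟩

lemma Small.iUnion {κ : Type*} [Countable κ] {A : κ → Set (X × (ℕ → ℕ))}
    (h : ∀ k, Small (A k)) : Small (⋃ k, A k) := by
  choose C h1 h2 h3 using h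
  refine ⟨⋃ k, C k, countable_iUnion h1, ?_, ?_⟩
  · intro K hK
    obtain ⟨k, hk⟩ := mem_iUnion.1 hK
    exact h2 k K hk
  · refine iUnion_subset fun k => (h3 k).trans ?_
    exact sUnion_subset_sUnion (subset_iUnion C k)

lemma Small.union {A A' : Set (X × (ℕ → ℕ))} (h : Small A) (h' : Small A') :
    Small (A ∪ A') := by
  rw [union_eq_iUnion]
  exact Small.iUnion fun b => by cases b <;> assumption

lemma small_of_measurableSet {K : Set (X × (ℕ → ℕ))} (h : MeasurableSet K)
    (h' : ∀ x, IsCompact {y | (x, y) ∈ K}) : Small K :=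
  ⟨{K}, countable_singleton K, by rintro _ rfl; exact ⟨h, h'⟩, by simp⟩

lemma small_empty : Small (∅ : Set (X × (ℕ → ℕ))) :=
  ⟨∅, countable_empty, by simp, by simp⟩

lemma Small.exists_seq {A : Set (X × (ℕ → ℕ))} (h : Small A) :
    ∃ Pn : ℕ → Set (X × (ℕ → ℕ)), (∀ n, MeasurableSet (Pn n)) ∧
      (∀ n, ∀ x : X, IsCompact {y : ℕ → ℕ | (x, y) ∈ Pn n}) ∧ A ⊆ ⋃ n, Pn n := by
  obtain ⟨C, h1, h2, h3⟩ := h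
  obtain ⟨f, hf⟩ := (h1.insert ∅).exists_eq_range (insert_nonempty _ _)
  have h4 : ∀ n, MeasurableSet (f n) ∧ ∀ x, IsCompact {y | (x, y) ∈ f n} := by
    intro n
    have : f n ∈ insert ∅ C := hf ▸ mem_range_self n
    rcases this with h | h
    · rw [h]; simp
    · exact h2 _ h
  refine ⟨f, fun n => (h4 n).1, fun n => (h4 n).2, h3.trans ?_⟩
  rw [← sUnion_range, ← hf]
  exact sUnion_subset_sUnion (subset_insert _ _)

variable {ι : Type*}

/-- The base space splits into Borel sets `B i`, `i ∈ S`, such that each `A i` is small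
over `B i`. -/
def Good (A : ι → Set (X × (ℕ → ℕ))) (S : Set ι) : Prop :=
  ∃ B : ι → Set X, (∀ i, MeasurableSet (B i)) ∧ (∀ x, ∃ i ∈ S, x ∈ B i) ∧
    ∀ i ∈ S, Small (A i ∩ Prod.fst ⁻¹' B i)

variable {A : ι → Set (X × (ℕ → ℕ))} {S : Set ι}

lemma Good.mono {S' : Set ι} (h : Good A S) (hS : S ⊆ S') : Good A S' := by
  classical
  obtain ⟨B, h1, h2, h3⟩ := h
  refine ⟨fun i => if i ∈ S then B i else ∅, ?_, ?_, ?_⟩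
  · intro i
    dsimp only
    split_ifs
    · exact h1 i
    · exact MeasurableSet.empty
  · intro x
    obtain ⟨i, hi, hx⟩ := h2 x
    exact ⟨i, hS hi, by simpa [hi] using hx⟩
  · intro i _
    by_cases hi : i ∈ S
    · simpa [hi] using h3 i hi
    · simpa [hi] using small_empty

lemma good_of_small {i : ι} (hi : i ∈ S) (h : Small (A i)) : Good A S := by
  refine Good.mono (S := {i}) ?_ (by simpa using hi)
  exact ⟨fun _ => univ, by simp, by simp, by simpa using h⟩

/-- Reassembling countably many good families. -/
lemma Good.of_forall {κ : Type*} [Countable κ] {i : ι} (hi : i ∈ S) (O : κ → Set ι)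
    (B : κ → ι → Set X) (hB : ∀ k j, MeasurableSet (B k j))
    (hcov : ∀ k x, ∃ j ∈ S ∪ O k, x ∈ B k j)
    (hsm : ∀ k, ∀ j ∈ S ∪ O k, Small (A j ∩ Prod.fst ⁻¹' B k j))
    (E : Set X) (hE : MeasurableSet E) (hEsub : ∀ x, (∀ k, ∃ j ∈ O k, x ∈ B k j) → x ∈ E)
    (hEsm : Small (A i ∩ Prod.fst ⁻¹' E)) : Good A S := by
  classical
  refine ⟨fun j => (⋃ k, B k j) ∪ if j = i then E else ∅, ?_, ?_, ?_⟩
  · intro j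
    refine (MeasurableSet.iUnion fun k => hB k j).union ?_
    split_ifs
    · exact hE
    · exact MeasurableSet.empty
  · intro x
    by_cases hx : ∃ k, ∃ j ∈ S, x ∈ B k j
    · obtain ⟨k, j, hj, hx⟩ := hx
      exact ⟨j, hj, Or.inl (mem_iUnion.2 ⟨k, hx⟩)⟩
    · refine ⟨i, hi, Or.inr ?_⟩
      simp only [if_true]
      refine hEsub x fun k => ?_
      obtain ⟨j, hj, hxj⟩ := hcov k x
      rcases hj with hj | hj
      · exact absurd ⟨k, j, hj, hxj⟩ hx
      · exact ⟨j, hj, hxj⟩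
  · intro j hj
    have h1 : Small (A j ∩ Prod.fst ⁻¹' ⋃ k, B k j) := by
      rw [preimage_iUnion, inter_iUnion]
      exact Small.iUnion fun k => hsm k j (Or.inl hj)
    by_cases hji : j = i
    · subst hji
      simpa [inter_union_distrib_left] using h1.union hEsm
    · simpa [hji] using h1

lemma exists_insert_not_good {κ : Type*} [Countable κ] (hS : ¬ Good A S) {i : ι} (hi : i ∈ S)
    (c : κ → ι) (hc : A i ⊆ ⋃ k, A (c k)) : ∃ k, ¬ Good A (S ∪ {c k}) := by
  by_contra! hcon
  choose B h1 h2 h3 using hcon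
  refine hS (Good.of_forall hi (fun k => {c k}) B h1 h2 h3 (⋂ k, B k (c k))
    (MeasurableSet.iInter fun k => h1 k _) ?_ ?_)
  · intro x hx
    exact mem_iInter.2 fun k => by simpa using hx k
  · refine (Small.iUnion fun k => h3 k (c k) (Or.inr rfl)).mono ?_
    rintro p ⟨hp, hpE⟩
    obtain ⟨k, hk⟩ := mem_iUnion.1 (hc hp)
    exact mem_iUnion.2 ⟨k, hk, mem_iInter.1 hpE k⟩

lemma exists_tails_not_good (hS : ¬ Good A S) {i : ι} (hi : i ∈ S) (s : List ℕ)
    (hs : A i ⊆ Prod.snd ⁻¹' Cyl s) (c : List ℕ → ℕ → ι)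
    (hc : ∀ r M, A i ∩ Prod.snd ⁻¹' Tail (s ++ r) M ⊆ A (c r M)) :
    ∃ r, ¬ Good A (S ∪ range (c r)) := by
  by_contra! hcon
  choose B h1 h2 h3 using hcon
  have hEm : MeasurableSet (⋂ r, ⋃ M, B r (c r M)) :=
    MeasurableSet.iInter fun r => MeasurableSet.iUnion fun M => h1 r _
  refine hS (Good.of_forall hi (fun r => range (c r)) B h1 h2 h3 (⋂ r, ⋃ M, B r (c r M))
    hEm ?_ ?_)
  · intro x hx
    exact mem_iInter.2 fun r => by simpa using hx r
  have hK : Small (((⋂ r, ⋃ M, B r (c r M)) ×ˢ Cyl s) \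
      ⋃ r, ⋃ M, B r (c r M) ×ˢ Tail (s ++ r) M) := by
    apply small_of_measurableSet
    · refine (hEm.prod (isClopen_cyl s).isOpen.measurableSet).diff ?_
      exact MeasurableSet.iUnion fun r => MeasurableSet.iUnion fun M =>
        (h1 r _).prod (isClopen_tail _ _).isOpen.measurableSet
    · intro x
      by_cases hx : x ∈ ⋂ r, ⋃ M, B r (c r M)
      · have hx' : ∀ r, ∃ M, x ∈ B r (c r M) := by simpa using hx
        choose g hg using hx'
        have heq : {y | (x, y) ∈ ((⋂ r, ⋃ M, B r (c r M)) ×ˢ Cyl s) \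
            ⋃ r, ⋃ M, B r (c r M) ×ˢ Tail (s ++ r) M} =
            Cyl s ∩ ⋂ r, ⋂ M, ⋂ (_ : x ∈ B r (c r M)), (Tail (s ++ r) M)ᶜ := by
          ext y
          simp only [mem_ofPred_eq, mem_sdiff, mem_prod, hx, true_and, mem_iUnion, not_exists,
            not_and, mem_inter_iff, mem_iInter, mem_compl_iff]
        rw [heq]
        refine isCompact_of_finitely_branching ?_ s inter_subset_left g ?_
        · refine (isClopen_cyl s).isClosed.inter ?_
          exact isClosed_iInter fun r => isClosed_iInter fun M => isClosed_iInter fun _ =>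
            (isClopen_tail _ _).compl.isClosed
        · rintro r y ⟨_, hy⟩ hyr
          simp only [mem_iInter] at hy
          by_contra hlt
          exact hy r (g r) (hg r) ⟨hyr, not_lt.1 hlt⟩
      · convert isCompact_empty
        ext y
        simp only [mem_ofPred_eq, mem_sdiff, mem_prod, hx, false_and, mem_empty_iff_false]
  have hU : Small (⋃ p : List ℕ × ℕ, A (c p.1 p.2) ∩ Prod.fst ⁻¹' B p.1 (c p.1 p.2)) :=
    Small.iUnion fun p => h3 p.1 _ (Or.inr (mem_range_self _))
  refine (hU.union hK).mono ?_
  rintro ⟨x, y⟩ ⟨hp, hpE⟩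
  by_cases h : ∃ r M, x ∈ B r (c r M) ∧ y ∈ Tail (s ++ r) M
  · obtain ⟨r, M, hxB, hy⟩ := h
    exact Or.inl (mem_iUnion.2 ⟨(r, M), hc r M ⟨hp, hy⟩, hxB⟩)
  · refine Or.inr ⟨⟨hpE, hs hp⟩, ?_⟩
    simpa using h

end Small

/-- Closing off a family under countably many tasks, keeping a property of its stages. -/
lemma exists_saturated_seq {ι : Type*} [Countable ι] (Bad : Set ι → Prop)
    (R : ι → Set ι → Prop)
    (step : ∀ S, Bad S → ∀ i ∈ S, ∃ O, R i O ∧ Bad (S ∪ O)) (S₀ : Set ι) (h₀ : Bad S₀) :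
    ∃ S : ℕ → Set ι, Monotone S ∧ S 0 = S₀ ∧ (∀ k, Bad (S k)) ∧
      ∀ k, ∀ i ∈ S k, ∃ O, R i O ∧ ∃ k', O ⊆ S k' := by
  have step' : ∀ (j : ι) (S : {S // Bad S}), ∃ S' : {S // Bad S}, S.1 ⊆ S'.1 ∧
      (j ∈ S.1 → ∃ O, R j O ∧ O ⊆ S'.1) := by
    rintro j ⟨S, hS⟩
    by_cases hj : j ∈ S
    · obtain ⟨O, hO, hb⟩ := step S hS j hj
      exact ⟨⟨S ∪ O, hb⟩, subset_union_left, fun _ => ⟨O, hO, subset_union_right⟩⟩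
    · exact ⟨⟨S, hS⟩, subset_rfl, fun h => absurd h hj⟩
  choose next hn1 hn2 using step'
  rcases isEmpty_or_nonempty ι with hι | hι
  · exact ⟨fun _ => S₀, monotone_const, rfl, fun _ => h₀, fun _ i => isEmptyElim i⟩
  obtain ⟨e, he⟩ := exists_surjective_nat ι
  let T : ℕ → {S // Bad S} := fun k =>
    Nat.rec ⟨S₀, h₀⟩ (fun k S => next (e k.unpair.1) S) k
  have hT : ∀ k, T (k + 1) = next (e k.unpair.1) (T k) := fun _ => rfl
  have hmono : Monotone fun k => (T k).1 := monotone_nat_of_le_succ fun k => hn1 _ _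
  refine ⟨fun k => (T k).1, hmono, rfl, fun k => (T k).2, ?_⟩
  intro k i hi
  obtain ⟨a, rfl⟩ := he i
  have h1 : e a ∈ (T (Nat.pair a k)).1 := hmono (Nat.right_le_pair a k) hi
  have h2 := hn2 (e (Nat.pair a k).unpair.1) (T (Nat.pair a k))
  rw [← hT] at h2
  simp only [Nat.unpair_pair] at h2
  obtain ⟨O, hO, hsub⟩ := h2 h1
  exact ⟨O, hO, Nat.pair a k + 1, hsub⟩

/-- The pieces of the range of `F` given by restricting the parameter to `Cyl t` and the second
coordinate to `Tail s M`. -/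
def piece {X : Type*} (F : (ℕ → ℕ) → X × (ℕ → ℕ)) (i : List ℕ × List ℕ × ℕ) :
    Set (X × (ℕ → ℕ)) :=
  F '' Cyl i.1 ∩ Prod.snd ⁻¹' Tail i.2.1 i.2.2

section Branch

variable {X : Type*} [MeasurableSpace X] {F : (ℕ → ℕ) → X × (ℕ → ℕ)}

lemma exists_tails_piece_not_good {S : Set (List ℕ × List ℕ × ℕ)} (hS : ¬ Good (piece F) S)
    {t s : List ℕ} {M : ℕ} (hi : (t, s, M) ∈ S) :
    ∃ r, ¬ Good (piece F) (S ∪ range fun M' => (t, s ++ r, M')) := by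
  refine exists_tails_not_good hS hi s ?_ (fun r M' => (t, s ++ r, M')) ?_
  · exact fun p hp => hp.2.1
  · exact fun r M' p hp => ⟨hp.1.1, hp.2⟩

lemma exists_step_not_good {S : Set (List ℕ × List ℕ × ℕ)} (hS : ¬ Good (piece F) S)
    {t s : List ℕ} {M : ℕ} (hi : (t, s, M) ∈ S) :
    ∃ n m r, M ≤ m ∧
      ¬ Good (piece F) (S ∪ range fun M' => (t ++ [n], s ++ [m] ++ r, M')) := by
  obtain ⟨⟨n, m⟩, h⟩ := exists_insert_not_good hS hi
    (fun k : ℕ × ℕ => (t ++ [k.1], s ++ [M + k.2], 0)) (by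
      rintro _ ⟨⟨z, hz, rfl⟩, hy, hM⟩
      obtain ⟨d, hd⟩ := Nat.exists_eq_add_of_le hM
      refine mem_iUnion.2 ⟨(z t.length, d), ⟨z, ?_, rfl⟩, ?_, Nat.zero_le _⟩
      · exact mem_cyl_concat.2 ⟨hz, rfl⟩
      · exact mem_cyl_concat.2 ⟨hy, hd⟩)
  obtain ⟨r, hr⟩ := exists_tails_piece_not_good h (Or.inr rfl)
  refine ⟨n, M + m, r, Nat.le_add_right _ _, fun hg => hr (hg.mono ?_)⟩
  exact union_subset_union_left _ subset_union_left

/-- If the range of a continuous map is not small, some section is not contained in a countable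
union of sets bounded by the sequences `g j`. -/
lemma exists_section_unbounded [TopologicalSpace X] [T2Space X] [OpensMeasurableSpace X]
    (hF : Continuous F) (h : ¬ Small (range F)) :
    ∃ x, ∀ g : ℕ → ℕ → ℕ, ∃ y, (x, y) ∈ range F ∧ ∀ j, ∃ n, g j n < y n := by
  have hbad : ¬ Good (piece F) {([], [], 0)} := by
    rintro ⟨B, -, h2, h3⟩
    refine h ((h3 _ rfl).mono ?_)
    rintro _ ⟨z, rfl⟩
    refine ⟨⟨⟨z, mem_cyl_nil z, rfl⟩, mem_cyl_nil _, Nat.zero_le _⟩, ?_⟩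
    simpa using h2 (F z).1
  obtain ⟨r₀, hr₀⟩ := exists_tails_piece_not_good hbad rfl
  obtain ⟨S, hSmono, hS0, hSbad, hSsat⟩ := exists_saturated_seq
    (fun S => ¬ Good (piece F) S)
    (fun i O => ∃ n m r, i.2.2 ≤ m ∧ O = range fun M' => (i.1 ++ [n], i.2.1 ++ [m] ++ r, M'))
    (by
      rintro S hS ⟨t, s, M⟩ hi
      obtain ⟨n, m, r, hm, hb⟩ := exists_step_not_good hS hi
      exact ⟨_, ⟨n, m, r, hm, rfl⟩, hb⟩) _ hr₀
  let Node : List ℕ × List ℕ → Prop := fun q => ∃ k, ∀ M, (q.1, q.2, M) ∈ S k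
  have hroot : Node ([], r₀) := ⟨0, fun M => by rw [hS0]; exact Or.inr ⟨M, rfl⟩⟩
  have hstep : ∀ (q : {q // Node q}) (M : ℕ), ∃ q' : {q // Node q}, ∃ n m r, M ≤ m ∧
      q'.1.1 = q.1.1 ++ [n] ∧ q'.1.2 = q.1.2 ++ [m] ++ r := by
    rintro ⟨⟨t, s⟩, k, hk⟩ M
    obtain ⟨_, ⟨n, m, r, hm, rfl⟩, k', hk'⟩ := hSsat k _ (hk M)
    exact ⟨⟨(t ++ [n], s ++ [m] ++ r), k', fun M' => hk' ⟨M', rfl⟩⟩, n, m, r, hm, rfl, rfl⟩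
  choose child dir val suff hval hnext1 hnext2 using hstep
  have hbranch : ∀ g : ℕ → ℕ → ℕ, ∃ z : ℕ → ℕ, ∃ σ : ℕ → List ℕ,
      (∀ j, Node (pre z j, σ j)) ∧
      ∀ j, ∃ m r, g j (σ j).length < m ∧ σ (j + 1) = σ j ++ [m] ++ r := by
    intro g
    let q : ℕ → {q // Node q} := fun j =>
      Nat.rec ⟨_, hroot⟩ (fun j q => child q (g j q.1.2.length + 1)) j
    have hq : ∀ j, q (j + 1) = child (q j) (g j (q j).1.2.length + 1) := fun _ => rfl
    let z : ℕ → ℕ := fun j => dir (q j) (g j (q j).1.2.length + 1)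
    have hz : ∀ j, (q j).1.1 = pre z j := by
      intro j
      induction j with
      | zero => rfl
      | succ j ih => rw [hq, hnext1, ih, pre_succ]
    refine ⟨z, fun j => (q j).1.2, fun j => ?_, fun j => ?_⟩
    · rw [← hz]
      exact (q j).2
    · exact ⟨_, _, hval (q j) _, congrArg (fun q => q.1.2) (hq j) |>.trans (hnext2 _ _)⟩
  have hunique : ∀ (z z' : ℕ → ℕ) (σ σ' : ℕ → List ℕ), (∀ j, Node (pre z j, σ j)) →
      (∀ j, Node (pre z' j, σ' j)) → (F z).1 = (F z').1 := by
    intro z z' σ σ' hz hz'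
    by_contra hne
    obtain ⟨V, V', hV, hV', hzV, hzV', hdisj⟩ := t2_separation hne
    obtain ⟨j, hj⟩ := exists_cyl_pre_subset (hV.preimage (continuous_fst.comp hF)) hzV
    obtain ⟨j', hj'⟩ := exists_cyl_pre_subset (hV'.preimage (continuous_fst.comp hF)) hzV'
    obtain ⟨k, hk⟩ := hz j
    obtain ⟨k', hk'⟩ := hz' j'
    have hii : (pre z' j', σ' j', 0) ≠ (pre z j, σ j, 0) := by
      intro heq
      have h1 : pre z' j' = pre z j := congrArg Prod.fst heq
      have h2 : z ∈ Cyl (pre z' j') := h1 ▸ mem_cyl_pre z j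
      exact disjoint_left.1 hdisj hzV (hj' h2)
    classical
    refine hSbad (max k k') (Good.mono (S := {(pre z j, σ j, 0), (pre z' j', σ' j', 0)})
      ⟨fun l => if l = (pre z j, σ j, 0) then Vᶜ else V'ᶜ, ?_, ?_, ?_⟩ ?_)
    · intro l
      dsimp only
      split_ifs
      · exact hV.measurableSet.compl
      · exact hV'.measurableSet.compl
    · intro x
      by_cases hx : x ∈ V
      · refine ⟨_, Or.inr rfl, ?_⟩
        simp only [if_neg hii]
        exact disjoint_left.1 hdisj hx
      · refine ⟨_, Or.inl rfl, ?_⟩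
        simp only [if_true]
        exact hx
    · rintro l (rfl | rfl)
      · refine small_empty.mono ?_
        rintro _ ⟨⟨⟨w, hw, rfl⟩, -⟩, hp⟩
        simp only [if_true] at hp
        exact hp (hj hw)
      · refine small_empty.mono ?_
        rintro _ ⟨⟨⟨w, hw, rfl⟩, -⟩, hp⟩
        simp only [if_neg hii] at hp
        exact hp (hj' hw)
    · rintro l (rfl | rfl)
      · exact hSmono (le_max_left _ _) (hk 0)
      · exact hSmono (le_max_right _ _) (hk' 0)
  have hnode_nonempty : ∀ t s, Node (t, s) → ∃ w ∈ Cyl t, (F w).2 ∈ Cyl s := by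
    rintro t s ⟨k, hk⟩
    by_contra! hcon
    refine hSbad k (good_of_small (hk 0) (small_empty.mono ?_))
    rintro _ ⟨⟨w, hw, rfl⟩, hy⟩
    exact hcon w hw hy.1
  obtain ⟨z₀, σ₀, hz₀, -⟩ := hbranch fun _ _ => 0
  refine ⟨(F z₀).1, fun g => ?_⟩
  obtain ⟨z, σ, hz, hσ⟩ := hbranch g
  refine ⟨(F z).2, ⟨z, ?_⟩, fun j => ?_⟩
  · rw [← hunique z z₀ σ σ₀ hz hz₀]
  have hσmono : ∀ i j, i ≤ j → Cyl (σ j) ⊆ Cyl (σ i) := by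
    intro i j hij
    induction j, hij using Nat.le_induction with
    | base => exact subset_rfl
    | succ j _ ih =>
      obtain ⟨m, r, -, h⟩ := hσ j
      rw [h, List.append_assoc]
      exact (cyl_append_subset _ _).trans ih
  have hmem : ∀ j, (F z).2 ∈ Cyl (σ j) := by
    intro j
    by_contra hnot
    obtain ⟨i, hi⟩ := exists_cyl_pre_subset
      ((isClopen_cyl (σ j)).compl.isOpen.preimage (continuous_snd.comp hF)) hnot
    obtain ⟨w, hw, hws⟩ := hnode_nonempty _ _ (hz (max i j))
    exact hi (cyl_pre_anti z (le_max_left i j) hw) (hσmono _ _ (le_max_right i j) hws)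
  obtain ⟨m, r, hm, h⟩ := hσ j
  have h1 := hmem (j + 1)
  rw [h] at h1
  have h2 := (mem_cyl_concat.1 (cyl_append_subset _ _ h1)).2
  exact ⟨(σ j).length, h2 ▸ hm⟩

end Branch

lemma exists_bound_of_isCompact {K : Set (ℕ → ℕ)} (hK : IsCompact K) :
    ∃ g : ℕ → ℕ, ∀ y ∈ K, ∀ n, y n ≤ g n := by
  have : ∀ n, ∃ b, ∀ y ∈ K, y n ≤ b := by
    intro n
    obtain ⟨b, hb⟩ := (hK.image (continuous_apply n)).bddAbove
    exact ⟨b, fun y hy => hb (mem_image_of_mem _ hy)⟩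
  choose g hg using this
  exact ⟨g, fun y hy n => hg n y hy⟩

end BurgessHillard

open BurgessHillard in
theorem stmt_12 {X : Type*} [TopologicalSpace X] [PolishSpace X]
    [MeasurableSpace X] [BorelSpace X]
    (P : Set (X × (ℕ → ℕ))) (hP : MeasureTheory.AnalyticSet P)
    (hsec : ∀ x : X, ∃ S : Set (ℕ → ℕ), IsSigmaCompact S ∧
      {y : ℕ → ℕ | (x, y) ∈ P} ⊆ S) :
    ∃ Pn : ℕ → Set (X × (ℕ → ℕ)),
      (∀ n, MeasurableSet (Pn n)) ∧
      (∀ n, ∀ x : X, IsCompact {y : ℕ → ℕ | (x, y) ∈ Pn n}) ∧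
      P ⊆ ⋃ n, Pn n := by
  apply Small.exists_seq
  rw [MeasureTheory.AnalyticSet] at hP
  rcases hP with rfl | ⟨F, hF, rfl⟩
  · exact small_empty
  by_contra hns
  obtain ⟨x, hx⟩ := exists_section_unbounded hF hns
  obtain ⟨_, ⟨K, hK, rfl⟩, hsub⟩ := hsec x
  choose g hg using fun j => exists_bound_of_isCompact (hK j)
  obtain ⟨y, hy, hlt⟩ := hx g
  obtain ⟨j, hj⟩ := mem_iUnion.1 (hsub hy)
  obtain ⟨n, hn⟩ := hlt j
  exact absurd (hg j y hj n) (not_le.2 hn)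
end

section
/- (Solecki–Spinas) If E ⊆ ℕ^ℕ × ℕ^ℕ is an analytic set such that every vertical section E_a = {x : (a,x) ∈ E} is contained in a countable union of compact sets, then there exists a superperfect set P ⊆ ℕ^ℕ that is free for E, i.e. whenever x, y ∈ P and x ≠ y, then (x,y) ∉ E. -/
open Set Topology PiNat

/-- The sequences whose initial segment, read backwards, is the list `l`. -/
def cyl (l : List ℕ) : Set (ℕ → ℕ) := {y | res y l.length = l}

theorem mem_cyl_res (y : ℕ → ℕ) (k : ℕ) : y ∈ cyl (res y k) := by
  simp [cyl, res_length]

theorem mem_cyl_cons {y : ℕ → ℕ} {a : ℕ} {l : List ℕ} :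
    y ∈ cyl (a :: l) ↔ y l.length = a ∧ y ∈ cyl l := by
  simp [cyl]

theorem cyl_nil : cyl [] = univ := by
  ext y; simp [cyl]

theorem res_suffix (y : ℕ → ℕ) {m n : ℕ} (h : m ≤ n) : res y m <:+ res y n := by
  induction n, h using Nat.le_induction with
  | base => exact List.suffix_rfl
  | succ n _ ih => exact ih.trans (List.suffix_cons _ _)

theorem cyl_anti {l l' : List ℕ} (h : l <:+ l') : cyl l' ⊆ cyl l := by
  obtain ⟨t, rfl⟩ := h
  induction t with
  | nil => exact subset_rfl
  | cons a t ih => exact fun y hy => ih (mem_cyl_cons.1 hy).2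

theorem suffix_of_mem_cyl {y : ℕ → ℕ} {l l' : List ℕ} (h : y ∈ cyl l) (h' : y ∈ cyl l')
    (hl : l.length ≤ l'.length) : l <:+ l' := by
  rw [← show res y l.length = l from h, ← show res y l'.length = l' from h']
  exact res_suffix y hl

theorem isOpen_cyl (l : List ℕ) : IsOpen (cyl l) := by
  induction l with
  | nil => simp [cyl_nil]
  | cons a l ih =>
    have : cyl (a :: l) = (fun y : ℕ → ℕ => y l.length) ⁻¹' {a} ∩ cyl l := by
      ext y; simp [mem_cyl_cons]
    rw [this]
    exact ((isOpen_discrete _).preimage (continuous_apply _)).inter ih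

theorem cyl_nonempty (l : List ℕ) : (cyl l).Nonempty := by
  induction l with
  | nil => simp [cyl_nil]
  | cons a l ih =>
    obtain ⟨y, hy⟩ := ih
    refine ⟨Function.update y l.length a, mem_cyl_cons.2 ⟨by simp, ?_⟩⟩
    rw [cyl, mem_ofPred_eq, ← show res y l.length = l from hy, res_length, res_eq_res]
    intro m hm
    simp [hm.ne]

theorem exists_cyl_subset {U : Set (ℕ → ℕ)} (hU : IsOpen U) {x : ℕ → ℕ} (hx : x ∈ U) (k : ℕ) :
    ∃ n, k ≤ n ∧ cyl (res x n) ⊆ U := by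
  obtain ⟨v, ⟨z, n, rfl⟩, hxv, hvU⟩ :=
    (isTopologicalBasis_cylinders (fun _ : ℕ => ℕ)).exists_subset_of_mem_open hx hU
  refine ⟨max k n, le_max_left _ _, fun y hy => hvU ?_⟩
  have hy' := cyl_anti (res_suffix x (le_max_right k n)) hy
  rw [cyl, mem_ofPred_eq, res_length] at hy'
  rw [cylinder_eq_res] at hxv ⊢
  exact hy'.trans hxv

theorem exists_mem_cyl_of_chain (w : ℕ → List ℕ) (hw : ∀ n, w n <:+ w (n + 1))
    (hlen : ∀ n, (w n).length < (w (n + 1)).length) :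
    ∃ y, ∀ n, y ∈ cyl (w n) := by
  choose z hz using fun n => cyl_nonempty (w n)
  have hmono : StrictMono fun n => (w n).length := strictMono_nat_of_lt_succ hlen
  have hchain : ∀ {m n}, m ≤ n → w m <:+ w n := by
    intro m n h
    induction n, h using Nat.le_induction with
    | base => exact List.suffix_rfl
    | succ n _ ih => exact ih.trans (hw n)
  have key : ∀ m n i, i < (w m).length → i < (w n).length → z m i = z n i := by
    have : ∀ m n i, m ≤ n → i < (w m).length → z m i = z n i := by
      intro m n i hmn hi
      have h1 : res (z m) (w m).length = w m := hz m
      have h2 : res (z n) (w m).length = w m := cyl_anti (hchain hmn) (hz n)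
      exact res_eq_res.1 (h1.trans h2.symm) hi
    intro m n i hm hn
    rcases le_total m n with h | h
    · exact this m n i h hm
    · exact (this n m i h hn).symm
  refine ⟨fun i => z (i + 1) i, fun n => ?_⟩
  have h1 : res (z n) (w n).length = w n := hz n
  rw [cyl, mem_ofPred_eq]
  refine Eq.trans ?_ h1
  rw [res_eq_res]
  intro i hi
  exact key _ _ _ (hmono.le_apply (x := i + 1)) hi

/-- A family of open sets `B s n` giving, for each `s`, a generically defined value `n`. -/
def IsName (B : List ℕ → ℕ → Set (ℕ → ℕ)) : Prop :=
  (∀ s n, IsOpen (B s n)) ∧ ∀ s, Dense (⋃ n, B s n)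

/-- At `p.1`, the values prescribed by `B` along `p.2` eventually dominate `p.2`. -/
def Captured (B : List ℕ → ℕ → Set (ℕ → ℕ)) (p : (ℕ → ℕ) × (ℕ → ℕ)) : Prop :=
  ∃ k₀, ∀ k ≥ k₀, ∀ n, p.1 ∈ B (res p.2 k) n → p.2 k ≤ n

/-- The σ-ideal of sets covered by countably many names. -/
def GenSmall (H : Set ((ℕ → ℕ) × (ℕ → ℕ))) : Prop :=
  ∃ S : Set (List ℕ → ℕ → Set (ℕ → ℕ)), S.Countable ∧ (∀ B ∈ S, IsName B) ∧
    ∀ p ∈ H, ∃ B ∈ S, Captured B p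

theorem GenSmall.mono {H H' : Set ((ℕ → ℕ) × (ℕ → ℕ))} (h : GenSmall H) (hH : H' ⊆ H) :
    GenSmall H' := by
  obtain ⟨S, hS, hN, hc⟩ := h
  exact ⟨S, hS, hN, fun p hp => hc p (hH hp)⟩

theorem genSmall_empty : GenSmall ∅ := ⟨∅, countable_empty, by simp, by simp⟩

theorem genSmall_iUnion {ι : Type*} [Countable ι] {H : ι → Set ((ℕ → ℕ) × (ℕ → ℕ))}
    (h : ∀ i, GenSmall (H i)) : GenSmall (⋃ i, H i) := by
  choose S hS hN hc using h
  refine ⟨⋃ i, S i, countable_iUnion hS, ?_, ?_⟩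
  · intro B hB
    obtain ⟨i, hi⟩ := mem_iUnion.1 hB
    exact hN i B hi
  · intro p hp
    obtain ⟨i, hi⟩ := mem_iUnion.1 hp
    obtain ⟨B, hB, hBp⟩ := hc i p hi
    exact ⟨B, mem_iUnion.2 ⟨i, hB⟩, hBp⟩

theorem genSmall_sUnion_prod (H : Set ((ℕ → ℕ) × (ℕ → ℕ))) (W : Set (ℕ → ℕ)) :
    GenSmall (H ∩ (⋃₀ {U | IsOpen U ∧ GenSmall (H ∩ U ×ˢ W)}) ×ˢ W) := by
  obtain ⟨T, hT, hTS, hTU⟩ := TopologicalSpace.isOpen_sUnion_countable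
    {U | IsOpen U ∧ GenSmall (H ∩ U ×ˢ W)} (fun U hU => hU.1)
  have := hT.to_subtype
  refine (genSmall_iUnion (H := fun U : T => H ∩ U.1 ×ˢ W) fun U => (hTS U.2).2).mono ?_
  rintro p ⟨hp, hp1, hp2⟩
  rw [← hTU] at hp1
  obtain ⟨U, hU, hpU⟩ := hp1
  exact mem_iUnion.2 ⟨⟨U, hU⟩, hp, hpU, hp2⟩

theorem exists_forall_not_genSmall {H : Set ((ℕ → ℕ) × (ℕ → ℕ))} (hH : ¬ GenSmall H) :
    ∃ U : Set (ℕ → ℕ), IsOpen U ∧ U.Nonempty ∧ ∃ s, ∀ U' ⊆ U, IsOpen U' → U'.Nonempty →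
      ∀ n, ∃ m > n, ¬ GenSmall (H ∩ U' ×ˢ cyl (m :: s)) := by
  by_contra! hcon
  apply hH
  let B : List ℕ → ℕ → Set (ℕ → ℕ) := fun s n =>
    ⋃₀ {U | IsOpen U ∧ ∀ m > n, GenSmall (H ∩ U ×ˢ cyl (m :: s))}
  have hB : IsName B := by
    refine ⟨fun s n => isOpen_sUnion fun U hU => hU.1, fun s => ?_⟩
    rw [dense_iff_inter_open]
    intro U hU hUne
    obtain ⟨U', hU'U, hU', ⟨x, hx⟩, n, hn⟩ := hcon U hU hUne s
    exact ⟨x, hU'U hx, mem_iUnion.2 ⟨n, U', ⟨hU', hn⟩, hx⟩⟩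
  have h1 : GenSmall {p | Captured B p} :=
    ⟨{B}, countable_singleton B, by simpa using hB, by simp⟩
  have h2 := genSmall_iUnion fun s : List ℕ => genSmall_sUnion_prod H (cyl s)
  refine (genSmall_iUnion (H := fun b : Bool => if b then _ else _)
    (by intro b; cases b; exacts [h1, h2])).mono fun p hp => ?_
  rw [mem_iUnion]
  by_cases hc : Captured B p
  · exact ⟨false, hc⟩
  · refine ⟨true, ?_⟩
    simp only [Captured, not_exists, not_forall] at hc
    obtain ⟨k, -, n, ⟨U, ⟨hUo, hU⟩, hpU⟩, hn⟩ := hc 0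
    have hmem : p.2 ∈ cyl (p.2 k :: res p.2 k) := mem_cyl_res p.2 (k + 1)
    refine mem_iUnion.2 ⟨p.2 k :: res p.2 k, hp, ⟨U, ⟨hUo, hU _ (not_le.1 hn)⟩, hpU⟩, hmem⟩

/-- The part of the range of `φ` with a preimage in `cyl t` and lying over `U ×ˢ cyl s`. -/
def piece (φ : (ℕ → ℕ) → (ℕ → ℕ) × (ℕ → ℕ)) (U : Set (ℕ → ℕ)) (s t : List ℕ) :
    Set ((ℕ → ℕ) × (ℕ → ℕ)) :=
  φ '' cyl t ∩ U ×ˢ cyl s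

/-- Below `U`, generically infinitely many one-step extensions of `s` carry a non-small piece. -/
def Bad (φ : (ℕ → ℕ) → (ℕ → ℕ) × (ℕ → ℕ)) (U : Set (ℕ → ℕ)) (s t : List ℕ) : Prop :=
  ∀ U' ⊆ U, IsOpen U' → U'.Nonempty → ∀ n, ∃ m > n, ¬ GenSmall (piece φ U' (m :: s) t)

theorem Bad.exists_extension {φ : (ℕ → ℕ) → (ℕ → ℕ) × (ℕ → ℕ)} {U : Set (ℕ → ℕ)} {s t : List ℕ}
    (h : Bad φ U s t) (hU : IsOpen U) (hUne : U.Nonempty) (n : ℕ) :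
    ∃ V ⊆ U, IsOpen V ∧ V.Nonempty ∧ ∃ m > n, ∃ s' e, (m :: s) <:+ s' ∧ Bad φ V s' (e :: t) := by
  obtain ⟨m, hm, hns⟩ := h U subset_rfl hU hUne n
  obtain ⟨e, he⟩ : ∃ e, ¬ GenSmall (piece φ U (m :: s) (e :: t)) := by
    by_contra! hcon
    refine hns ((genSmall_iUnion hcon).mono ?_)
    rintro _ ⟨⟨z, hz, rfl⟩, hp⟩
    exact mem_iUnion.2 ⟨z t.length, ⟨z, mem_cyl_cons.2 ⟨rfl, hz⟩, rfl⟩, hp⟩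
  obtain ⟨V, hV, hVne, s', hs'⟩ := exists_forall_not_genSmall he
  have hne : ∀ n, ∃ m' > n, ∃ p : (ℕ → ℕ) × (ℕ → ℕ),
      p.1 ∈ U ∩ V ∧ p.2 ∈ cyl (m :: s) ∧ p.2 ∈ cyl (m' :: s') := by
    intro n
    obtain ⟨m', hm', hm'n⟩ := hs' V subset_rfl hV hVne n
    refine ⟨m', hm', ?_⟩
    by_contra! hcon
    refine hm'n (genSmall_empty.mono ?_)
    rintro p ⟨⟨-, hp1, hp2⟩, hp3, hp4⟩
    exact hcon p ⟨hp1, hp3⟩ hp2 hp4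
  obtain ⟨m₁, -, p₁, hp₁, hp₁s, hp₁m⟩ := hne 0
  obtain ⟨m₂, hm₂, p₂, hp₂, hp₂s, hp₂m⟩ := hne m₁
  have hsuf : (m :: s) <:+ s' := by
    rcases le_or_gt (m :: s).length s'.length with hl | hl
    · exact suffix_of_mem_cyl hp₁s (mem_cyl_cons.1 hp₁m).2 hl
    · exfalso
      have h1 : res p₁.2 (m :: s).length = m :: s := hp₁s
      have h2 : res p₂.2 (m :: s).length = m :: s := hp₂s
      have h3 := res_eq_res.1 (h1.trans h2.symm) hl
      rw [(mem_cyl_cons.1 hp₁m).1, (mem_cyl_cons.1 hp₂m).1] at h3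
      omega
  refine ⟨U ∩ V, inter_subset_left, hU.inter hV, ⟨_, hp₁⟩, m, hm, s', e, hsuf, ?_⟩
  intro U' hU' hU'o hU'ne n
  obtain ⟨m', hm', hm'n⟩ := hs' U' (hU'.trans inter_subset_right) hU'o hU'ne n
  refine ⟨m', hm', fun hsm => hm'n (hsm.mono ?_)⟩
  rintro p ⟨⟨hp1, -⟩, hp2⟩
  exact ⟨hp1, hp2⟩

/-- At a generic point `x`, the property `Bad` reproduces itself. -/
theorem exists_generic_bad (φ : (ℕ → ℕ) → (ℕ → ℕ) × (ℕ → ℕ)) {U : Set (ℕ → ℕ)}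
    (hU : IsOpen U) (hUne : U.Nonempty) :
    ∃ x ∈ U, ∀ s t, (∃ V, IsOpen V ∧ x ∈ V ∧ Bad φ V s t) →
      ∀ n, ∃ m > n, ∃ s' e, (m :: s) <:+ s' ∧ ∃ V, IsOpen V ∧ x ∈ V ∧ Bad φ V s' (e :: t) := by
  let D : List ℕ × List ℕ × ℕ → Set (ℕ → ℕ) := fun q =>
    ⋃₀ {V | IsOpen V ∧ ∃ m > q.2.2, ∃ s' e, (m :: q.1) <:+ s' ∧ Bad φ V s' (e :: q.2.1)}
  have hD : ∀ q, IsOpen (D q) := fun q => isOpen_sUnion fun V hV => hV.1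
  have hG : Dense (⋂ q, (D q ∪ (closure (D q))ᶜ)) := by
    refine dense_iInter_of_isOpen (fun q => (hD q).union isClosed_closure.isOpen_compl) fun q => ?_
    rw [dense_iff_inter_open]
    rintro W hW ⟨x, hx⟩
    by_cases hxc : x ∈ closure (D q)
    · obtain ⟨y, hy⟩ := mem_closure_iff.1 hxc W hW hx
      exact ⟨y, hy.1, Or.inl hy.2⟩
    · exact ⟨x, hx, Or.inr hxc⟩
  obtain ⟨x, hxU, hx⟩ := hG.inter_open_nonempty U hU hUne
  refine ⟨x, hxU, ?_⟩
  rintro s t ⟨V, hV, hxV, hbad⟩ n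
  rcases mem_iInter.1 hx (s, t, n) with hxD | hxD
  · obtain ⟨V', ⟨hV', m, hm, s', e, hs', hb⟩, hxV'⟩ := hxD
    exact ⟨m, hm, s', e, hs', V', hV', hxV', hb⟩
  · exfalso
    have ho : IsOpen (V ∩ (closure (D (s, t, n)))ᶜ) := hV.inter isClosed_closure.isOpen_compl
    have hb : Bad φ (V ∩ (closure (D (s, t, n)))ᶜ) s t :=
      fun U' hU' => hbad U' (hU'.trans inter_subset_left)
    obtain ⟨V', hV'V, hV', ⟨y, hy⟩, m, hm, s', e, hs', hb'⟩ :=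
      hb.exists_extension ho ⟨x, hxV, hxD⟩ n
    exact (hV'V hy).2 (subset_closure ⟨V', ⟨hV', m, hm, s', e, hs', hb'⟩, hy⟩)

theorem Bad.exists_mem_piece {φ : (ℕ → ℕ) → (ℕ → ℕ) × (ℕ → ℕ)} {V : Set (ℕ → ℕ)} {s t : List ℕ}
    (h : Bad φ V s t) (hV : IsOpen V) (hne : V.Nonempty) :
    ∃ z ∈ cyl t, (φ z).1 ∈ V ∧ (φ z).2 ∈ cyl s := by
  obtain ⟨m, -, hm⟩ := h V subset_rfl hV hne 0
  by_contra! hcon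
  refine hm (genSmall_empty.mono ?_)
  rintro _ ⟨⟨z, hz, rfl⟩, h1, h2⟩
  exact hcon z hz h1 (mem_cyl_cons.1 h2).2

theorem tendsto_of_forall_mem_cyl {w : ℕ → List ℕ} (hlen : ∀ n, (w n).length < (w (n + 1)).length)
    {y : ℕ → ℕ} (hy : ∀ n, y ∈ cyl (w n)) {z : ℕ → ℕ → ℕ}
    (hz : ∀ n, z n ∈ cyl (w n)) : Filter.Tendsto z Filter.atTop (𝓝 y) := by
  have hmono : StrictMono fun n => (w n).length := strictMono_nat_of_lt_succ hlen
  rw [tendsto_pi_nhds]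
  intro i
  refine tendsto_const_nhds.congr' ?_
  filter_upwards [Filter.eventually_ge_atTop (i + 1)] with n hn
  have h1 : res y (w n).length = w n := hy n
  have h2 : res (z n) (w n).length = w n := hz n
  exact res_eq_res.1 (h1.trans h2.symm) (hn.trans hmono.le_apply)

/-- An analytic set with σ-bounded sections is small. -/
theorem genSmall_range {φ : (ℕ → ℕ) → (ℕ → ℕ) × (ℕ → ℕ)} (hφ : Continuous φ)
    (hsec : ∀ a : ℕ → ℕ, ∃ K : ℕ → Set (ℕ → ℕ),
      (∀ n, IsCompact (K n)) ∧ {x : ℕ → ℕ | (a, x) ∈ range φ} ⊆ ⋃ n, K n) :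
    GenSmall (range φ) := by
  by_contra hns
  obtain ⟨U, hU, hUne, s₀, hs₀⟩ := exists_forall_not_genSmall hns
  have hbad : Bad φ U s₀ [] := by
    intro U' hU' ho hne n
    simpa [piece, cyl_nil] using hs₀ U' hU' ho hne n
  obtain ⟨x, hxU, hx⟩ := exists_generic_bad φ hU hUne
  obtain ⟨K, hK, hKsub⟩ := hsec x
  have hbdd : ∀ n i, ∃ b, ∀ y ∈ K n, y i ≤ b := fun n i => by
    obtain ⟨b, hb⟩ := ((hK n).image (continuous_apply i)).bddAbove
    exact ⟨b, fun y hy => hb ⟨y, hy, rfl⟩⟩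
  choose g hg using hbdd
  let Q := {q : List ℕ × List ℕ // ∃ V, IsOpen V ∧ x ∈ V ∧ Bad φ V q.1 q.2}
  have hstep : ∀ (i : ℕ) (q : Q), ∃ q' : Q, ∃ m > g i q.1.1.length,
      (m :: q.1.1) <:+ q'.1.1 ∧ ∃ e, q'.1.2 = e :: q.1.2 := by
    rintro i ⟨⟨s, t⟩, hq⟩
    obtain ⟨m, hm, s', e, hs', hV⟩ := hx s t hq (g i s.length)
    exact ⟨⟨(s', e :: t), hV⟩, m, hm, hs', e, rfl⟩
  choose F m hm hF e he using hstep
  let q : ℕ → Q := fun n => Nat.rec ⟨(s₀, []), U, hU, hxU, hbad⟩ F n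
  have hq : ∀ n, q (n + 1) = F n (q n) := fun _ => rfl
  have hs : ∀ n, (m n (q n) :: (q n).1.1) <:+ (q (n + 1)).1.1 := fun n => hF n (q n)
  have hs1 : ∀ n, (q n).1.1 <:+ (q (n + 1)).1.1 := fun n => (List.suffix_cons _ _).trans (hs n)
  have hs2 : ∀ n, (q n).1.1.length < (q (n + 1)).1.1.length := fun n => by
    simpa using (hs n).length_le
  have ht1 : ∀ n, (q n).1.2 <:+ (q (n + 1)).1.2 := fun n => by
    rw [hq, he]; exact List.suffix_cons _ _
  have ht2 : ∀ n, (q n).1.2.length < (q (n + 1)).1.2.length := fun n => by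
    rw [hq, he]; simp
  obtain ⟨y, hy⟩ := exists_mem_cyl_of_chain _ hs1 hs2
  obtain ⟨z, hz⟩ := exists_mem_cyl_of_chain _ ht1 ht2
  have happrox : ∀ n, ∃ z' ∈ cyl (q n).1.2, (φ z').1 ∈ cyl (res x n) ∧
      (φ z').2 ∈ cyl (q n).1.1 := by
    intro n
    obtain ⟨V, hV, hxV, hb⟩ := (q n).2
    have hb' : Bad φ (V ∩ cyl (res x n)) (q n).1.1 (q n).1.2 :=
      fun U' hU' => hb U' (hU'.trans inter_subset_left)
    obtain ⟨z', hz', h1, h2⟩ :=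
      hb'.exists_mem_piece (hV.inter (isOpen_cyl _)) ⟨x, hxV, mem_cyl_res x n⟩
    exact ⟨z', hz', h1.2, h2⟩
  choose z' hz' hz'1 hz'2 using happrox
  have hlim : Filter.Tendsto z' Filter.atTop (𝓝 z) := tendsto_of_forall_mem_cyl ht2 hz hz'
  have hlimφ := (hφ.tendsto z).comp hlim
  have hlim1 : Filter.Tendsto (fun n => (φ (z' n)).1) Filter.atTop (𝓝 x) :=
    tendsto_of_forall_mem_cyl (w := res x) (fun n => by simp [res_length])
      (mem_cyl_res x) hz'1
  have hlim2 : Filter.Tendsto (fun n => (φ (z' n)).2) Filter.atTop (𝓝 y) :=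
    tendsto_of_forall_mem_cyl hs2 hy hz'2
  have hφz : φ z = (x, y) := tendsto_nhds_unique hlimφ (hlim1.prodMk_nhds hlim2)
  obtain ⟨i, hi⟩ := mem_iUnion.1 (hKsub ⟨z, hφz⟩)
  have h1 := hg i (q i).1.1.length y hi
  have h2 := hm i (q i)
  have h3 := (mem_cyl_cons.1 (cyl_anti (hs i) (hy (i + 1)))).1
  omega

theorem exists_refinement {B : ℕ → List ℕ → ℕ → Set (ℕ → ℕ)} (hB : ∀ c, IsName (B c))
    (T : Finset (ℕ × List ℕ)) (l : List ℕ) :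
    ∃ l', l <:+ l' ∧ ∀ q ∈ T, ∃ N ≤ l'.sum, cyl l' ⊆ B q.1 q.2 N := by
  induction T using Finset.induction_on with
  | empty => exact ⟨l, List.suffix_rfl, by simp⟩
  | insert q T _ ih =>
    obtain ⟨l₁, hl₁, hT⟩ := ih
    obtain ⟨x, hx, hxB⟩ := ((hB q.1).2 q.2).inter_open_nonempty _ (isOpen_cyl l₁) (cyl_nonempty l₁)
    obtain ⟨N, hN⟩ := mem_iUnion.1 hxB
    obtain ⟨k, hk, hsub⟩ := exists_cyl_subset ((hB q.1).1 q.2 N) hN l₁.length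
    have hsuf : l₁ <:+ N :: res x k :=
      (suffix_of_mem_cyl hx (mem_cyl_res x k) (by simpa [res_length] using hk)).trans
        (List.suffix_cons _ _)
    refine ⟨N :: res x k, hl₁.trans hsuf, fun q' hq' => ?_⟩
    rcases Finset.mem_insert.1 hq' with rfl | hq'
    · exact ⟨N, by simp, (cyl_anti (List.suffix_cons _ _)).trans hsub⟩
    · obtain ⟨N', hN', hT'⟩ := hT q' hq'
      have hsum : N' ≤ (N :: res x k).sum := hN'.trans (hsuf.sublist.sum_le_sum (by simp))
      exact ⟨N', hsum, fun z hz => hT' (cyl_anti hsuf hz)⟩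

/-- The sequence whose `j`-th term is `g j u`, where `u` agrees with the sequence below `j`. -/
noncomputable def recSeq {α : Type*} [Inhabited α] (g : ℕ → (ℕ → α) → α) : ℕ → α
  | j => g j fun i => if _h : i < j then recSeq g i else default

theorem exists_seq_of_forall_exists {α : Type*} [Inhabited α] {R : ℕ → (ℕ → α) → α → Prop}
    (hR : ∀ j u, ∃ l, R j u l)
    (hcongr : ∀ j u u' l, (∀ i < j, u i = u' i) → R j u l → R j u' l) :
    ∃ u : ℕ → α, ∀ j, R j u (u j) := by
  choose g hg using hR
  refine ⟨recSeq g, fun j => ?_⟩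
  have h := hg j fun i => if _h : i < j then recSeq g i else default
  rw [recSeq]
  exact hcongr j _ _ _ (fun i hi => by simp [hi]) h

open Encodable in
theorem encode_lt_encode_cons (m : ℕ) (σ : List ℕ) : encode σ < encode (m :: σ) := by
  rw [encode_list_cons]
  exact Nat.lt_succ_of_le (Nat.right_le_pair _ _)

open Encodable in
/-- Each node `u σ` decides the values named at all earlier nodes, and each branching value
`a (m :: σ)` exceeds all entries of the earlier nodes. -/
theorem exists_free_tree {B : ℕ → List ℕ → ℕ → Set (ℕ → ℕ)} (hB : ∀ c, IsName (B c)) :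
    ∃ (u : List ℕ → List ℕ) (a : List ℕ → ℕ),
      (∀ m σ, (a (m :: σ) :: u σ) <:+ u (m :: σ)) ∧
      (∀ m σ τ, encode τ < encode (m :: σ) → (u τ).sum < a (m :: σ)) ∧
      ∀ σ τ, encode τ < encode σ → ∀ c ≤ encode σ, ∃ N ≤ (u σ).sum, cyl (u σ) ⊆ B c (u τ) N := by
  let R : ℕ → (ℕ → List ℕ) → List ℕ → Prop := fun j u l =>
    (∃ a, (∀ i < j, (u i).sum < a) ∧
      ∀ m (σ : List ℕ), encode (m :: σ) = j → (a :: u (encode σ)) <:+ l) ∧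
    ∀ i < j, ∀ c ≤ j, ∃ N ≤ l.sum, cyl l ⊆ B c (u i) N
  have hR : ∀ j u, ∃ l, R j u l := by
    intro j u
    let a := (∑ i ∈ Finset.range j, (u i).sum) + 1
    have ha : ∀ i < j, (u i).sum < a := fun i hi => Nat.lt_succ_of_le
      (Finset.single_le_sum (f := fun i => (u i).sum) (fun _ _ => Nat.zero_le _)
        (Finset.mem_range.2 hi))
    obtain ⟨l₀, hl₀⟩ : ∃ l₀, ∀ m (σ : List ℕ), encode (m :: σ) = j → (a :: u (encode σ)) = l₀ := by
      by_cases h : ∃ m, ∃ σ : List ℕ, encode (m :: σ) = j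
      · obtain ⟨m, σ, rfl⟩ := h
        refine ⟨a :: u (encode σ), fun m' σ' h' => ?_⟩
        rw [(List.cons.inj (encode_injective h')).2]
      · exact ⟨[], fun m σ hm => (h ⟨m, σ, hm⟩).elim⟩
    obtain ⟨l, hl, hlT⟩ := exists_refinement hB
      ((Finset.range (j + 1)) ×ˢ ((Finset.range j).image u)) l₀
    refine ⟨l, ⟨a, ha, fun m σ h => (hl₀ m σ h) ▸ hl⟩, fun i hi c hc => hlT (c, u i) ?_⟩
    simp only [Finset.mem_product, Finset.mem_range, Finset.mem_image]
    exact ⟨Nat.lt_succ_of_le hc, i, hi, rfl⟩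
  obtain ⟨u, hu⟩ := exists_seq_of_forall_exists hR (by
    rintro j u u' l h ⟨⟨a, ha, hl⟩, hN⟩
    refine ⟨⟨a, fun i hi => h i hi ▸ ha i hi, fun m σ hj => ?_⟩, fun i hi => h i hi ▸ hN i hi⟩
    rw [← h (encode σ) (hj ▸ encode_lt_encode_cons m σ)]
    exact hl m σ hj)
  choose a ha using fun j => (hu j).1
  exact ⟨fun σ => u (encode σ), fun σ => a (encode σ),
    fun m σ => (ha _).2 m σ rfl, fun m σ τ h => (ha _).1 _ h, fun σ τ h c hc => (hu _).2 _ h c hc⟩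

/-- The branch map of a scheme whose nodes have distinguished immediate successors is a closed
embedding. -/
theorem isClosedEmbedding_of_scheme {u : List ℕ → List ℕ} {a : List ℕ → ℕ}
    (hu : ∀ m σ, (a (m :: σ) :: u σ) <:+ u (m :: σ))
    (ha : ∀ m m' σ, a (m :: σ) = a (m' :: σ) → m = m')
    {Φ : (ℕ → ℕ) → ℕ → ℕ} (hΦ : ∀ α n, Φ α ∈ cyl (u (res α n))) : IsClosedEmbedding Φ := by
  have hval : ∀ α n, Φ α (u (res α n)).length = a (res α (n + 1)) := fun α n =>
    (mem_cyl_cons.1 (cyl_anti (hu (α n) (res α n)) (hΦ α (n + 1)))).1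
  have hlen : ∀ α n, (u (res α n)).length < (u (res α (n + 1))).length := fun α n => by
    simpa using (hu (α n) (res α n)).length_le
  have hmono : ∀ α, StrictMono fun n => (u (res α n)).length := fun α =>
    strictMono_nat_of_lt_succ (hlen α)
  refine .of_continuous_injective_isClosedMap ?_ ?_ ?_
  · refine continuous_pi fun i => (IsLocallyConstant.continuous ?_)
    rw [IsLocallyConstant.iff_exists_open]
    intro α
    refine ⟨cyl (res α (i + 1)), isOpen_cyl _, mem_cyl_res _ _, fun β hβ => ?_⟩
    rw [cyl, mem_ofPred_eq, res_length] at hβ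
    have h1 : res (Φ α) _ = _ := hΦ α (i + 1)
    have h2 : res (Φ β) _ = _ := hΦ β (i + 1)
    rw [hβ] at h2
    exact res_eq_res.1 (h2.trans h1.symm) ((Nat.lt_succ_self i).trans_le (hmono α).le_apply)
  · intro α β h
    refine res_injective (funext fun n => ?_)
    induction n with
    | zero => rfl
    | succ n ih =>
      have h1 := hval α n
      have h2 := hval β n
      rw [h, ih, h2] at h1
      rw [res_succ, res_succ, ih] at h1 ⊢
      rw [ha _ _ _ h1]
  · intro C hC
    rw [← closure_subset_iff_isClosed]
    intro y hy
    let Q := {σ : List ℕ // y ∈ closure (Φ '' (C ∩ cyl σ))}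
    have hstep : ∀ q : Q, ∃ m, y ∈ closure (Φ '' (C ∩ cyl (m :: q.1))) := by
      rintro ⟨σ, hσ⟩
      have hW : ∀ W, IsOpen W → y ∈ W → ∃ β ∈ C ∩ cyl σ, Φ β ∈ W := fun W hW hyW => by
        obtain ⟨_, hw, β, hβ, rfl⟩ := mem_closure_iff.1 hσ W hW hyW
        exact ⟨β, hβ, hw⟩
      have hkey : ∀ β ∈ cyl σ, Φ β ∈ cyl (res y ((u σ).length + 1)) →
          a (β σ.length :: σ) = y (u σ).length := fun β hβ hβy => by
        have h1 := hval β σ.length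
        rw [res_succ, show res β σ.length = σ from hβ] at h1
        rw [← h1]
        rw [cyl, mem_ofPred_eq, res_length] at hβy
        exact res_eq_res.1 hβy (Nat.lt_succ_self _)
      obtain ⟨β₀, hβ₀, hβ₀y⟩ := hW _ (isOpen_cyl (res y ((u σ).length + 1))) (mem_cyl_res _ _)
      refine ⟨β₀ σ.length, mem_closure_iff.2 fun W hWo hyW => ?_⟩
      obtain ⟨β, hβ, hβW, hβy⟩ := hW _ (hWo.inter (isOpen_cyl (res y ((u σ).length + 1))))
        ⟨hyW, mem_cyl_res _ _⟩
      have hm := ha _ _ _ ((hkey β hβ.2 hβy).trans (hkey β₀ hβ₀.2 hβ₀y).symm)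
      exact ⟨Φ β, hβW, β, ⟨hβ.1, mem_cyl_cons.2 ⟨hm, hβ.2⟩⟩, rfl⟩
    choose m hm using hstep
    let q : ℕ → Q := fun n => Nat.rec ⟨[], by simpa [cyl_nil] using hy⟩
      (fun _ q => ⟨m q :: q.1, hm q⟩) n
    let α : ℕ → ℕ := fun n => m (q n)
    have hα : ∀ n, res α n = (q n).1 := fun n => by
      induction n with
      | zero => rfl
      | succ n ih => rw [res_succ, ih]
    have hcl : ∀ n W, IsOpen W → y ∈ W → ∃ β ∈ C, β ∈ cyl (res α n) ∧ Φ β ∈ W := by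
      intro n W hW hyW
      obtain ⟨_, hw, β, hβ, rfl⟩ := mem_closure_iff.1 (hα n ▸ (q n).2) W hW hyW
      exact ⟨β, hβ.1, hβ.2, hw⟩
    refine ⟨α, ?_, ?_⟩
    · rw [← hC.closure_eq, mem_closure_iff]
      intro W hW hαW
      obtain ⟨n, -, hn⟩ := exists_cyl_subset hW hαW 0
      obtain ⟨β, hβC, hβ, -⟩ := hcl n univ isOpen_univ trivial
      exact ⟨β, hn hβ, hβC⟩
    · refine res_injective (funext fun n => ?_)
      obtain ⟨β, -, hβ, hβy⟩ := hcl n _ (isOpen_cyl (res y n)) (mem_cyl_res y n)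
      rw [cyl, mem_ofPred_eq, res_length] at hβ hβy
      rw [← hβy, res_eq_res]
      intro i hi
      have h1 : res (Φ α) _ = _ := hΦ α n
      have h2 : res (Φ β) _ = _ := hΦ β n
      rw [hβ] at h2
      exact res_eq_res.1 (h1.trans h2.symm) (hi.trans_le (hmono α).le_apply)

open Encodable in
theorem exists_free_of_names {B : ℕ → List ℕ → ℕ → Set (ℕ → ℕ)} (hB : ∀ c, IsName (B c)) :
    ∃ P : Set (ℕ → ℕ), IsClosed P ∧ Nonempty (P ≃ₜ (ℕ → ℕ)) ∧
      ∀ x ∈ P, ∀ y ∈ P, x ≠ y → ∀ c, ¬ Captured (B c) (x, y) := by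
  obtain ⟨u, a, hu, hsum, hdec⟩ := exists_free_tree hB
  have hlen : ∀ m σ, (u σ).length < (u (m :: σ)).length := fun m σ => by
    simpa using (hu m σ).length_le
  have hbranch : ∀ α : ℕ → ℕ, ∃ y, ∀ n, y ∈ cyl (u (res α n)) := fun α =>
    exists_mem_cyl_of_chain (fun n => u (res α n))
      (fun n => (List.suffix_cons _ _).trans (hu (α n) (res α n))) fun n => hlen _ _
  choose Φ hΦ using hbranch
  have ha : ∀ m m' σ, a (m :: σ) = a (m' :: σ) → m = m' := by
    have hlt : ∀ m m' σ, encode (m :: σ) < encode (m' :: σ) → a (m :: σ) < a (m' :: σ) :=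
      fun m m' σ h => lt_of_le_of_lt
        (List.single_le_sum (by simp) _ ((hu m σ).subset (List.mem_cons_self ..))) (hsum m' σ _ h)
    intro m m' σ h
    rcases lt_trichotomy (encode (m :: σ)) (encode (m' :: σ)) with h' | h' | h'
    · exact absurd h (hlt _ _ _ h').ne
    · exact (List.cons.inj (encode_injective h')).1
    · exact absurd h (hlt _ _ _ h').ne'
  have hemb := isClosedEmbedding_of_scheme hu ha hΦ
  refine ⟨range Φ, hemb.isClosed_range, ⟨hemb.isEmbedding.toHomeomorph.symm⟩, ?_⟩
  rintro _ ⟨α, rfl⟩ _ ⟨β, rfl⟩ hne c ⟨k₀, hk₀⟩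
  have hcode : ∀ γ : ℕ → ℕ, StrictMono fun n => encode (res γ n) := fun γ =>
    strictMono_nat_of_lt_succ fun n => encode_lt_encode_cons _ _
  obtain ⟨d, hd⟩ : ∃ d, α d ≠ β d := by
    by_contra! h
    exact hne (congrArg Φ (funext h))
  let n₀ := max k₀ (d + 1)
  let n := max (encode (res β n₀) + 1) (max c (d + 1))
  have hn : n ≤ encode (res α n) := (hcode α).le_apply
  have hex : ∃ r, encode (res α n) ≤ encode (res β r) := ⟨_, (hcode β).le_apply⟩
  have hr := Nat.find_spec hex
  have hmin : ∀ r < Nat.find hex, encode (res β r) < encode (res α n) := fun r h =>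
    not_le.1 (Nat.find_min hex h)
  have hr₀ : n₀ < Nat.find hex := by
    by_contra! h
    have h1 := (hcode β).monotone h
    have h2 : encode (res β n₀) + 1 ≤ n := le_max_left _ _
    omega
  obtain ⟨r, hrr⟩ : ∃ r, Nat.find hex = r + 1 := ⟨Nat.find hex - 1, by omega⟩
  rw [hrr] at hr hmin hr₀
  have hlt : encode (res α n) < encode (res β (r + 1)) := by
    refine lt_of_le_of_ne hr fun h => ?_
    have h1 := encode_injective h
    have h2 : n = r + 1 := by simpa [res_length] using congrArg List.length h1
    rw [← h2] at h1
    have h3 : d + 1 ≤ n := (le_max_right _ _).trans (le_max_right _ _)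
    exact hd (res_eq_res.1 h1 h3)
  have hcn : c ≤ n := (le_max_left _ _).trans (le_max_right _ _)
  obtain ⟨N, hN, hsub⟩ := hdec (res α n) (res β r) (hmin r r.lt_succ_self) c (hcn.trans hn)
  have hy := mem_cyl_cons.1 (cyl_anti (hu (β r) (res β r)) (hΦ β (r + 1)))
  have hlenβ : StrictMono fun n => (u (res β n)).length :=
    strictMono_nat_of_lt_succ fun n => hlen _ _
  have hk : k₀ ≤ (u (res β r)).length :=
    (le_max_left k₀ (d + 1)).trans ((Nat.lt_succ_iff.1 hr₀).trans hlenβ.le_apply)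
  have h1 := hk₀ _ hk N (by
    rw [show res (Φ β) (u (res β r)).length = u (res β r) from hy.2]
    exact hsub (hΦ α n))
  have h2 := hsum (β r) (res β r) (res α n) hlt
  simp only [hy.1] at h1
  omega

theorem exists_isName : ∃ B, IsName B :=
  ⟨fun _ _ => univ, fun _ _ => isOpen_univ, fun _ => by simp [iUnion_const, dense_univ]⟩

theorem stmt_13 (E : Set ((ℕ → ℕ) × (ℕ → ℕ)))
    (hE : MeasureTheory.AnalyticSet E)
    (hsec : ∀ a : ℕ → ℕ, ∃ K : ℕ → Set (ℕ → ℕ),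
      (∀ n, IsCompact (K n)) ∧ {x : ℕ → ℕ | (a, x) ∈ E} ⊆ ⋃ n, K n) :
    ∃ P : Set (ℕ → ℕ), IsClosed P ∧ Nonempty (P ≃ₜ (ℕ → ℕ)) ∧
      ∀ x ∈ P, ∀ y ∈ P, x ≠ y → (x, y) ∉ E := by
  have hsmall : GenSmall E := by
    rw [MeasureTheory.AnalyticSet] at hE
    rcases hE with rfl | ⟨φ, hφ, rfl⟩
    · exact genSmall_empty
    · exact genSmall_range hφ hsec
  obtain ⟨S, hS, hN, hc⟩ := hsmall
  obtain ⟨B₀, hB₀⟩ := exists_isName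
  obtain ⟨B, hB⟩ := (hS.insert B₀).exists_eq_range (insert_nonempty _ _)
  have hname : ∀ c, IsName (B c) := fun c => by
    rcases (hB ▸ mem_range_self c : B c ∈ insert B₀ S) with h | h
    · exact h ▸ hB₀
    · exact hN _ h
  obtain ⟨P, hP, hPh, hfree⟩ := exists_free_of_names hname
  refine ⟨P, hP, hPh, fun x hx y hy hxy hxyE => ?_⟩
  obtain ⟨C, hCS, hC⟩ := hc _ hxyE
  obtain ⟨c, rfl⟩ : C ∈ range B := hB ▸ mem_insert_of_mem _ hCS
  exact hfree x hx y hy hxy c hC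
end
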